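/- arXiv:1508.04457 — 3 statements merged into one kernel-verified Lean document; each statement's English description precedes it below -/
import Mathlib

section
/- Let f(z) = Σ_{p odd prime} z^p for real 0 < z < 1. Then f(z) ~ 1/((1−z)·log(1/(1−z))) as z → 1⁻, i.e., the ratio f(z)·(1−z)·log(1/(1−z)) tends to 1 as z → 1 from below. -/
open Filter Topology Asymptotics MeasureTheory

/-- `Q2 k` is the number of Goldbach partitions of `2*k`, i.e. the number of
unordered pairs `{p, q}` of odd primes with `p + q = 2*k`. -/
def Q2 (k : ℕ) : ℕ :=
  ((Finset.range (2 * k + 1) ×ˢ Finset.range (2 * k + 1)).filter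
    (fun pq => pq.1.Prime ∧ pq.2.Prime ∧ Odd pq.1 ∧ Odd pq.2 ∧
      pq.1 ≤ pq.2 ∧ pq.1 + pq.2 = 2 * k)).card

/-- `fOdd z = Σ_{p odd prime} z^p`. -/
noncomputable def fOdd (z : ℝ) : ℝ := ∑' p : ℕ, if p.Prime ∧ Odd p then z ^ p else 0

/-- `fOdd' z = Σ_{p odd prime} p * z^(p-1)`, the derivative of `fOdd` on `(0,1)`. -/
noncomputable def fOdd' (z : ℝ) : ℝ :=
  ∑' p : ℕ, if p.Prime ∧ Odd p then (p : ℝ) * z ^ (p - 1) else 0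

/-- `fOdd'' z = Σ_{p odd prime} p * (p-1) * z^(p-2)`, the second derivative of `fOdd` on `(0,1)`. -/
noncomputable def fOdd'' (z : ℝ) : ℝ :=
  ∑' p : ℕ, if p.Prime ∧ Odd p then (p : ℝ) * ((p : ℝ) - 1) * z ^ (p - 2) else 0

/-- The prime-counting function at a real argument: the number of primes `≤ y`. -/
noncomputable def primePi (y : ℝ) : ℕ := Nat.primeCounting ⌊y⌋₊


section PartA
open Filter Topology Asymptotics MeasureTheory

/-- Fejer kernel -/
noncomputable def fej (y : ℝ) : ℝ := ∫ ξ in (0:ℝ)..1, (1 - ξ) * Real.cos (ξ * y)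

lemma fej_continuous : Continuous fej := by
  unfold fej
  apply intervalIntegral.continuous_parametric_intervalIntegral_of_continuous'
  fun_prop

lemma fej_eq {y : ℝ} (hy : y ≠ 0) : fej y = (1 - Real.cos y) / y ^ 2 := by
  unfold fej
  have h : ∀ ξ ∈ Set.uIcc (0:ℝ) 1, HasDerivAt
      (fun ξ => (1 - ξ) * Real.sin (ξ * y) / y - Real.cos (ξ * y) / y ^ 2)
      ((1 - ξ) * Real.cos (ξ * y)) ξ := by
    intro ξ _
    have h1 : HasDerivAt (fun ξ : ℝ => ξ * y) y ξ := by
      simpa using (hasDerivAt_id ξ).mul_const y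
    have h2 := h1.sin
    have h3 := h1.cos
    have h4 : HasDerivAt (fun ξ : ℝ => 1 - ξ) (-1) ξ := by
      simpa using (hasDerivAt_id ξ).const_sub 1
    refine (((h4.mul h2).div_const y).sub (h3.div_const (y ^ 2))).congr_deriv ?_
    field_simp
    ring
  rw [intervalIntegral.integral_eq_sub_of_hasDerivAt h]
  · simp
    ring
  · apply Continuous.intervalIntegrable
    fun_prop

lemma fej_zero : fej 0 = 1 / 2 := by
  unfold fej
  have h : ∀ ξ ∈ Set.uIcc (0:ℝ) 1, HasDerivAt (fun ξ : ℝ => ξ - ξ ^ 2 / 2)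
      ((1 - ξ) * Real.cos (ξ * 0)) ξ := by
    intro ξ _
    refine ((hasDerivAt_id ξ).sub ((hasDerivAt_pow 2 ξ).div_const 2)).congr_deriv ?_
    simp
  rw [intervalIntegral.integral_eq_sub_of_hasDerivAt h]
  · norm_num
  · apply Continuous.intervalIntegrable
    fun_prop

lemma fej_nonneg (y : ℝ) : 0 ≤ fej y := by
  by_cases hy : y = 0
  · rw [hy, fej_zero]; norm_num
  · rw [fej_eq hy]
    have := Real.cos_le_one y
    apply div_nonneg (by linarith) (by positivity)

lemma fej_le (y : ℝ) : fej y ≤ 3 * (1 + y ^ 2)⁻¹ := by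
  by_cases hy : y = 0
  · rw [hy, fej_zero]; norm_num
  · have h1 : fej y * y ^ 2 ≤ 2 := by
      rw [fej_eq hy]
      have := Real.neg_one_le_cos y
      field_simp
      linarith
    have h2 : fej y ≤ 1 := by
      rw [fej_eq hy]
      have := Real.one_sub_sq_div_two_le_cos (x := y)
      have : 0 < y ^ 2 := by positivity
      rw [div_le_one this]
      linarith
    rw [← div_eq_mul_inv, le_div_iff₀ (by positivity)]
    linarith

lemma fej_integrable : Integrable fej := by
  refine (integrable_inv_one_add_sq.const_mul 3).mono' fej_continuous.aestronglyMeasurable ?_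
  filter_upwards with y
  rw [Real.norm_of_nonneg (fej_nonneg y)]
  exact fej_le y

lemma fej_integral_pos : 0 < ∫ y, fej y := by
  rw [integral_pos_iff_support_of_nonneg fej_nonneg fej_integrable]
  apply IsOpen.measure_pos
  · exact fej_continuous.isOpen_support
  · exact ⟨0, by simp [fej_zero]⟩

section Taub

variable {u : ℝ → ℝ} {M : ℝ} {G : ℂ → ℂ}

lemma int_aux (hum : Measurable u) (hM : ∀ y, |u y| ≤ M) (h0 : ∀ y ≤ 0, u y = 0) {δ : ℝ} (hδ : 0 < δ) :
    Integrable (fun y => u y * Real.exp (-δ * y)) := by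
  have h1 : IntegrableOn (fun y => u y * Real.exp (-δ * y)) (Set.Ioi 0) := by
    refine ((exp_neg_integrableOn_Ioi 0 hδ).const_mul M).mono' ?_ ?_
    · exact (hum.mul (by fun_prop)).aestronglyMeasurable
    · filter_upwards with y
      rw [norm_mul, Real.norm_eq_abs, Real.norm_of_nonneg (Real.exp_pos _).le]
      exact mul_le_mul_of_nonneg_right (hM y) (Real.exp_pos _).le
  refine (integrableOn_iff_integrable_of_support_subset ?_).1 h1
  intro y hy
  by_contra h
  exact hy (by simp [h0 y (not_lt.1 h)])

lemma J_delta (hum : Measurable u) (hM : ∀ y, |u y| ≤ M) (h0 : ∀ y ≤ 0, u y = 0)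
    (hG : ∀ s : ℂ, 0 < s.re → ∫ y, (u y : ℂ) * Complex.exp (-s * y) = G s)
    {l δ : ℝ} (hδ : 0 < δ) (x : ℝ) :
    ∫ y, u y * Real.exp (-δ * y) * fej (l * (y - x)) =
      (∫ ξ in (0:ℝ)..1, ((1 - ξ : ℝ) : ℂ) * Complex.exp (-Complex.I * (ξ * l * x : ℝ)) *
        G (δ - Complex.I * (ξ * l : ℝ))).re := by
  have hh_int := int_aux hum hM h0 hδ
  let F : ℝ → ℝ → ℂ := fun ξ y => ((1 - ξ : ℝ) : ℂ) * Complex.exp (-Complex.I * (ξ * l * x : ℝ)) *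
        ((u y : ℂ) * Complex.exp (-(δ - Complex.I * (ξ * l : ℝ)) * y))
  have hF : ∀ ξ y, F ξ y = ((u y * Real.exp (-δ * y) : ℝ) : ℂ) *
      (((1 - ξ : ℝ) : ℂ) * Complex.exp (Complex.I * (ξ * (l * (y - x)) : ℝ))) := by
    intro ξ y
    simp only [F]
    have : Complex.exp (-Complex.I * (ξ * l * x : ℝ)) *
        Complex.exp (-(δ - Complex.I * (ξ * l : ℝ)) * y) =
        Complex.exp ((-δ * y : ℝ)) * Complex.exp (Complex.I * (ξ * (l * (y - x)) : ℝ)) := by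
      rw [← Complex.exp_add, ← Complex.exp_add]
      congr 1
      push_cast
      ring
    rw [Complex.ofReal_mul (u y), Complex.ofReal_exp]
    linear_combination (((1 - ξ : ℝ) : ℂ) * u y) * this
  have hFm : Measurable (Function.uncurry F) := by
    simp only [F, Function.uncurry_def]
    fun_prop
  have hFint : Integrable (Function.uncurry F) ((volume.restrict (Set.Ioc (0:ℝ) 1)).prod volume) := by
    have h1 : Integrable (fun p : ℝ × ℝ => (1:ℝ) * (u p.2 * Real.exp (-δ * p.2)))
        ((volume.restrict (Set.Ioc (0:ℝ) 1)).prod volume) :=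
      Integrable.mul_prod (f := fun _ : ℝ => (1:ℝ)) (integrable_const _) hh_int
    refine h1.mono hFm.aestronglyMeasurable ?_
    have : ∀ᵐ p : ℝ × ℝ ∂((volume.restrict (Set.Ioc (0:ℝ) 1)).prod volume), p.1 ∈ Set.Ioc (0:ℝ) 1 := by
      have := (Measure.quasiMeasurePreserving_fst (μ := volume.restrict (Set.Ioc (0:ℝ) 1)) (ν := (volume : Measure ℝ))).ae (p := fun x => x ∈ Set.Ioc (0:ℝ) 1) (ae_restrict_mem measurableSet_Ioc)
      exact this
    filter_upwards [this] with p hp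
    simp only [Function.uncurry_def, hF]
    rw [norm_mul, Complex.norm_real, one_mul, norm_mul (_ : ℂ) (Complex.exp _), mul_comm Complex.I, Complex.norm_exp_ofReal_mul_I, Complex.norm_real, mul_one]
    apply mul_le_of_le_one_right (norm_nonneg _)
    rw [Real.norm_eq_abs, abs_le]
    constructor <;> linarith [hp.1, hp.2]
  have key : ∫ ξ in (0:ℝ)..1, ∫ y, F ξ y = ∫ y, ∫ ξ in (0:ℝ)..1, F ξ y := by
    simp only [intervalIntegral.integral_of_le zero_le_one]
    exact integral_integral_swap hFint
  have e1 : (∫ ξ in (0:ℝ)..1, ((1 - ξ : ℝ) : ℂ) * Complex.exp (-Complex.I * (ξ * l * x : ℝ)) *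
        G (δ - Complex.I * (ξ * l : ℝ))) = ∫ ξ in (0:ℝ)..1, ∫ y, F ξ y := by
    apply intervalIntegral.integral_congr
    intro ξ _
    simp only [F]
    rw [integral_const_mul, hG]
    simpa using hδ
  have hh_int2 : Integrable (fun y => ∫ ξ in (0:ℝ)..1, F ξ y) := by
    simp only [intervalIntegral.integral_of_le zero_le_one]
    exact hFint.integral_prod_right
  rw [e1, key]
  have := integral_re (𝕜 := ℂ) hh_int2
  simp only [RCLike.re_to_complex] at this
  rw [← this]
  congr 1
  ext y
  simp only [hF]
  rw [intervalIntegral.integral_const_mul, Complex.re_ofReal_mul, fej]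
  congr 1
  have hi : IntervalIntegrable (fun ξ : ℝ => (((1 - ξ : ℝ) : ℂ) * Complex.exp (Complex.I * (ξ * (l * (y - x)) : ℝ)))) volume 0 1 := by
    apply Continuous.intervalIntegrable
    fun_prop
  have := Complex.reCLM.intervalIntegral_comp_comm hi
  simp only [Complex.reCLM_apply] at this
  rw [← this]
  apply intervalIntegral.integral_congr
  intro ξ _
  simp only [Complex.re_ofReal_mul]
  rw [mul_comm Complex.I, Complex.exp_ofReal_mul_I_re]

lemma J_zero (hum : Measurable u) (hM : ∀ y, |u y| ≤ M) (h0 : ∀ y ≤ 0, u y = 0)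
    (hGc : ContinuousOn G {s | 0 ≤ s.re})
    (hG : ∀ s : ℂ, 0 < s.re → ∫ y, (u y : ℂ) * Complex.exp (-s * y) = G s)
    {l : ℝ} (hl : 0 < l) (x : ℝ) :
    ∫ y, u y * fej (l * (y - x)) =
      (∫ ξ in (0:ℝ)..1, ((1 - ξ : ℝ) : ℂ) * Complex.exp (-Complex.I * (ξ * l * x : ℝ)) *
        G (- Complex.I * (ξ * l : ℝ))).re := by
  have hfi : Integrable (fun y => M * fej (l * (y - x))) := by
    have := (fej_integrable.comp_mul_left' hl.ne').comp_sub_right x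
    exact this.const_mul M
  have t1 : Tendsto (fun δ => ∫ y, u y * Real.exp (-δ * y) * fej (l * (y - x))) (𝓝[>] 0)
      (𝓝 (∫ y, u y * fej (l * (y - x)))) := by
    apply tendsto_integral_filter_of_dominated_convergence _ _ _ hfi
    · filter_upwards with y
      have : Tendsto (fun δ => u y * Real.exp (-δ * y) * fej (l * (y - x))) (𝓝 0)
        (𝓝 (u y * Real.exp (-0 * y) * fej (l * (y - x)))) := by
        apply Continuous.tendsto
        fun_prop
      simp only [neg_zero, zero_mul, Real.exp_zero, mul_one] at this
      exact this.mono_left nhdsWithin_le_nhds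
    · filter_upwards with δ
      have := fej_continuous.measurable
      apply Measurable.aestronglyMeasurable
      fun_prop
    · filter_upwards [self_mem_nhdsWithin] with δ hδ
      have hδ : 0 < δ := hδ
      filter_upwards with y
      rw [norm_mul, Real.norm_of_nonneg (fej_nonneg _)]
      apply mul_le_mul_of_nonneg_right _ (fej_nonneg _)
      by_cases hy : y ≤ 0
      · simp [h0 y hy]
        exact (abs_nonneg _).trans (hM 0)
      · rw [norm_mul, Real.norm_of_nonneg (Real.exp_pos _).le]
        refine (mul_le_of_le_one_right (norm_nonneg _) ?_).trans (hM y)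
        rw [Real.exp_le_one_iff]
        nlinarith
  have t2 : Tendsto (fun δ : ℝ => ∫ ξ in (0:ℝ)..1, ((1 - ξ : ℝ) : ℂ) * Complex.exp (-Complex.I * (ξ * l * x : ℝ)) *
        G (δ - Complex.I * (ξ * l : ℝ))) (𝓝[>] 0)
      (𝓝 (∫ ξ in (0:ℝ)..1, ((1 - ξ : ℝ) : ℂ) * Complex.exp (-Complex.I * (ξ * l * x : ℝ)) *
        G (- Complex.I * (ξ * l : ℝ)))) := by
    -- compact bound
    have hcomp : IsCompact ((fun p : ℝ × ℝ => (p.1 - Complex.I * (p.2 * l : ℝ) : ℂ)) '' (Set.Icc 0 1 ×ˢ Set.Icc 0 1)) := by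
      apply (isCompact_Icc.prod isCompact_Icc).image
      fun_prop
    have hsub : ((fun p : ℝ × ℝ => (p.1 - Complex.I * (p.2 * l : ℝ) : ℂ)) '' (Set.Icc 0 1 ×ˢ Set.Icc 0 1)) ⊆ {s | 0 ≤ s.re} := by
      rintro _ ⟨p, hp, rfl⟩
      simpa using hp.1.1
    obtain ⟨C, hC⟩ := hcomp.exists_bound_of_continuousOn (hGc.mono hsub)
    have hev : ∀ᶠ δ in 𝓝[>] (0:ℝ), δ ∈ Set.Ioc (0:ℝ) 1 := Ioc_mem_nhdsGT zero_lt_one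
    apply intervalIntegral.tendsto_integral_filter_of_dominated_convergence (fun _ => C)
    · filter_upwards [hev] with δ hδ
      apply ContinuousOn.aestronglyMeasurable _ measurableSet_uIoc
      apply ContinuousOn.mul (by fun_prop)
      apply hGc.comp (by fun_prop)
      intro ξ _
      simpa using hδ.1.le
    · filter_upwards [hev] with δ hδ
      filter_upwards with ξ hξ
      rw [Set.uIoc_of_le zero_le_one] at hξ
      have h1 := hC _ ⟨(δ, ξ), ⟨⟨hδ.1.le, hδ.2⟩, ⟨hξ.1.le, hξ.2⟩⟩, rfl⟩
      have h2 : ‖Complex.exp (-Complex.I * (ξ * l * x : ℝ))‖ = 1 := by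
        rw [show -Complex.I * (ξ * l * x : ℝ) = (-(ξ * l * x) : ℝ) * Complex.I by push_cast; ring]
        exact Complex.norm_exp_ofReal_mul_I _
      rw [norm_mul, norm_mul, h2, Complex.norm_real, mul_one]
      refine (mul_le_of_le_one_left (norm_nonneg _) ?_).trans h1
      rw [Real.norm_eq_abs, abs_le]
      constructor <;> linarith [hξ.1, hξ.2]
    · simp
    · filter_upwards with ξ _
      apply Tendsto.const_mul
      have h1 : ContinuousWithinAt G {s | 0 ≤ s.re} (- Complex.I * (ξ * l : ℝ)) := by
        apply hGc
        simp
      apply h1.tendsto.comp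
      apply tendsto_nhdsWithin_iff.2
      constructor
      · have : Tendsto (fun δ : ℝ => (δ - Complex.I * (ξ * l : ℝ) : ℂ)) (𝓝 0) (𝓝 ((0:ℝ) - Complex.I * (ξ * l : ℝ) : ℂ)) := by
          apply Continuous.tendsto
          fun_prop
        convert this.mono_left nhdsWithin_le_nhds using 2
        simp
      · filter_upwards [hev] with δ hδ
        simpa using hδ.1.le
  have t3 := (Complex.continuous_re.tendsto _).comp t2
  refine tendsto_nhds_unique t1 (t3.congr' ?_)
  filter_upwards [self_mem_nhdsWithin] with δ hδ
  exact (J_delta hum hM h0 hG hδ x).symm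

lemma J_tendsto (hum : Measurable u) (hM : ∀ y, |u y| ≤ M) (h0 : ∀ y ≤ 0, u y = 0)
    (hGc : ContinuousOn G {s | 0 ≤ s.re})
    (hG : ∀ s : ℂ, 0 < s.re → ∫ y, (u y : ℂ) * Complex.exp (-s * y) = G s)
    {l : ℝ} (hl : 0 < l) :
    Tendsto (fun x => ∫ w, u (x + w / l) * fej w) atTop (𝓝 0) := by
  have e1 : ∀ x, ∫ w, u (x + w / l) * fej w = l * ∫ y, u y * fej (l * (y - x)) := by
    intro x
    have h1 := integral_add_right_eq_self (μ := volume) (fun y => u y * fej (l * (y - x))) x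
    have h2 := Measure.integral_comp_div (fun w => u (w + x) * fej (l * (w + x - x))) l
    rw [← h1, abs_of_pos hl, smul_eq_mul] at *
    rw [← h2]
    congr 1
    ext w
    rw [add_comm x]
    congr 2
    field_simp
    ring
  simp only [e1, J_zero hum hM h0 hGc hG hl]
  suffices h : Tendsto (fun x : ℝ => l * (∫ ξ in (0:ℝ)..1, ((1 - ξ : ℝ) : ℂ) * Complex.exp (-Complex.I * (ξ * l * x : ℝ)) *
        G (- Complex.I * (ξ * l : ℝ))).re) atTop (𝓝 (l * (0:ℂ).re)) by simpa using h
  apply Tendsto.const_mul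
  apply (Complex.continuous_re.tendsto _).comp
  let f : ℝ → ℂ := (Set.Ioc (0:ℝ) 1).indicator (fun ξ => ((1 - ξ : ℝ) : ℂ) * G (- Complex.I * (ξ * l : ℝ)))
  have rl := Real.tendsto_integral_exp_smul_cocompact f
  have t : Tendsto (fun x : ℝ => l * x / (2 * Real.pi)) atTop (cocompact ℝ) := by
    refine Tendsto.mono_right ?_ atTop_le_cocompact
    apply Tendsto.atTop_div_const (by positivity)
    exact tendsto_id.const_mul_atTop hl
  refine (rl.comp t).congr ?_
  intro x
  rw [intervalIntegral.integral_of_le zero_le_one, ← integral_indicator measurableSet_Ioc]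
  simp only [Function.comp]
  congr 1
  ext ξ
  simp only [f, Set.indicator_apply]
  split_ifs
  · rw [Circle.smul_def, Real.fourierChar_apply, smul_eq_mul]
    have h : (Real.pi : ℂ) ≠ 0 := by exact_mod_cast Real.pi_ne_zero
    have he : ((2 * Real.pi * -(ξ * (l * x / (2 * Real.pi))) : ℝ) : ℂ) * Complex.I =
        -Complex.I * (ξ * l * x : ℝ) := by
      push_cast
      field_simp
    rw [he]
    ring
  · simp

end Taub
end PartA

section PartB
open Filter Topology Asymptotics MeasureTheory

section Taub2

variable {u : ℝ → ℝ} {M : ℝ} {G : ℂ → ℂ} {K : ℝ → ℝ}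

lemma a_int (hum : Measurable u) (hM : ∀ y, |u y| ≤ M) (hKi : Integrable K) (x : ℝ) :
    Integrable (fun v => u (v + x) * K v) := by
  refine hKi.bdd_mul (c := M) (hum.comp (measurable_id.add_const x)).aestronglyMeasurable ?_
  filter_upwards with v using hM _

lemma a_diff (hum : Measurable u) (hM : ∀ y, |u y| ≤ M) (hKi : Integrable K) (x h : ℝ) :
    |(∫ v, u (v + (x + h)) * K v) - ∫ v, u (v + x) * K v| ≤ M * ∫ v, |K (v - h) - K v| := by
  have e : ∫ v, u (v + (x + h)) * K v = ∫ v, u (v + x) * K (v - h) := by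
    rw [← integral_sub_right_eq_self (μ := volume) (fun v => u (v + (x + h)) * K v) h]
    congr 1
    ext v
    congr 2
    ring
  have hKh : Integrable (fun v => K (v - h)) := hKi.comp_sub_right h
  rw [e, ← integral_sub (a_int hum hM hKh x) (a_int hum hM hKi x), ← integral_const_mul]
  rw [← Real.norm_eq_abs]
  refine norm_integral_le_of_norm_le ((hKh.sub hKi).abs.const_mul M) ?_
  filter_upwards with v
  rw [← mul_sub, norm_mul]
  exact mul_le_mul_of_nonneg_right (hM _) (norm_nonneg _)

lemma a_bdd (hM : ∀ y, |u y| ≤ M) (hKi : Integrable K) (x : ℝ) :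
    |∫ v, u (v + x) * K v| ≤ M * ∫ v, |K v| := by
  rw [← integral_const_mul]
  rw [← Real.norm_eq_abs]
  refine norm_integral_le_of_norm_le (hKi.abs.const_mul M) ?_
  filter_upwards with v
  rw [norm_mul]
  exact mul_le_mul_of_nonneg_right (hM _) (norm_nonneg _)

lemma a_meas (hum : Measurable u) (hKc : Continuous K) :
    Measurable (fun x => ∫ v, u (v + x) * K v) := by
  have hKm := hKc.measurable
  have : StronglyMeasurable (Function.uncurry (fun x v => u (v + x) * K v)) := by
    apply Measurable.stronglyMeasurable
    unfold Function.uncurry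
    fun_prop
  exact this.integral_prod_right.measurable

theorem taub (hum : Measurable u) (hM : ∀ y, |u y| ≤ M) (h0 : ∀ y ≤ 0, u y = 0)
    (hGc : ContinuousOn G {s | 0 ≤ s.re})
    (hG : ∀ s : ℂ, 0 < s.re → ∫ y, (u y : ℂ) * Complex.exp (-s * y) = G s)
    (hKc : Continuous K) (hKi : Integrable K)
    (hω : Tendsto (fun h => ∫ v, |K (v - h) - K v|) (𝓝 0) (𝓝 0)) :
    Tendsto (fun x => ∫ v, u (v + x) * K v) atTop (𝓝 0) := by
  have hM0 : 0 ≤ M := (abs_nonneg _).trans (hM 0)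
  have hc := fej_integral_pos
  set c := ∫ y, fej y with hcdef
  set a : ℝ → ℝ := fun x => ∫ v, u (v + x) * K v with ha
  set ω : ℝ → ℝ := fun h => ∫ v, |K (v - h) - K v| with hωdef
  have ham : Measurable a := a_meas hum hKc
  have hab : ∀ x, |a x| ≤ M * ∫ v, |K v| := a_bdd hM hKi
  have had : ∀ x h, |a (x + h) - a x| ≤ M * ω h := a_diff hum hM hKi
  have hωm : Measurable ω := by
    have hKm := hKc.measurable
    have : StronglyMeasurable (Function.uncurry (fun h v => |K (v - h) - K v|)) := by
      apply Continuous.stronglyMeasurable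
      unfold Function.uncurry
      fun_prop
    exact this.integral_prod_right.measurable
  have hω0 : ∀ h, 0 ≤ ω h := fun h => integral_nonneg (fun _ => abs_nonneg _)
  have hωb : ∀ h, ω h ≤ 2 * ∫ v, |K v| := by
    intro h
    have hKh : Integrable (fun v => K (v - h)) := hKi.comp_sub_right h
    have e : ∫ v, |K (v - h)| = ∫ v, |K v| := integral_sub_right_eq_self (fun v => |K v|) h
    rw [two_mul]
    nth_rw 1 [← e]
    rw [← integral_add hKh.abs hKi.abs]
    apply integral_mono (hKh.sub hKi).abs (hKh.abs.add hKi.abs)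
    intro v
    exact abs_sub _ _
  have hωfi : ∀ l : ℝ, Integrable (fun w => ω (w / l) * fej w) := by
    intro l
    refine fej_integrable.bdd_mul (c := 2 * ∫ v, |K v|)
      (hωm.comp (measurable_id.div_const l)).aestronglyMeasurable ?_
    filter_upwards with w
    rw [Real.norm_of_nonneg (hω0 _)]
    exact hωb _
  have hafi : ∀ x l : ℝ, Integrable (fun w => a (x + w / l) * fej w) := by
    intro x l
    refine fej_integrable.bdd_mul (c := M * ∫ v, |K v|)
      (ham.comp ((measurable_id.div_const l).const_add x)).aestronglyMeasurable ?_
    filter_upwards with w using hab _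
  have tω : Tendsto (fun l : ℝ => ∫ w, ω (w / l) * fej w) atTop (𝓝 0) := by
    have : Tendsto (fun l : ℝ => ∫ w, ω (w / l) * fej w) atTop (𝓝 (∫ w : ℝ, (0:ℝ))) := by
      apply tendsto_integral_filter_of_dominated_convergence (fun w => (2 * ∫ v, |K v|) * fej w)
      · filter_upwards with l using (hωfi l).aestronglyMeasurable
      · filter_upwards with l
        filter_upwards with w
        rw [norm_mul, Real.norm_of_nonneg (hω0 _), Real.norm_of_nonneg (fej_nonneg _)]
        exact mul_le_mul_of_nonneg_right (hωb _) (fej_nonneg _)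
      · exact fej_integrable.const_mul _
      · filter_upwards with w
        have h1 : Tendsto (fun l : ℝ => w / l) atTop (𝓝 0) := tendsto_const_nhds.div_atTop tendsto_id
        simpa using (hω.comp h1).mul_const (fej w)
    simpa using this
  have fub : ∀ x l : ℝ, ∫ w, a (x + w / l) * fej w =
      ∫ v, K v * ∫ w, u ((x + v) + w / l) * fej w := by
    intro x l
    have hKm := hKc.measurable
    have hfm := fej_continuous.measurable
    have hi : Integrable (Function.uncurry (fun w v => u (v + (x + w / l)) * K v * fej w)) (volume.prod volume) := by
      have h1 : Integrable (fun p : ℝ × ℝ => fej p.1 * K p.2) (volume.prod volume) := fej_integrable.mul_prod hKi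
      refine (h1.norm.const_mul M).mono' ?_ ?_
      · apply Measurable.aestronglyMeasurable
        unfold Function.uncurry
        fun_prop
      · filter_upwards with p
        simp only [Function.uncurry_def]
        rw [mul_assoc, norm_mul, mul_comm (K _)]
        exact mul_le_mul_of_nonneg_right (hM _) (norm_nonneg _)
    have := integral_integral_swap hi
    simp only [integral_mul_const] at this
    rw [ha]
    simp only
    rw [this]
    congr 1
    ext v
    rw [← integral_const_mul]
    congr 1
    ext w
    rw [show v + (x + w / l) = x + v + w / l by ring]
    ring
  have tJ : ∀ l : ℝ, 0 < l → Tendsto (fun x => ∫ w, a (x + w / l) * fej w) atTop (𝓝 0) := by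
    intro l hl
    simp only [fub]
    have hJ := J_tendsto hum hM h0 hGc hG hl
    have : Tendsto (fun x => ∫ v, K v * ∫ w, u ((x + v) + w / l) * fej w) atTop (𝓝 (∫ v : ℝ, (0:ℝ))) := by
      apply tendsto_integral_filter_of_dominated_convergence (fun v => |K v| * (M * c))
      · filter_upwards with x
        have : StronglyMeasurable (Function.uncurry (fun v w => u ((x + v) + w / l) * fej w)) := by
          have hfm := fej_continuous.measurable
          apply Measurable.stronglyMeasurable
          unfold Function.uncurry
          fun_prop
        exact (hKc.stronglyMeasurable.mul this.integral_prod_right).aestronglyMeasurable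
      · filter_upwards with x
        filter_upwards with v
        rw [norm_mul]
        apply mul_le_mul_of_nonneg_left _ (norm_nonneg _)
        rw [hcdef, ← integral_const_mul]
        refine norm_integral_le_of_norm_le (fej_integrable.const_mul M) ?_
        filter_upwards with w
        rw [norm_mul, Real.norm_of_nonneg (fej_nonneg _)]
        exact mul_le_mul_of_nonneg_right (hM _) (fej_nonneg _)
      · exact hKi.abs.mul_const _
      · filter_upwards with v
        have h1 : Tendsto (fun x : ℝ => x + v) atTop atTop := tendsto_atTop_add_const_right _ _ tendsto_id
        simpa using (hJ.comp h1).const_mul (K v)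
    simpa using this
  rw [Metric.tendsto_nhds]
  intro ε hε
  have hev := (tω.const_mul M).eventually (gt_mem_nhds (show M * 0 < c * ε / 2 by rw [mul_zero]; positivity))
  obtain ⟨l, hl1, hl0⟩ := (hev.and (eventually_gt_atTop 0)).exists
  have hev2 := (tJ l hl0).abs.eventually (gt_mem_nhds (show |(0:ℝ)| < c * ε / 2 by rw [abs_zero]; positivity))
  filter_upwards [hev2] with x hx
  rw [Real.dist_eq, sub_zero]
  have e1 : c * a x = (∫ w, a (x + w / l) * fej w) - ∫ w, (a (x + w / l) - a x) * fej w := by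
    have h2 : ∫ w, (a (x + w / l) - a x) * fej w = (∫ w, a (x + w / l) * fej w) - ∫ w, a x * fej w := by
      rw [← integral_sub (hafi x l) (fej_integrable.const_mul _)]
      congr 1
      ext w
      ring
    rw [h2, integral_const_mul]
    ring
  have e2 : |∫ w, (a (x + w / l) - a x) * fej w| ≤ M * ∫ w, ω (w / l) * fej w := by
    rw [← integral_const_mul]
    rw [← Real.norm_eq_abs]
    refine norm_integral_le_of_norm_le ((hωfi l).const_mul M) ?_
    filter_upwards with w
    rw [norm_mul, Real.norm_of_nonneg (fej_nonneg _), ← mul_assoc]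
    exact mul_le_mul_of_nonneg_right (had _ _) (fej_nonneg _)
  have e3 : c * |a x| < c * ε := by
    rw [← abs_of_pos hc, ← abs_mul, abs_of_pos hc, e1]
    refine (abs_sub _ _).trans_lt ?_
    linarith
  exact lt_of_mul_lt_mul_left e3 hc.le

end Taub2
end PartB

section PartC
open Filter Topology Asymptotics MeasureTheory

lemma exp_image_Ioi : Real.exp '' Set.Ioi 0 = Set.Ioi 1 := by
  ext x
  constructor
  · rintro ⟨y, hy, rfl⟩
    exact Real.one_lt_exp_iff.2 hy
  · intro hx
    have hx : 1 < x := hx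
    exact ⟨Real.log x, Real.log_pos hx, Real.exp_log (by linarith)⟩

lemma subst_exp {E : Type*} [NormedAddCommGroup E] [NormedSpace ℝ E] (g : ℝ → E) :
    ∫ x in Set.Ioi (1:ℝ), g x = ∫ y in Set.Ioi (0:ℝ), Real.exp y • g (Real.exp y) := by
  have := integral_image_eq_integral_abs_deriv_smul (s := Set.Ioi (0:ℝ)) (f := Real.exp) (f' := Real.exp)
    measurableSet_Ioi (fun x _ => (Real.hasDerivAt_exp x).hasDerivWithinAt) Real.exp_injective.injOn g
  rw [exp_image_Ioi] at this
  simpa only [Real.abs_exp] using this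

/-- the Laplace kernel -/
noncomputable def Ker (v : ℝ) : ℝ := Real.exp (2 * v) * Real.exp (-Real.exp v)

lemma Ker_cont : Continuous Ker := by unfold Ker; fun_prop

lemma Ker_nonneg (v : ℝ) : 0 ≤ Ker v := by unfold Ker; positivity

lemma Ker_int : Integrable Ker := by
  have := integrableOn_image_iff_integrableOn_abs_deriv_smul (s := Set.univ) (f := Real.exp) (f' := Real.exp)
    MeasurableSet.univ (fun x _ => (Real.hasDerivAt_exp x).hasDerivWithinAt) Real.exp_injective.injOn
    (fun x => Real.exp (-x) * x ^ ((2:ℝ) - 1))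
  rw [Set.image_univ, Real.range_exp, integrableOn_univ] at this
  refine (this.1 (Real.GammaIntegral_convergent (by norm_num))).congr ?_
  filter_upwards with v
  simp only [Real.abs_exp, smul_eq_mul, Ker]
  rw [show (2:ℝ) - 1 = 1 by norm_num, Real.rpow_one, two_mul, Real.exp_add]
  ring

lemma Ker_shift {v h : ℝ} (h1 : -1 ≤ h) (h2 : h ≤ 1) : Ker (v - h) ≤ Real.exp 4 * Ker (v - 1) := by
  unfold Ker
  rw [← mul_assoc, ← Real.exp_add 4]
  apply mul_le_mul
  · apply Real.exp_le_exp.2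
    linarith
  · apply Real.exp_le_exp.2
    apply neg_le_neg
    apply Real.exp_le_exp.2
    linarith
  · positivity
  · positivity

lemma Ker_omega : Tendsto (fun h => ∫ v, |Ker (v - h) - Ker v|) (𝓝 0) (𝓝 0) := by
  have : Tendsto (fun h => ∫ v, |Ker (v - h) - Ker v|) (𝓝 0) (𝓝 (∫ v : ℝ, (0:ℝ))) := by
    have hc := Ker_cont
    apply tendsto_integral_filter_of_dominated_convergence
      (fun v => Real.exp 4 * Ker (v - 1) + Ker v)
    · filter_upwards with h
      apply Continuous.aestronglyMeasurable
      fun_prop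
    · filter_upwards [Icc_mem_nhds (show (-1:ℝ) < 0 by norm_num) (show (0:ℝ) < 1 by norm_num)] with h hh
      filter_upwards with v
      rw [Real.norm_eq_abs, abs_abs]
      refine (abs_sub _ _).trans ?_
      rw [abs_of_nonneg (Ker_nonneg _), abs_of_nonneg (Ker_nonneg _)]
      linarith [Ker_shift (v := v) hh.1 hh.2]
    · exact ((Ker_int.comp_sub_right 1).const_mul _).add Ker_int
    · filter_upwards with v
      have : Tendsto (fun h => |Ker (v - h) - Ker v|) (𝓝 0) (𝓝 |Ker (v - 0) - Ker v|) := by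
        apply Continuous.tendsto
        fun_prop
      simpa using this
  simpa using this

open Chebyshev

lemma psi_meas : Measurable psi := psi_mono.measurable

/-- normalized error function -/
noncomputable def uu (y : ℝ) : ℝ := if 0 < y then Real.exp (-y) * psi (Real.exp y) - 1 else 0

lemma uu_meas : Measurable uu := by
  have := psi_meas
  unfold uu
  apply Measurable.ite measurableSet_Ioi
  · fun_prop
  · fun_prop

lemma B_le (y : ℝ) : Real.exp (-y) * psi (Real.exp y) ≤ Real.log 4 + 4 := by
  have := psi_le_const_mul_self (Real.exp_pos y).le
  rw [Real.exp_neg, inv_mul_le_iff₀ (Real.exp_pos y)]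
  linarith

lemma B_nonneg (y : ℝ) : 0 ≤ Real.exp (-y) * psi (Real.exp y) :=
  mul_nonneg (Real.exp_pos _).le (psi_nonneg _)

lemma uu_bdd (y : ℝ) : |uu y| ≤ Real.log 4 + 4 := by
  have h4 : 0 ≤ Real.log 4 := Real.log_nonneg (by norm_num)
  unfold uu
  split_ifs
  · rw [abs_le]
    constructor <;> linarith [B_le y, B_nonneg y]
  · simp; linarith

lemma L_formula {s : ℂ} (hs : 1 < s.re) :
    LSeries (fun n => (ArithmeticFunction.vonMangoldt n : ℂ)) s =
      s * ∫ t in Set.Ioi (1:ℝ), (psi t : ℂ) * (t:ℂ) ^ (-(s + 1)) := by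
  have hS : ∀ n : ℕ, ∑ k ∈ Finset.Icc 1 n, ArithmeticFunction.vonMangoldt k = psi n := by
    intro n
    rw [psi, Nat.floor_natCast]
    rfl
  have hO : (fun n : ℕ => ∑ k ∈ Finset.Icc 1 n, ArithmeticFunction.vonMangoldt k) =O[atTop]
      fun n => (n : ℝ) ^ (1:ℝ) := by
    apply IsBigO.of_bound (Real.log 4 + 4)
    filter_upwards with n
    rw [hS, Real.rpow_one, Real.norm_of_nonneg (psi_nonneg _), Real.norm_of_nonneg (Nat.cast_nonneg _)]
    exact psi_le_const_mul_self (Nat.cast_nonneg _)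
  rw [LSeries_eq_mul_integral_of_nonneg _ zero_le_one hs hO (fun n => ArithmeticFunction.vonMangoldt_nonneg)]
  congr 2
  ext t
  congr 1
  rw [psi_eq_psi_coe_floor, ← hS]
  push_cast
  rfl

/-- regularized minus zeta log-derivative -/
noncomputable def HH (s : ℂ) : ℂ :=
  ArithmeticFunction.vonMangoldt.LFunctionResidueClassAux (q := 1) (1 : ZMod 1) s

lemma HH_cont : ContinuousOn HH {s | 1 ≤ s.re} :=
  ArithmeticFunction.vonMangoldt.continuousOn_LFunctionResidueClassAux (q := 1) 1

lemma HH_eq {s : ℂ} (hs : 1 < s.re) :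
    HH s = LSeries (fun n => (ArithmeticFunction.vonMangoldt n : ℂ)) s - 1 / (s - 1) := by
  have := ArithmeticFunction.vonMangoldt.eqOn_LFunctionResidueClassAux (q := 1) (a := 1) isUnit_one hs
  rw [HH, this]
  have h : (ArithmeticFunction.vonMangoldt.residueClass (1 : ZMod 1)) = fun n => ArithmeticFunction.vonMangoldt n := by
    ext n
    rw [ArithmeticFunction.vonMangoldt.residueClass, Set.indicator_of_mem]
    exact Subsingleton.elim _ _
  simp [h]

noncomputable def GG (s : ℂ) : ℂ := (HH (s + 1) - 1) / (s + 1)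

lemma GG_cont : ContinuousOn GG {s | 0 ≤ s.re} := by
  unfold GG
  apply ContinuousOn.div
  · apply ContinuousOn.sub _ continuousOn_const
    apply HH_cont.comp (by fun_prop)
    intro s hs
    have hs : 0 ≤ s.re := hs
    simpa using hs
  · fun_prop
  · intro s hs h
    have hs : 0 ≤ s.re := hs
    have := congrArg Complex.re h
    simp at this
    linarith

lemma GG_eq {s : ℂ} (hs : 0 < s.re) : ∫ y, (uu y : ℂ) * Complex.exp (-s * y) = GG s := by
  have hs0 : s ≠ 0 := by rintro rfl; simp at hs
  have hs1 : s + 1 ≠ 0 := by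
    intro h
    have := congrArg Complex.re h
    simp at this
    linarith
  have e0 : ∫ y, (uu y : ℂ) * Complex.exp (-s * y) = ∫ y in Set.Ioi (0:ℝ), (uu y : ℂ) * Complex.exp (-s * y) := by
    symm
    apply setIntegral_eq_integral_of_forall_compl_eq_zero
    intro y hy
    have : ¬ 0 < y := hy
    simp [uu, this]
  have hexp : IntegrableOn (fun y : ℝ => Complex.exp (-s * y)) (Set.Ioi 0) :=
    integrableOn_exp_mul_complex_Ioi (by simpa using hs) 0
  have hB : IntegrableOn (fun y : ℝ => ((Real.exp (-y) * psi (Real.exp y) : ℝ) : ℂ) * Complex.exp (-s * y)) (Set.Ioi 0) := by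
    refine hexp.bdd_mul (c := Real.log 4 + 4) ?_ ?_
    · have := psi_meas
      apply Measurable.aestronglyMeasurable
      fun_prop
    · filter_upwards with y
      rw [Complex.norm_real, Real.norm_of_nonneg (B_nonneg y)]
      exact B_le y
  have e1 : ∫ y in Set.Ioi (0:ℝ), (uu y : ℂ) * Complex.exp (-s * y) =
      (∫ y in Set.Ioi (0:ℝ), ((Real.exp (-y) * psi (Real.exp y) : ℝ) : ℂ) * Complex.exp (-s * y)) -
        ∫ y in Set.Ioi (0:ℝ), Complex.exp (-s * y) := by
    rw [← integral_sub hB hexp]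
    apply setIntegral_congr_fun measurableSet_Ioi
    intro y hy
    have : 0 < y := hy
    simp only [uu, this, if_true]
    push_cast
    ring
  have e2 : ∫ y in Set.Ioi (0:ℝ), Complex.exp (-s * y) = 1 / s := by
    rw [integral_exp_mul_complex_Ioi (by simpa using hs)]
    simp
  have e3 : (∫ y in Set.Ioi (0:ℝ), ((Real.exp (-y) * psi (Real.exp y) : ℝ) : ℂ) * Complex.exp (-s * y)) =
      ∫ t in Set.Ioi (1:ℝ), (psi t : ℂ) * (t:ℂ) ^ (-((s + 1) + 1)) := by
    rw [subst_exp]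
    apply setIntegral_congr_fun measurableSet_Ioi
    intro y _
    simp only [Complex.real_smul]
    rw [Complex.cpow_def_of_ne_zero (by exact_mod_cast (Real.exp_pos y).ne'),
      ← Complex.ofReal_log (Real.exp_pos y).le, Real.log_exp]
    push_cast
    have : Complex.exp (-y) * Complex.exp (-s * y) = Complex.exp y * Complex.exp (y * (-((s + 1) + 1))) := by
      rw [← Complex.exp_add, ← Complex.exp_add]
      congr 1
      ring
    linear_combination (psi (Real.exp y) : ℂ) * this
  have hs' : 1 < (s + 1).re := by simpa using hs
  have e4 := L_formula hs'
  rw [e0, e1, e2, e3, GG, HH_eq hs', e4, add_sub_cancel_right]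
  generalize (∫ t in Set.Ioi (1:ℝ), (psi t : ℂ) * (t:ℂ) ^ (-((s + 1) + 1))) = X
  field_simp
  ring

lemma psi_laplace : Tendsto (fun t : ℝ => t ^ 2 * ∫ x in Set.Ioi (1:ℝ), (psi x - x) * Real.exp (-(t * x)))
    (𝓝[>] 0) (𝓝 0) := by
  have h := taub uu_meas uu_bdd (fun y hy => by simp [uu, not_lt.2 hy]) GG_cont
    (fun s hs => GG_eq hs) Ker_cont Ker_int Ker_omega
  have hlog : Tendsto (fun t => -Real.log t) (𝓝[>] 0) atTop :=
    tendsto_neg_atBot_atTop.comp Real.tendsto_log_nhdsGT_zero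
  refine (h.comp hlog).congr' ?_
  filter_upwards [self_mem_nhdsWithin] with t ht
  have ht : 0 < t := ht
  simp only [Function.comp]
  rw [subst_exp, ← integral_const_mul]
  rw [← integral_sub_right_eq_self (μ := volume) _ (-Real.log t)]
  rw [← integral_indicator measurableSet_Ioi]
  congr 1
  ext y
  simp only [sub_add_cancel, Set.indicator_apply, Set.mem_Ioi, uu]
  split_ifs with hy
  · simp only [Ker, smul_eq_mul]
    have e1 : Real.exp (y - -Real.log t) = t * Real.exp y := by
      rw [sub_neg_eq_add, Real.exp_add, Real.exp_log ht, mul_comm]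
    have e2 : Real.exp (2 * (y - -Real.log t)) = (t * Real.exp y) ^ 2 := by
      rw [two_mul, Real.exp_add, e1, sq]
    rw [e1, e2, Real.exp_neg y]
    have := (Real.exp_pos y).ne'
    field_simp
  · simp
end PartC

section PartD
open Filter Topology Asymptotics MeasureTheory
open Chebyshev

/-- log weight on odd primes -/
noncomputable def cc (n : ℕ) : ℝ := if n.Prime ∧ Odd n then Real.log n else 0

lemma cc_nonneg (n : ℕ) : 0 ≤ cc n := by
  unfold cc
  split_ifs
  · exact Real.log_natCast_nonneg n
  · exact le_rfl

lemma cc_le (n : ℕ) : cc n ≤ n := by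
  unfold cc
  split_ifs
  · exact Real.log_le_self (Nat.cast_nonneg n)
  · exact Nat.cast_nonneg n

noncomputable def SS (x : ℝ) : ℝ := ∑ n ∈ Finset.Ioc 0 ⌊x⌋₊, cc n

lemma SS_nonneg (x : ℝ) : 0 ≤ SS x := Finset.sum_nonneg (fun n _ => cc_nonneg n)

lemma SS_mono : Monotone SS := by
  intro x y h
  apply Finset.sum_le_sum_of_subset_of_nonneg
  · exact Finset.Ioc_subset_Ioc_right (Nat.floor_mono h)
  · intro n _ _
    exact cc_nonneg n

lemma SS_le_theta (x : ℝ) : SS x ≤ theta x := by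
  unfold SS theta
  rw [Finset.sum_filter]
  apply Finset.sum_le_sum
  intro n _
  unfold cc
  by_cases h : n.Prime
  · by_cases h' : Odd n
    · simp [h, h']
    · simp [h, h', Real.log_natCast_nonneg n]
  · simp [h]

lemma theta_le_SS (x : ℝ) : theta x ≤ SS x + Real.log 2 := by
  unfold SS theta
  rw [Finset.sum_filter]
  have h1 : ∑ n ∈ Finset.Ioc 0 ⌊x⌋₊, (if n = 2 then Real.log 2 else 0) ≤ Real.log 2 := by
    rw [Finset.sum_ite_eq']
    split_ifs
    · exact le_rfl
    · exact Real.log_nonneg (by norm_num)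
  refine le_trans ?_ (add_le_add_right h1 _)
  rw [← Finset.sum_add_distrib]
  apply Finset.sum_le_sum
  intro n _
  unfold cc
  by_cases h : n.Prime
  · by_cases h' : Odd n
    · simp only [h, h', if_true, and_self]
      have : (0:ℝ) ≤ if n = 2 then Real.log 2 else 0 := by
        split_ifs
        · exact Real.log_nonneg (by norm_num)
        · exact le_rfl
      linarith
    · have : n = 2 := by
        rcases h.eq_two_or_odd' with h2 | h2
        · exact h2
        · exact absurd h2 h'
      subst this
      rw [if_pos h, if_neg (fun hh => h' hh.2)]
      simp
  · simp only [h, if_false, false_and, zero_add]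
    split_ifs
    · exact Real.log_nonneg (by norm_num)
    · exact le_rfl

lemma psi_SS : ∃ C : ℝ, ∀ x, 1 ≤ x → |psi x - SS x| ≤ C * x ^ ((1:ℝ) / 2) := by
  obtain ⟨C, hC⟩ := psi_sub_theta_le_mul_sqrt
  refine ⟨C + Real.log 2, fun x hx => ?_⟩
  rw [← Real.sqrt_eq_rpow]
  have h1 := hC x
  have h2 := theta_le_SS x
  have h3 := SS_le_theta x
  have h4 := theta_le_psi x
  have h5 : Real.log 2 * 1 ≤ Real.log 2 * x.sqrt := by
    apply mul_le_mul_of_nonneg_left _ (Real.log_nonneg (by norm_num))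
    rw [Real.one_le_sqrt]
    exact hx
  rw [abs_of_nonneg (by linarith)]
  linarith

lemma gam_int {a t : ℝ} (ha : 0 < a) (ht : 0 < t) :
    IntegrableOn (fun x => x ^ (a - 1) * Real.exp (-(t * x))) (Set.Ioi 0) := by
  by_contra h
  have h1 := Real.integral_rpow_mul_exp_neg_mul_Ioi ha ht
  rw [integral_undef h] at h1
  have : 0 < (1 / t) ^ a * Real.Gamma a := mul_pos (by positivity) (Real.Gamma_pos_of_pos ha)
  linarith

lemma x_int {t : ℝ} (ht : 0 < t) :
    IntegrableOn (fun x => x * Real.exp (-(t * x))) (Set.Ioi 0) := by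
  have := gam_int (a := 2) (by norm_num) ht
  norm_num at this
  exact this

lemma psi_int {t : ℝ} (ht : 0 < t) :
    IntegrableOn (fun x => psi x * Real.exp (-(t * x))) (Set.Ioi 1) := by
  have h := ((x_int ht).mono_set (Set.Ioi_subset_Ioi zero_le_one)).const_mul (Real.log 4 + 4)
  refine Integrable.mono' h ?_ ?_
  · have := psi_meas
    apply Measurable.aestronglyMeasurable
    fun_prop
  · filter_upwards [ae_restrict_mem measurableSet_Ioi] with x hx
    have hx : 1 < x := hx
    rw [norm_mul, Real.norm_of_nonneg (psi_nonneg _), Real.norm_of_nonneg (Real.exp_pos _).le, ← mul_assoc]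
    exact mul_le_mul_of_nonneg_right (psi_le_const_mul_self (by linarith)) (Real.exp_pos _).le

lemma SS_int {t : ℝ} (ht : 0 < t) :
    IntegrableOn (fun x => SS x * Real.exp (-(t * x))) (Set.Ioi 1) := by
  refine Integrable.mono' (psi_int ht) ?_ ?_
  · have := SS_mono.measurable
    apply Measurable.aestronglyMeasurable
    fun_prop
  · filter_upwards with x
    rw [norm_mul, Real.norm_of_nonneg (SS_nonneg _), Real.norm_of_nonneg (Real.exp_pos _).le]
    exact mul_le_mul_of_nonneg_right ((SS_le_theta x).trans (theta_le_psi x)) (Real.exp_pos _).le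

lemma lim_diff : Tendsto (fun t : ℝ => t ^ 2 * ∫ x in Set.Ioi (1:ℝ), (psi x - SS x) * Real.exp (-(t * x)))
    (𝓝[>] 0) (𝓝 0) := by
  obtain ⟨C, hC⟩ := psi_SS
  have hC0 : 0 ≤ C := by
    have := (abs_nonneg _).trans (hC 1 le_rfl)
    simpa using this
  have hb : ∀ᶠ t in 𝓝[>] (0:ℝ), ‖t ^ 2 * ∫ x in Set.Ioi (1:ℝ), (psi x - SS x) * Real.exp (-(t * x))‖
      ≤ C * Real.Gamma (3/2) * t ^ ((1:ℝ)/2) := by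
    filter_upwards [self_mem_nhdsWithin] with t ht
    have ht : 0 < t := ht
    have hg := gam_int (a := 3/2) (by norm_num) ht
    have hgi := Real.integral_rpow_mul_exp_neg_mul_Ioi (a := 3/2) (by norm_num) ht
    rw [show (3:ℝ)/2 - 1 = 1/2 by norm_num] at hg hgi
    have h1 : ‖∫ x in Set.Ioi (1:ℝ), (psi x - SS x) * Real.exp (-(t * x))‖ ≤
        ∫ x in Set.Ioi (1:ℝ), C * (x ^ ((1:ℝ)/2) * Real.exp (-(t * x))) := by
      refine norm_integral_le_of_norm_le ((hg.mono_set (Set.Ioi_subset_Ioi zero_le_one)).const_mul C) ?_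
      filter_upwards [ae_restrict_mem measurableSet_Ioi] with x hx
      have hx : 1 < x := hx
      rw [norm_mul, Real.norm_of_nonneg (Real.exp_pos _).le, ← mul_assoc]
      exact mul_le_mul_of_nonneg_right (hC x hx.le) (Real.exp_pos _).le
    have h2 : ∫ x in Set.Ioi (1:ℝ), C * (x ^ ((1:ℝ)/2) * Real.exp (-(t * x))) ≤
        C * ((1 / t) ^ ((3:ℝ)/2) * Real.Gamma (3/2)) := by
      rw [integral_const_mul, ← hgi]
      apply mul_le_mul_of_nonneg_left _ hC0
      apply setIntegral_mono_set hg
      · filter_upwards [ae_restrict_mem measurableSet_Ioi] with x hx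
        have hx : 0 < x := hx
        positivity
      · exact (Set.Ioi_subset_Ioi zero_le_one).eventuallyLE
    rw [norm_mul, Real.norm_of_nonneg (by positivity)]
    calc t ^ 2 * ‖∫ x in Set.Ioi (1:ℝ), (psi x - SS x) * Real.exp (-(t * x))‖
        ≤ t ^ 2 * (C * ((1 / t) ^ ((3:ℝ)/2) * Real.Gamma (3/2))) :=
          mul_le_mul_of_nonneg_left (h1.trans h2) (by positivity)
      _ = C * Real.Gamma (3/2) * (t ^ 2 * (1 / t) ^ ((3:ℝ)/2)) := by ring
      _ = C * Real.Gamma (3/2) * t ^ ((1:ℝ)/2) := by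
          congr 1
          rw [one_div, Real.inv_rpow ht.le, ← Real.rpow_neg ht.le, ← Real.rpow_natCast, ← Real.rpow_add ht]
          norm_num
  refine squeeze_zero_norm' hb ?_
  have : Tendsto (fun t : ℝ => C * Real.Gamma (3/2) * t ^ ((1:ℝ)/2)) (𝓝 0) (𝓝 (C * Real.Gamma (3/2) * 0 ^ ((1:ℝ)/2))) := by
    apply Tendsto.const_mul
    exact (Real.continuousAt_rpow_const _ _ (Or.inr (by norm_num))).tendsto
  rw [Real.zero_rpow (by norm_num), mul_zero] at this
  exact this.mono_left nhdsWithin_le_nhds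

lemma lim_x : Tendsto (fun t : ℝ => t ^ 2 * ∫ x in Set.Ioi (1:ℝ), x * Real.exp (-(t * x)))
    (𝓝[>] 0) (𝓝 1) := by
  have h : Tendsto (fun t : ℝ => t ^ 2 * ∫ x in Set.Ioc (0:ℝ) 1, x * Real.exp (-(t * x))) (𝓝[>] 0) (𝓝 0) := by
    have t2 : Tendsto (fun t : ℝ => t ^ 2) (𝓝[>] 0) (𝓝 0) := by
      have : Tendsto (fun t : ℝ => t ^ 2) (𝓝 0) (𝓝 (0 ^ 2)) := (continuous_pow 2).tendsto 0
      simp only [ne_eq, OfNat.ofNat_ne_zero, not_false_eq_true, zero_pow] at this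
      exact this.mono_left nhdsWithin_le_nhds
    refine squeeze_zero_norm' ?_ t2
    filter_upwards [self_mem_nhdsWithin] with t ht
    have ht : 0 < t := ht
    rw [norm_mul, Real.norm_of_nonneg (by positivity)]
    apply mul_le_of_le_one_right (by positivity)
    have := norm_setIntegral_le_of_norm_le_const (μ := volume) (s := Set.Ioc (0:ℝ) 1) (C := 1)
      (f := fun x => x * Real.exp (-(t * x))) (by simp) ?_
    · simpa using this
    · intro x hx
      rw [norm_mul, Real.norm_of_nonneg hx.1.le, Real.norm_of_nonneg (Real.exp_pos _).le]
      apply mul_le_one₀ hx.2 (Real.exp_pos _).le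
      rw [Real.exp_le_one_iff]
      have := mul_pos ht hx.1
      linarith
  have h' : Tendsto (fun t : ℝ => 1 - t ^ 2 * ∫ x in Set.Ioc (0:ℝ) 1, x * Real.exp (-(t * x))) (𝓝[>] 0) (𝓝 (1 - 0)) :=
    h.const_sub 1
  rw [sub_zero] at h'
  refine h'.congr' ?_
  filter_upwards [self_mem_nhdsWithin] with t ht
  have ht : 0 < t := ht
  have hgi := Real.integral_rpow_mul_exp_neg_mul_Ioi (a := 2) (by norm_num) ht
  norm_num at hgi
  rw [← Set.Ioc_union_Ioi_eq_Ioi zero_le_one, setIntegral_union (by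
      rw [Set.disjoint_left]; intro x hx hx'; exact absurd hx.2 (not_le.2 hx')) measurableSet_Ioi
      ((x_int ht).mono_set Set.Ioc_subset_Ioi_self) ((x_int ht).mono_set (Set.Ioi_subset_Ioi zero_le_one))] at hgi
  have : t ^ 2 * (t ^ 2)⁻¹ = 1 := by field_simp
  linear_combination -t ^ 2 * hgi - this

lemma lim_SS : Tendsto (fun t : ℝ => t ^ 2 * ∫ x in Set.Ioi (1:ℝ), SS x * Real.exp (-(t * x)))
    (𝓝[>] 0) (𝓝 1) := by
  have h := (psi_laplace.sub lim_diff).add lim_x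
  norm_num at h
  refine h.congr' ?_
  filter_upwards [self_mem_nhdsWithin] with t ht
  have ht : 0 < t := ht
  have hx := (x_int ht).mono_set (Set.Ioi_subset_Ioi zero_le_one)
  have e1 : ∫ x in Set.Ioi (1:ℝ), (psi x - SS x) * Real.exp (-(t * x)) =
      (∫ x in Set.Ioi (1:ℝ), psi x * Real.exp (-(t * x))) - ∫ x in Set.Ioi (1:ℝ), SS x * Real.exp (-(t * x)) := by
    rw [← integral_sub (psi_int ht) (SS_int ht)]
    simp only [sub_mul]
  have e2 : ∫ x in Set.Ioi (1:ℝ), (psi x - x) * Real.exp (-(t * x)) =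
      (∫ x in Set.Ioi (1:ℝ), psi x * Real.exp (-(t * x))) - ∫ x in Set.Ioi (1:ℝ), x * Real.exp (-(t * x)) := by
    rw [← integral_sub (psi_int ht) hx]
    simp only [sub_mul]
  rw [e1, e2]
  ring

lemma summable_cc {z : ℝ} (h0 : 0 ≤ z) (h1 : z < 1) : Summable (fun n => cc n * z ^ n) := by
  have h := summable_pow_mul_geometric_of_norm_lt_one 1 (r := z) (by rwa [Real.norm_of_nonneg h0])
  refine Summable.of_nonneg_of_le (fun n => mul_nonneg (cc_nonneg n) (by positivity)) (fun n => ?_) h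
  rw [pow_one]
  exact mul_le_mul_of_nonneg_right (cc_le n) (by positivity)

lemma cc_laplace {t : ℝ} (ht : 0 < t) :
    ∫ x in Set.Ioi (1:ℝ), SS x * Real.exp (-(t * x)) = (∑' n, cc n * Real.exp (-t) ^ n) / t := by
  let F : ℕ → ℝ → ℝ := fun n x => cc n * (Set.Ioi (n:ℝ)).indicator (fun x => Real.exp (-(t * x))) x
  have hexp : ∀ c : ℝ, IntegrableOn (fun x => Real.exp (-(t * x))) (Set.Ioi c) := by
    intro c
    simpa using exp_neg_integrableOn_Ioi c ht
  have hFi : ∀ n, Integrable (F n) (volume.restrict (Set.Ioi 1)) := by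
    intro n
    apply Integrable.const_mul
    exact (hexp 1).indicator measurableSet_Ioi
  have hexpi : ∀ c : ℝ, ∫ x in Set.Ioi c, Real.exp (-(t * x)) = Real.exp (-(t * c)) / t := by
    intro c
    have := integral_exp_mul_Ioi (a := -t) (by linarith) c
    simp only [neg_mul] at this
    rw [this]
    field_simp
  have hFv : ∀ n, ∫ x in Set.Ioi (1:ℝ), F n x = cc n * Real.exp (-t) ^ n / t := by
    intro n
    by_cases hn : 1 ≤ n
    · simp only [F]
      rw [integral_const_mul, setIntegral_indicator measurableSet_Ioi,
        Set.Ioi_inter_Ioi, sup_eq_right.2 (by exact_mod_cast hn), hexpi, ← Real.exp_nat_mul]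
      rw [mul_div_assoc]
      congr 3
      ring
    · have : n = 0 := by omega
      subst this
      simp [F, cc]
  have hFn : ∀ n, ∀ x, ‖F n x‖ = F n x := by
    intro n x
    apply Real.norm_of_nonneg
    apply mul_nonneg (cc_nonneg n)
    apply Set.indicator_nonneg
    intro x _
    exact (Real.exp_pos _).le
  have hs := (summable_cc (Real.exp_pos (-t)).le (by rw [Real.exp_lt_one_iff]; linarith)).div_const t
  have key := integral_tsum_of_summable_integral_norm hFi (by simpa only [hFn, hFv] using hs)
  simp only [hFv] at key
  rw [tsum_div_const] at key
  rw [key]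
  apply integral_congr_ae
  have hne : ∀ᵐ x : ℝ ∂(volume.restrict (Set.Ioi 1)), x ∉ Set.range (fun n : ℕ => (n:ℝ)) := by
    apply ae_restrict_of_ae
    exact (Set.countable_range _).ae_notMem _
  filter_upwards [hne, ae_restrict_mem measurableSet_Ioi] with x hx hx1
  have hx1 : 1 < x := hx1
  simp only [F]
  rw [tsum_eq_sum (s := Finset.Ioc 0 ⌊x⌋₊), SS, Finset.sum_mul]
  · apply Finset.sum_congr rfl
    intro n hn
    rw [Finset.mem_Ioc] at hn
    rw [Set.indicator_of_mem]
    have h1 := (Nat.le_floor_iff (by linarith)).1 hn.2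
    exact lt_of_le_of_ne h1 (fun h => hx ⟨n, h⟩)
  · intro n hn
    by_cases h0 : n = 0
    · simp [h0, cc]
    · rw [Set.indicator_of_notMem, mul_zero]
      intro h
      apply hn
      rw [Finset.mem_Ioc]
      exact ⟨by omega, (Nat.le_floor_iff (by linarith)).2 (le_of_lt h)⟩

lemma lim_cc_t : Tendsto (fun t : ℝ => t * ∑' n, cc n * Real.exp (-t) ^ n) (𝓝[>] 0) (𝓝 1) := by
  refine lim_SS.congr' ?_
  filter_upwards [self_mem_nhdsWithin] with t ht
  have ht : 0 < t := ht
  rw [cc_laplace ht]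
  field_simp

lemma lim_cc : Tendsto (fun z : ℝ => (1 - z) * ∑' n, cc n * z ^ n) (𝓝[<] 1) (𝓝 1) := by
  have hlog : Tendsto (fun z : ℝ => -Real.log z) (𝓝[<] 1) (𝓝[>] 0) := by
    apply tendsto_nhdsWithin_iff.2
    constructor
    · have : Tendsto (fun z : ℝ => -Real.log z) (𝓝 1) (𝓝 (-Real.log 1)) :=
        (Real.continuousAt_log one_ne_zero).neg.tendsto
      rw [Real.log_one, neg_zero] at this
      exact this.mono_left nhdsWithin_le_nhds
    · filter_upwards [Ioo_mem_nhdsLT (show (0:ℝ) < 1 by norm_num)] with z hz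
      have := Real.log_neg hz.1 hz.2
      simp only [Set.mem_Ioi]
      linarith
  have h1 := lim_cc_t.comp hlog
  have h2 : Tendsto (fun z : ℝ => Real.log z / (z - 1)) (𝓝[<] 1) (𝓝 1) := by
    have := (Real.hasDerivAt_log one_ne_zero).tendsto_slope
    simp only [inv_one] at this
    have h3 : Tendsto (slope Real.log 1) (𝓝[<] 1) (𝓝 1) :=
      this.mono_left (nhdsWithin_mono _ (fun x hx => ne_of_lt hx))
    refine h3.congr ?_
    intro z
    rw [slope_def_field, Real.log_one, sub_zero]
  have h3 := h1.div h2 one_ne_zero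
  rw [div_one] at h3
  refine h3.congr' ?_
  filter_upwards [Ioo_mem_nhdsLT (show (0:ℝ) < 1 by norm_num)] with z hz
  have hl := (Real.log_neg hz.1 hz.2).ne
  have hz1 : z - 1 ≠ 0 := by linarith [hz.2]
  simp only [Function.comp, Pi.div_apply, neg_neg, Real.exp_log hz.1]
  field_simp
  ring
end PartD

lemma summable_fOdd {z : ℝ} (h0 : 0 ≤ z) (h1 : z < 1) :
    Summable (fun p : ℕ => if p.Prime ∧ Odd p then z ^ p else 0) := by
  refine Summable.of_nonneg_of_le (fun n => ?_) (fun n => ?_) (summable_geometric_of_lt_one h0 h1)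
  · split_ifs <;> positivity
  · split_ifs
    · exact le_rfl
    · positivity

lemma fOdd_nonneg {z : ℝ} (h0 : 0 ≤ z) : 0 ≤ fOdd z := by
  apply tsum_nonneg
  intro n
  split_ifs <;> positivity

lemma fOdd_upper {z R L : ℝ} (h0 : 0 ≤ z) (h1 : z < 1) (hR : 1 ≤ R) (hL : 0 < L) (hRL : L ≤ Real.log R) :
    fOdd z ≤ (R + 1) + (∑' n, cc n * z ^ n) / L := by
  have hfin : Summable (fun n : ℕ => if n ∈ Finset.range (⌊R⌋₊ + 1) then (1:ℝ) else 0) := by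
    apply summable_of_ne_finset_zero (s := Finset.range (⌊R⌋₊ + 1))
    intro n hn
    rw [if_neg hn]
  have hc := (summable_cc h0 h1).div_const L
  have hsum : ∑' n : ℕ, (if n ∈ Finset.range (⌊R⌋₊ + 1) then (1:ℝ) else 0) ≤ R + 1 := by
    rw [tsum_eq_sum (s := Finset.range (⌊R⌋₊ + 1)) (fun n hn => if_neg hn)]
    rw [Finset.sum_congr rfl (fun n hn => if_pos hn)]
    simp only [Finset.sum_const, Finset.card_range, nsmul_eq_mul, mul_one]
    push_cast
    linarith [Nat.floor_le (show 0 ≤ R by linarith)]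
  rw [← tsum_div_const]
  refine le_trans ?_ (add_le_add_left hsum _)
  rw [← hfin.tsum_add hc]
  apply (summable_fOdd h0 h1).tsum_le_tsum _ (hfin.add hc)
  intro n
  have hz : z ^ n ≤ 1 := pow_le_one₀ h0 h1.le
  have hz0 : 0 ≤ z ^ n := by positivity
  have hcn : 0 ≤ cc n * z ^ n / L := div_nonneg (mul_nonneg (cc_nonneg n) hz0) hL.le
  by_cases hn : n ∈ Finset.range (⌊R⌋₊ + 1)
  · rw [if_pos hn]
    split_ifs <;> linarith
  · rw [if_neg hn, zero_add]
    split_ifs with hp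
    · rw [cc, if_pos hp, le_div_iff₀ hL, mul_comm]
      apply mul_le_mul_of_nonneg_right _ hz0
      refine hRL.trans (Real.log_le_log (by linarith) ?_)
      rw [Finset.mem_range, not_lt] at hn
      exact (Nat.lt_of_floor_lt hn).le
    · exact hcn

lemma nw_le {w : ℝ} (h0 : 0 ≤ w) (h1 : w ≤ 1) (n : ℕ) : n * (1 - w) * w ^ n ≤ 1 - w ^ n := by
  induction n with
  | zero => simp
  | succ n ih =>
    have h2 : w ^ (n + 1) ≤ 1 := pow_le_one₀ h0 h1
    have h3 := mul_le_mul_of_nonneg_left ih h0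
    have h4 := mul_le_mul_of_nonneg_right h2 (show 0 ≤ 1 - w by linarith)
    push_cast
    rw [pow_succ] at *
    nlinarith

lemma fOdd_lower {z : ℝ} (h0 : 0 < z) (h1 : z < 1) :
    ∑' n, cc n * z ^ n ≤ Real.log (1 / (1 - z)) * fOdd z + 2 * fOdd (Real.sqrt z) := by
  set w := Real.sqrt z with hw
  have hw0 : 0 ≤ w := Real.sqrt_nonneg z
  have hw1 : w < 1 := by rw [hw, Real.sqrt_lt' one_pos]; simpa using h1
  have hww : z = w * w := (Real.mul_self_sqrt h0.le).symm
  have s1 := (summable_fOdd h0.le h1).mul_left (Real.log (1 / (1 - z)))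
  have s2 := (summable_fOdd hw0 hw1).mul_left 2
  unfold fOdd
  rw [← tsum_mul_left, ← tsum_mul_left, ← s1.tsum_add s2]
  apply (summable_cc h0.le h1).tsum_le_tsum _ (s1.add s2)
  intro n
  unfold cc
  split_ifs with hp
  · have hn : (0:ℝ) < n := by exact_mod_cast hp.1.pos
    have h1z : 0 < 1 - z := by linarith
    have hlog : Real.log n ≤ Real.log (1 / (1 - z)) + n * (1 - z) := by
      have h := Real.log_le_sub_one_of_pos (mul_pos hn h1z)
      rw [Real.log_mul hn.ne' h1z.ne'] at h
      rw [one_div, Real.log_inv]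
      linarith
    have hz0 : 0 ≤ z ^ n := by positivity
    have h2 := mul_le_mul_of_nonneg_right hlog hz0
    have h3 : n * (1 - z) * z ^ n ≤ 2 * w ^ n := by
      have hwn : 0 ≤ w ^ n := by positivity
      have h4 := nw_le hw0 hw1.le n
      have h5 : n * (1 - z) * z ^ n = (1 + w) * w ^ n * (n * (1 - w) * w ^ n) := by
        rw [hww, mul_pow]; ring
      rw [h5]
      have h6 : (1 + w) * w ^ n * (n * (1 - w) * w ^ n) ≤ (1 + w) * w ^ n * 1 := by
        apply mul_le_mul_of_nonneg_left _ (by positivity)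
        linarith
      have h7 : (1 + w) * w ^ n ≤ 2 * w ^ n := mul_le_mul_of_nonneg_right (by linarith) hwn
      linarith
    linarith
  · simp

lemma tendsto_T : Tendsto (fun z : ℝ => 1 / (1 - z)) (𝓝[<] 1) atTop := by
  have : Tendsto (fun z : ℝ => 1 - z) (𝓝[<] 1) (𝓝[>] 0) := by
    apply tendsto_nhdsWithin_iff.2
    constructor
    · have : Tendsto (fun z : ℝ => 1 - z) (𝓝 1) (𝓝 (1 - 1)) := (by fun_prop : Continuous (fun z : ℝ => 1 - z)).tendsto 1
      rw [sub_self] at this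
      exact this.mono_left nhdsWithin_le_nhds
    · filter_upwards [self_mem_nhdsWithin] with z hz
      have : z < 1 := hz
      simpa using this
  simp only [one_div]
  exact tendsto_inv_nhdsGT_zero.comp this

/-- limit of the upper bound -/
lemma upper_lim {a : ℝ} (ha0 : 0 < a) (ha1 : a < 1) :
    Tendsto (fun z : ℝ => ((1 / (1 - z)) ^ a + 1) * (Real.log (1 / (1 - z)) / (1 / (1 - z))) +
      ((1 - z) * ∑' n, cc n * z ^ n) / a) (𝓝[<] 1) (𝓝 (1 / a)) := by
  have h1 : Tendsto (fun T : ℝ => (T ^ a + 1) * (Real.log T / T)) atTop (𝓝 0) := by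
    have e1 := (isLittleO_log_rpow_atTop (show 0 < 1 - a by linarith)).tendsto_div_nhds_zero
    have e2 := Real.isLittleO_log_id_atTop.tendsto_div_nhds_zero
    have := e1.add e2
    rw [add_zero] at this
    refine this.congr' ?_
    filter_upwards [eventually_gt_atTop 0] with T hT
    rw [Real.rpow_sub hT, Real.rpow_one]
    have : T ^ a ≠ 0 := (Real.rpow_pos_of_pos hT a).ne'
    simp only [id]
    field_simp
  simpa using (h1.comp tendsto_T).add (lim_cc.div_const a)

lemma upper_ev {a : ℝ} (ha0 : 0 < a) :
    ∀ᶠ z : ℝ in 𝓝[<] 1, fOdd z * ((1 - z) * Real.log (1 / (1 - z))) ≤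
      ((1 / (1 - z)) ^ a + 1) * (Real.log (1 / (1 - z)) / (1 / (1 - z))) +
      ((1 - z) * ∑' n, cc n * z ^ n) / a := by
  filter_upwards [Ioo_mem_nhdsLT (show (0:ℝ) < 1 by norm_num)] with z hz
  have h1z : 0 < 1 - z := by linarith [hz.2]
  have hT : 1 < 1 / (1 - z) := by
    rw [lt_div_iff₀ h1z]; linarith [hz.1]
  set T := 1 / (1 - z) with hTdef
  have hTL : 0 < Real.log T := Real.log_pos hT
  have hz' : 1 - z = 1 / T := by rw [hTdef]; simp
  have h := fOdd_upper (z := z) (R := T ^ a) (L := a * Real.log T) hz.1.le hz.2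
    (Real.one_le_rpow hT.le ha0.le) (by positivity) (by rw [Real.log_rpow (by linarith)])
  have h2 := mul_le_mul_of_nonneg_right h (show 0 ≤ (1 - z) * Real.log T by positivity)
  refine h2.trans (le_of_eq ?_)
  have : T ≠ 0 := by positivity
  rw [hz']
  field_simp

lemma fOdd_small : Tendsto (fun z : ℝ => (1 - z) * fOdd z) (𝓝[<] 1) (𝓝 0) := by
  have hL : Tendsto (fun z : ℝ => Real.log (1 / (1 - z))) (𝓝[<] 1) atTop :=
    Real.tendsto_log_atTop.comp tendsto_T
  have h1 := (upper_lim (a := 1/2) (by norm_num) (by norm_num)).div_atTop hL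
  refine squeeze_zero' ?_ ?_ h1
  · filter_upwards [Ioo_mem_nhdsLT (show (0:ℝ) < 1 by norm_num)] with z hz
    exact mul_nonneg (by linarith [hz.2]) (fOdd_nonneg hz.1.le)
  · filter_upwards [upper_ev (a := 1/2) (by norm_num), hL.eventually_gt_atTop 0] with z hz hL
    rw [le_div_iff₀ hL]
    refine le_trans (le_of_eq ?_) hz
    ring

lemma lower_lim : Tendsto (fun z : ℝ => (1 - z) * (∑' n, cc n * z ^ n) -
    4 * ((1 - Real.sqrt z) * fOdd (Real.sqrt z))) (𝓝[<] 1) (𝓝 1) := by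
  have hs : Tendsto Real.sqrt (𝓝[<] 1) (𝓝[<] 1) := by
    apply tendsto_nhdsWithin_iff.2
    constructor
    · have := Real.continuous_sqrt.tendsto 1
      rw [Real.sqrt_one] at this
      exact this.mono_left nhdsWithin_le_nhds
    · filter_upwards [self_mem_nhdsWithin] with z hz
      have : z < 1 := hz
      simp only [Set.mem_Iio]
      rw [Real.sqrt_lt' one_pos]
      simpa using this
  simpa using lim_cc.sub ((fOdd_small.comp hs).const_mul 4)

lemma lower_ev : ∀ᶠ z : ℝ in 𝓝[<] 1, (1 - z) * (∑' n, cc n * z ^ n) -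
    4 * ((1 - Real.sqrt z) * fOdd (Real.sqrt z)) ≤ fOdd z * ((1 - z) * Real.log (1 / (1 - z))) := by
  filter_upwards [Ioo_mem_nhdsLT (show (0:ℝ) < 1 by norm_num)] with z hz
  have h1z : 0 < 1 - z := by linarith [hz.2]
  have h := mul_le_mul_of_nonneg_left (fOdd_lower hz.1 hz.2) h1z.le
  have hw0 : 0 ≤ Real.sqrt z := Real.sqrt_nonneg z
  have hw1 : Real.sqrt z < 1 := by rw [Real.sqrt_lt' one_pos]; simpa using hz.2
  have hww : Real.sqrt z * Real.sqrt z = z := Real.mul_self_sqrt hz.1.le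
  have h2 : (1 - z) ≤ 2 * (1 - Real.sqrt z) := by nlinarith
  have h3 := mul_le_mul_of_nonneg_right h2 (fOdd_nonneg hw0)
  linarith

/-- `f(z) ~ 1/((1−z)·log(1/(1−z)))` as `z → 1⁻`. -/
theorem fOdd_asymptotic :
    Tendsto (fun z : ℝ => fOdd z * ((1 - z) * Real.log (1 / (1 - z))))
      (𝓝[<] 1) (𝓝 1) := by
  rw [tendsto_order]
  constructor
  · intro b hb
    filter_upwards [lower_ev, lower_lim.eventually (lt_mem_nhds hb)] with z h1 h2
    linarith
  · intro b hb
    obtain ⟨a, ha1, ha2⟩ := exists_between (show 1 / b < 1 by rw [div_lt_one (by linarith)]; exact hb)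
    have ha0 : 0 < a := lt_trans (by positivity) ha1
    have hab : 1 / a < b := by
      rw [div_lt_iff₀ ha0]
      rw [div_lt_iff₀ (by linarith)] at ha1
      linarith
    filter_upwards [upper_ev ha0, (upper_lim ha0 ha2).eventually (gt_mem_nhds hab)] with z h1 h2
    linarith
end

section
/- Let f(z) = Σ_{p odd prime} z^p for real 0 < z < 1, with second derivative f″(z) = Σ_{p odd prime} p(p−1)·z^{p−2}. Then f″(z) ~ 2/((1−z)³·log(1/(1−z))) as z → 1⁻. -/
open Filter Topology Asymptotics MeasureTheory

namespace PNTaux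

open ArithmeticFunction (vonMangoldt)
open scoped FourierTransform

/-- The normalised von Mangoldt weights. -/
noncomputable def wt (n : ℕ) : ℝ := vonMangoldt n / n

lemma wt_nonneg (n : ℕ) : 0 ≤ wt n :=
  div_nonneg ArithmeticFunction.vonMangoldt_nonneg (Nat.cast_nonneg n)

/-- The comparison kernel. -/
noncomputable def W (u : ℝ) : ℝ := (1 + u ^ 2)⁻¹

lemma W_pos (u : ℝ) : 0 < W u := by unfold W; positivity

lemma W_cont : Continuous W := by
  unfold W
  exact Continuous.inv₀ (by fun_prop) (fun x => by positivity)

lemma W_int : Integrable W := integrable_inv_one_add_sq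

lemma W_int_shift (y : ℝ) : Integrable (fun s => W (s - y)) := W_int.comp_sub_right y

lemma W_integral_shift (y : ℝ) : ∫ s, W (s - y) = Real.pi := by
  rw [integral_sub_right_eq_self W y]
  exact integral_univ_inv_one_add_sq

lemma W_shift_le {u s : ℝ} (h1 : u ≤ s) (h2 : s ≤ u + 1) : W u ≤ 3 * W s := by
  unfold W
  rw [← div_eq_mul_inv, inv_eq_one_div, div_le_div_iff₀ (by positivity) (by positivity)]
  nlinarith [sq_nonneg (u - (s - u)), sq_nonneg u, sq_nonneg (s-u)]

lemma short_sum (F : Finset ℕ) (s : ℝ) :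
    ∑ n ∈ F, wt n * (Set.Icc (Real.log n) (Real.log n + 1)).indicator (fun _ => (1:ℝ)) s
      ≤ (Real.log 4 + 4) * Real.exp 1 := by
  have h1 : ∀ n ∈ F, wt n * (Set.Icc (Real.log n) (Real.log n + 1)).indicator (fun _ => (1:ℝ)) s
      ≤ if n ∈ Finset.Icc 0 ⌊Real.exp s⌋₊ then Real.exp (1 - s) * vonMangoldt n else 0 := by
    intro n _
    have hL : 0 ≤ vonMangoldt n := ArithmeticFunction.vonMangoldt_nonneg
    rcases Nat.eq_zero_or_pos n with rfl | hn
    · simp [wt]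
    have hn' : (0:ℝ) < n := by exact_mod_cast hn
    by_cases hs : s ∈ Set.Icc (Real.log n) (Real.log n + 1)
    · have h2 : (n:ℝ) ≤ Real.exp s := (Real.log_le_iff_le_exp hn').1 hs.1
      have h3 : n ∈ Finset.Icc 0 ⌊Real.exp s⌋₊ := by
        simp [Nat.le_floor h2]
      rw [if_pos h3, Set.indicator_of_mem hs, mul_one, wt, div_eq_inv_mul]
      apply mul_le_mul_of_nonneg_right _ hL
      have : Real.exp (s - 1) ≤ n := by
        rw [← Real.le_log_iff_exp_le hn']; linarith [hs.2]
      rw [show (1 - s) = -(s-1) by ring, Real.exp_neg]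
      exact inv_anti₀ (Real.exp_pos _) this
    · rw [Set.indicator_of_notMem hs, mul_zero]
      split_ifs
      · positivity
      · exact le_rfl
  refine (Finset.sum_le_sum h1).trans ?_
  rw [← Finset.sum_filter]
  calc _ ≤ ∑ n ∈ Finset.Icc 0 ⌊Real.exp s⌋₊, Real.exp (1 - s) * vonMangoldt n := by
        apply Finset.sum_le_sum_of_subset_of_nonneg
        · intro n hn; exact (Finset.mem_filter.1 hn).2
        · intro n _ _
          exact mul_nonneg (Real.exp_pos _).le ArithmeticFunction.vonMangoldt_nonneg
    _ = Real.exp (1 - s) * Chebyshev.psi (Real.exp s) := by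
        rw [Chebyshev.psi_eq_sum_Icc, Finset.mul_sum]
    _ ≤ Real.exp (1 - s) * ((Real.log 4 + 4) * Real.exp s) := by
        gcongr
        exact Chebyshev.psi_le_const_mul_self (Real.exp_pos s).le
    _ = _ := by
        rw [mul_left_comm, ← Real.exp_add]; ring_nf

/-- The Chebyshev constant. -/
noncomputable def CC : ℝ := 3 * Real.pi * ((Real.log 4 + 4) * Real.exp 1)

lemma CC_nonneg : 0 ≤ CC := by
  have := Real.log_nonneg (show (1:ℝ) ≤ 4 by norm_num)
  have := Real.pi_pos
  unfold CC; positivity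

lemma fin_sum_W (F : Finset ℕ) (y : ℝ) :
    ∑ n ∈ F, wt n * W (Real.log n - y) ≤ CC := by
  have hI : ∀ n : ℕ, Integrable (fun s => 3 * W (s - y) *
      (wt n * (Set.Icc (Real.log n) (Real.log n + 1)).indicator (fun _ => (1:ℝ)) s)) := by
    intro n
    have := (((W_int_shift y).const_mul (3 * wt n)).indicator
      (measurableSet_Icc (a := Real.log n) (b := Real.log n + 1)))
    refine this.congr (Eventually.of_forall fun s => ?_)
    by_cases hs : s ∈ Set.Icc (Real.log n) (Real.log n + 1)
    · simp only [Set.indicator_of_mem hs]; ring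
    · simp only [Set.indicator_of_notMem hs]; ring
  have h1 : ∀ n ∈ F, wt n * W (Real.log n - y) ≤ ∫ s, 3 * W (s - y) *
      (wt n * (Set.Icc (Real.log n) (Real.log n + 1)).indicator (fun _ => (1:ℝ)) s) := by
    intro n _
    have e : ∫ s, (Set.Icc (Real.log n) (Real.log n + 1)).indicator
        (fun _ => wt n * W (Real.log n - y)) s = wt n * W (Real.log n - y) := by
      rw [integral_indicator measurableSet_Icc]
      simp
    rw [← e]
    apply integral_mono _ (hI n)
    · intro s
      by_cases hs : s ∈ Set.Icc (Real.log n) (Real.log n + 1)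
      · simp only [Set.indicator_of_mem hs]
        have := W_shift_le (u := Real.log n - y) (s := s - y) (by linarith [hs.1])
          (by linarith [hs.2])
        nlinarith [wt_nonneg n]
      · simp only [Set.indicator_of_notMem hs]; simp
    · apply IntegrableOn.integrable_indicator _ measurableSet_Icc
      exact continuousOn_const.integrableOn_compact isCompact_Icc
  refine (Finset.sum_le_sum h1).trans ?_
  rw [← integral_finsetSum _ (fun n _ => hI n)]
  calc _ ≤ ∫ s, 3 * ((Real.log 4 + 4) * Real.exp 1) * W (s - y) := by
        apply integral_mono (integrable_finsetSum _ fun n _ => hI n)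
          ((W_int_shift y).const_mul _)
        intro s
        beta_reduce
        rw [← Finset.mul_sum]
        have := short_sum F s
        nlinarith [W_pos (s - y)]
    _ = CC := by
        rw [integral_const_mul, W_integral_shift, CC]; ring

lemma summable_W (y : ℝ) : Summable (fun n : ℕ => wt n * W (Real.log n - y)) :=
  summable_of_sum_le (fun n => mul_nonneg (wt_nonneg n) (W_pos _).le) (fun F => fin_sum_W F y)

lemma tsum_W_le (y : ℝ) : ∑' n : ℕ, wt n * W (Real.log n - y) ≤ CC :=
  (summable_W y).tsum_le_of_sum_le (fun F => fin_sum_W F y)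

section kernels

variable {K : ℝ → ℂ} {C : ℝ}

lemma term_le (hK : ∀ u, ‖K u‖ ≤ C * W u) (y : ℝ) (n : ℕ) :
    ‖(wt n : ℂ) * K (Real.log n - y)‖ ≤ C * (wt n * W (Real.log n - y)) := by
  rw [norm_mul, Complex.norm_real, Real.norm_of_nonneg (wt_nonneg n)]
  nlinarith [wt_nonneg n, hK (Real.log n - y)]

lemma summable_K (hK : ∀ u, ‖K u‖ ≤ C * W u) (y : ℝ) :
    Summable (fun n : ℕ => (wt n : ℂ) * K (Real.log n - y)) :=
  Summable.of_norm_bounded ((summable_W y).mul_left C) (term_le hK y)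

lemma tsum_K_le (hC : 0 ≤ C) (hK : ∀ u, ‖K u‖ ≤ C * W u) (y : ℝ) :
    ‖∑' n : ℕ, (wt n : ℂ) * K (Real.log n - y)‖ ≤ C * CC := by
  refine (tsum_of_norm_bounded ((summable_W y).mul_left C).hasSum (term_le hK y)).trans ?_
  rw [tsum_mul_left]
  exact mul_le_mul_of_nonneg_left (tsum_W_le y) hC

lemma integrable_K (hKc : Continuous K) (hK : ∀ u, ‖K u‖ ≤ C * W u) : Integrable K :=
  (W_int.const_mul C).mono' hKc.aestronglyMeasurable (Eventually.of_forall hK)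

lemma integral_K_le (hK : ∀ u, ‖K u‖ ≤ C * W u) : ‖∫ u, K u‖ ≤ C * Real.pi := by
  refine (norm_integral_le_of_norm_le (W_int.const_mul C) (Eventually.of_forall hK)).trans ?_
  rw [integral_const_mul]
  have := W_integral_shift 0
  simp only [sub_zero] at this
  rw [this]

end kernels

/-- Kernels for which the prime number theorem holds. -/
def Good (K : ℝ → ℂ) : Prop :=
  Tendsto (fun y : ℝ => ∑' n : ℕ, (wt n : ℂ) * K (Real.log n - y)) atTop (𝓝 (∫ u, K u))

lemma Good.of_approx {K : ℝ → ℂ} {C : ℝ} (hKc : Continuous K) (hK : ∀ u, ‖K u‖ ≤ C * W u)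
    (h : ∀ ε > 0, ∃ K' : ℝ → ℂ, Good K' ∧ Continuous K' ∧ ∀ u, ‖K u - K' u‖ ≤ ε * W u) :
    Good K := by
  unfold Good
  rw [Metric.tendsto_nhds]
  intro ε hε
  have hD : 0 < CC + Real.pi + 1 := by linarith [CC_nonneg, Real.pi_pos]
  obtain ⟨K', hg, hc, hb⟩ := h (ε / 2 / (CC + Real.pi + 1)) (by positivity)
  set η := ε / 2 / (CC + Real.pi + 1) with hη
  have hη0 : 0 < η := by positivity
  have hb' : ∀ u, ‖K' u‖ ≤ (C + η) * W u := by
    intro u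
    have h1 : ‖K' u‖ ≤ ‖K u‖ + ‖K u - K' u‖ := by
      have := norm_sub_le (K u) (K u - K' u)
      simpa using this
    linarith [hK u, hb u]
  filter_upwards [(Metric.tendsto_nhds.1 hg) (ε/2) (by positivity)] with y hy
  rw [dist_eq_norm] at hy ⊢
  have e1 : ∑' n : ℕ, (wt n : ℂ) * K (Real.log n - y) - ∑' n : ℕ, (wt n : ℂ) * K' (Real.log n - y)
      = ∑' n : ℕ, (wt n : ℂ) * (fun u => K u - K' u) (Real.log n - y) := by
    rw [← (summable_K hK y).tsum_sub (summable_K hb' y)]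
    congr 1; ext n; ring
  have e2 : ∫ u, K u - K' u = (∫ u, K u) - ∫ u, K' u :=
    integral_sub (integrable_K hKc hK) (integrable_K hc hb')
  have b1 := tsum_K_le (K := fun u => K u - K' u) hη0.le hb y
  have b2 := integral_K_le (K := fun u => K u - K' u) hb
  rw [← e1] at b1
  rw [e2] at b2
  have key : η * CC + η * Real.pi < ε / 2 := by
    have : η * (CC + Real.pi + 1) = ε / 2 := by rw [hη]; field_simp
    nlinarith
  set A := ∑' n : ℕ, (wt n : ℂ) * K (Real.log n - y)
  set B := ∑' n : ℕ, (wt n : ℂ) * K' (Real.log n - y)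
  have : A - ∫ u, K u = (A - B) + (B - ∫ u, K' u) - ((∫ u, K u) - ∫ u, K' u) := by ring
  rw [this]
  refine (norm_sub_le _ _).trans_lt ?_
  have := norm_add_le (A - B) (B - ∫ u, K' u)
  linarith

/-- The continuous extension of minus the logarithmic derivative of zeta minus its pole. -/
lemma exists_G : ∃ G : ℂ → ℂ, ContinuousOn G {s | 1 ≤ s.re} ∧
    ∀ s : ℂ, 1 < s.re → G s = LSeries (fun n => (vonMangoldt n : ℂ)) s - 1 / (s - 1) := by
  refine ⟨ArithmeticFunction.vonMangoldt.LFunctionResidueClassAux (q := 1) 1,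
    ArithmeticFunction.vonMangoldt.continuousOn_LFunctionResidueClassAux _, fun s hs => ?_⟩
  rw [ArithmeticFunction.vonMangoldt.eqOn_LFunctionResidueClassAux isUnit_one hs]
  have : ∀ n : ℕ, (n : ZMod 1) = 1 := fun n => Subsingleton.elim _ _
  simp [ArithmeticFunction.vonMangoldt.residueClass, this]

lemma fourier_cont {g : ℝ → ℂ} (hg : Integrable g) : Continuous (𝓕 g) :=
  VectorFourier.fourierIntegral_continuous Real.continuous_fourierChar
    (show Continuous (fun p : ℝ × ℝ => inner ℝ p.1 p.2) from continuous_inner) hg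

lemma fourier_shift (g : ℝ → ℂ) (u y : ℝ) :
    𝓕 g (u - y) = ∫ t : ℝ, Complex.exp (-(2 * Real.pi * t * u : ℝ) * Complex.I) *
      (g t * Complex.exp ((2 * Real.pi * t * y : ℝ) * Complex.I)) := by
  rw [Real.fourier_real_eq_integral_exp_smul]
  congr 1; ext t
  rw [smul_eq_mul, mul_comm (g t), ← mul_assoc, ← Complex.exp_add]
  congr 2
  push_cast; ring

lemma twist_int {g : ℝ → ℂ} (hg : Integrable g) (y : ℝ) :
    Integrable (fun t : ℝ => g t * Complex.exp ((2 * Real.pi * t * y : ℝ) * Complex.I)) := by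
  refine hg.mul_bdd (c := 1) (Continuous.aestronglyMeasurable (by fun_prop)) (Eventually.of_forall fun t => ?_)
  rw [Complex.norm_exp_ofReal_mul_I]

lemma term_eq {δ : ℝ} (t : ℝ) (n : ℕ) :
    LSeries.term (fun n => (vonMangoldt n : ℂ)) (1 + δ + 2 * Real.pi * t * Complex.I) n =
      (wt n * Real.exp (-(δ * Real.log n)) : ℝ) *
        Complex.exp (-(2 * Real.pi * t * Real.log n : ℝ) * Complex.I) := by
  rcases Nat.eq_zero_or_pos n with rfl | hn
  · simp [wt]
  have hn' : (n : ℂ) ≠ 0 := by exact_mod_cast hn.ne'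
  rw [LSeries.term_of_ne_zero hn.ne', wt, Complex.cpow_def_of_ne_zero hn', ← Complex.natCast_log]
  push_cast
  rw [div_mul_eq_mul_div, div_mul_eq_mul_div, div_eq_div_iff (Complex.exp_ne_zero _) hn', mul_assoc,
    mul_assoc, mul_assoc]
  congr 1
  rw [← Complex.exp_add, ← Complex.exp_add]
  conv_lhs => rw [← Complex.exp_log hn', ← Complex.natCast_log]
  congr 1
  rw [Complex.natCast_log]
  ring

lemma sum_side {g : ℝ → ℂ} (hg : Integrable g) {δ : ℝ} (hδ : 0 < δ) (y : ℝ) :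
    ∑' n : ℕ, ((wt n * Real.exp (-(δ * Real.log n)) : ℝ) : ℂ) * 𝓕 g (Real.log n - y) =
      ∫ t : ℝ, LSeries (fun n => (vonMangoldt n : ℂ)) (1 + δ + 2 * Real.pi * t * Complex.I) *
        (g t * Complex.exp ((2 * Real.pi * t * y : ℝ) * Complex.I)) := by
  set h : ℝ → ℂ := fun t => g t * Complex.exp ((2 * Real.pi * t * y : ℝ) * Complex.I) with hh
  have hInt : Integrable h := twist_int hg y
  set c : ℕ → ℝ := fun n => wt n * Real.exp (-(δ * Real.log n)) with hc
  have hc0 : ∀ n, 0 ≤ c n := fun n => mul_nonneg (wt_nonneg n) (Real.exp_pos _).le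
  have hcs : Summable c := by
    have h1 := ArithmeticFunction.LSeriesSummable_vonMangoldt (s := 1 + δ + 2 * Real.pi * (0:ℝ) * Complex.I)
      (by simp [hδ])
    have h2 := h1.norm
    refine h2.congr fun n => ?_
    have := term_eq (δ := δ) 0 n
    rw [this]
    rw [norm_mul, Complex.norm_real, Real.norm_of_nonneg (hc0 n)]
    simp [hc]
  let F : ℕ → ℝ → ℂ := fun n t => (c n : ℂ) *
    (Complex.exp (-(2 * Real.pi * t * Real.log n : ℝ) * Complex.I) * h t)
  have hFn : ∀ n t, ‖F n t‖ = c n * ‖h t‖ := by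
    intro n t
    simp only [F]
    rw [norm_mul, norm_mul, Complex.norm_real, Real.norm_of_nonneg (hc0 n), ← Complex.ofReal_neg,
      Complex.norm_exp_ofReal_mul_I, one_mul]
  have hFi : ∀ n, Integrable (F n) := by
    intro n
    refine Integrable.const_mul ?_ _
    refine hInt.bdd_mul (c := 1) (Continuous.aestronglyMeasurable (by fun_prop)) (Eventually.of_forall fun t => ?_)
    rw [← Complex.ofReal_neg, Complex.norm_exp_ofReal_mul_I]
  have hS : Summable (fun n => ∫ t, ‖F n t‖) := by
    simp_rw [hFn, integral_const_mul]
    exact hcs.mul_right _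
  have key := hasSum_integral_of_summable_integral_norm hFi hS
  have e1 : ∀ n, ∫ t, F n t = (c n : ℂ) * 𝓕 g (Real.log n - y) := by
    intro n
    rw [fourier_shift, ← integral_const_mul]
  simp_rw [e1] at key
  rw [key.tsum_eq]
  congr 1; ext t
  rw [LSeries, ← tsum_mul_right]
  congr 1; ext n
  rw [term_eq]
  simp only [F, hc]
  ring

lemma int_side {g : ℝ → ℂ} (hg : Integrable g) {δ : ℝ} (hδ : 0 < δ) (y : ℝ) :
    ∫ u in Set.Ioi (0:ℝ), (Real.exp (-(δ * u)) : ℂ) * 𝓕 g (u - y) =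
      ∫ t : ℝ, (1 / (δ + 2 * Real.pi * t * Complex.I)) *
        (g t * Complex.exp ((2 * Real.pi * t * y : ℝ) * Complex.I)) := by
  set h : ℝ → ℂ := fun t => g t * Complex.exp ((2 * Real.pi * t * y : ℝ) * Complex.I) with hh
  have hInt : Integrable h := twist_int hg y
  have hexp : Integrable (fun u : ℝ => (Real.exp (-(δ * u)) : ℂ)) (volume.restrict (Set.Ioi 0)) := by
    have := integrableOn_exp_mul_Ioi (a := -δ) (by linarith) 0
    have := this.ofReal (𝕜 := ℂ)
    refine this.congr (Eventually.of_forall fun u => ?_)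
    simp
  have hprod : Integrable (Function.uncurry fun (u t : ℝ) => (Real.exp (-(δ * u)) : ℂ) *
      (Complex.exp (-(2 * Real.pi * t * u : ℝ) * Complex.I) * h t))
      ((volume.restrict (Set.Ioi 0)).prod volume) := by
    have h1 := hexp.mul_prod hInt
    have h2 := h1.bdd_mul (f := fun p : ℝ × ℝ =>
      Complex.exp (-(2 * Real.pi * p.2 * p.1 : ℝ) * Complex.I)) (c := 1)
      (Continuous.aestronglyMeasurable (by fun_prop)) (Eventually.of_forall fun t => by
        rw [← Complex.ofReal_neg, Complex.norm_exp_ofReal_mul_I])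
    refine h2.congr (Eventually.of_forall fun p => ?_)
    simp only [Function.uncurry]
    ring
  calc _ = ∫ u in Set.Ioi (0:ℝ), ∫ t : ℝ, (Real.exp (-(δ * u)) : ℂ) *
      (Complex.exp (-(2 * Real.pi * t * u : ℝ) * Complex.I) * h t) := by
        congr 1; ext u
        rw [fourier_shift, ← integral_const_mul]
    _ = ∫ t : ℝ, ∫ u in Set.Ioi (0:ℝ), (Real.exp (-(δ * u)) : ℂ) *
      (Complex.exp (-(2 * Real.pi * t * u : ℝ) * Complex.I) * h t) :=
        integral_integral_swap hprod
    _ = _ := by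
        congr 1; ext t
        have e : ∀ u : ℝ, (Real.exp (-(δ * u)) : ℂ) *
          (Complex.exp (-(2 * Real.pi * t * u : ℝ) * Complex.I) * h t) =
          Complex.exp (-(δ + 2 * Real.pi * t * Complex.I) * u) * h t := by
          intro u
          rw [← mul_assoc, Complex.ofReal_exp, ← Complex.exp_add]
          congr 2
          push_cast; ring
        simp_rw [e]
        rw [integral_mul_const, integral_exp_mul_complex_Ioi (by simp [hδ])]
        rw [Complex.ofReal_zero, mul_zero, Complex.exp_zero, neg_div_neg_eq]

lemma core_identity {g : ℝ → ℂ} (hgc : Continuous g) (hgs : HasCompactSupport g) {C : ℝ}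
    (hF : ∀ u, ‖𝓕 g u‖ ≤ C * W u) {G : ℂ → ℂ} (hGc : ContinuousOn G {s | 1 ≤ s.re})
    (hG : ∀ s : ℂ, 1 < s.re → G s = LSeries (fun n => (vonMangoldt n : ℂ)) s - 1 / (s - 1))
    (y : ℝ) :
    ∑' n : ℕ, (wt n : ℂ) * 𝓕 g (Real.log n - y) - ∫ u in Set.Ioi (0:ℝ), 𝓕 g (u - y) =
      ∫ t : ℝ, G (1 + 2 * Real.pi * t * Complex.I) *
        (g t * Complex.exp ((2 * Real.pi * t * y : ℝ) * Complex.I)) := by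
  have hg : Integrable g := hgc.integrable_of_hasCompactSupport hgs
  have hFc := fourier_cont hg
  set h : ℝ → ℂ := fun t => g t * Complex.exp ((2 * Real.pi * t * y : ℝ) * Complex.I) with hh
  have hInt : Integrable h := twist_int hg y
  have hhc : Continuous h := by fun_prop
  have hh0 : ∀ t, g t = 0 → h t = 0 := fun t ht => by simp [hh, ht]
  have hmap : Continuous (fun p : ℝ × ℝ => (1 + p.1 + 2 * Real.pi * p.2 * Complex.I : ℂ)) := by
    fun_prop
  -- bound for G on a compact set
  obtain ⟨M, hM⟩ : ∃ M, ∀ δ ∈ Set.Icc (0:ℝ) 1, ∀ t ∈ tsupport g,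
      ‖G (1 + δ + 2 * Real.pi * t * Complex.I)‖ ≤ M := by
    have hK : IsCompact (Set.Icc (0:ℝ) 1 ×ˢ tsupport g) := isCompact_Icc.prod hgs
    have hc : ContinuousOn (fun p : ℝ × ℝ => G (1 + p.1 + 2 * Real.pi * p.2 * Complex.I))
        (Set.Icc (0:ℝ) 1 ×ˢ tsupport g) := by
      refine hGc.comp hmap.continuousOn ?_
      intro p hp
      simpa using hp.1.1
    obtain ⟨M, hM⟩ := hK.exists_bound_of_continuousOn hc
    exact ⟨M, fun δ hδ t ht => hM (δ, t) ⟨hδ, ht⟩⟩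
  have hGline : ∀ δ : ℝ, 0 ≤ δ → Continuous (fun t : ℝ => G (1 + δ + 2 * Real.pi * t * Complex.I)) := by
    intro δ hδ
    rw [← continuousOn_univ]
    refine hGc.comp (Continuous.continuousOn (by fun_prop)) ?_
    intro t _
    simpa using hδ
  have hmem : Set.Ioc (0:ℝ) 1 ∈ 𝓝[>] (0:ℝ) := Ioc_mem_nhdsGT one_pos
  have hEq : ∀ δ ∈ Set.Ioc (0:ℝ) 1,
      ∑' n : ℕ, ((wt n * Real.exp (-(δ * Real.log n)) : ℝ) : ℂ) * 𝓕 g (Real.log n - y) -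
      ∫ u in Set.Ioi (0:ℝ), (Real.exp (-(δ * u)) : ℂ) * 𝓕 g (u - y) =
      ∫ t : ℝ, G (1 + δ + 2 * Real.pi * t * Complex.I) * h t := by
    intro δ hδ
    rw [sum_side hg hδ.1 y, int_side hg hδ.1 y]
    have i1 : Integrable (fun t : ℝ => G (1 + δ + 2 * Real.pi * t * Complex.I) * h t) := by
      refine Continuous.integrable_of_hasCompactSupport ((hGline δ hδ.1.le).mul hhc) ?_
      exact (hgs.mul_right).mul_left
    have hd : ∀ t : ℝ, (δ + 2 * Real.pi * t * Complex.I : ℂ) ≠ 0 := by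
      intro t h0
      have := congrArg Complex.re h0
      simp at this
      exact hδ.1.ne' this
    have i2 : Integrable (fun t : ℝ => (1 / (δ + 2 * Real.pi * t * Complex.I)) * h t) := by
      refine Continuous.integrable_of_hasCompactSupport (Continuous.mul ?_ hhc) ?_
      · exact Continuous.div (by fun_prop) (by fun_prop) hd
      · exact (hgs.mul_right).mul_left
    have e3 : ∀ t : ℝ, LSeries (fun n => (vonMangoldt n : ℂ)) (1 + δ + 2 * Real.pi * t * Complex.I) * h t
        = G (1 + δ + 2 * Real.pi * t * Complex.I) * h t +
          (1 / (δ + 2 * Real.pi * t * Complex.I)) * h t := by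
      intro t
      rw [hG _ (by simp [hδ.1])]
      rw [show (1 + δ + 2 * Real.pi * t * Complex.I - 1 : ℂ) = δ + 2 * Real.pi * t * Complex.I by ring]
      ring
    rw [integral_congr_ae (Eventually.of_forall e3), integral_add i1 i2]
    ring
  have T1 : Tendsto (fun δ : ℝ => ∑' n : ℕ, ((wt n * Real.exp (-(δ * Real.log n)) : ℝ) : ℂ) *
      𝓕 g (Real.log n - y)) (𝓝[>] 0) (𝓝 (∑' n : ℕ, (wt n : ℂ) * 𝓕 g (Real.log n - y))) := by
    refine tendsto_tsum_of_dominated_convergence ((summable_W y).mul_left C) ?_ ?_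
    · intro n
      have : Continuous (fun δ : ℝ => ((wt n * Real.exp (-(δ * Real.log n)) : ℝ) : ℂ) *
        𝓕 g (Real.log n - y)) := by fun_prop
      have := (this.tendsto 0).mono_left (nhdsWithin_le_nhds (s := Set.Ioi (0:ℝ)))
      simpa using this
    · filter_upwards [hmem] with δ hδ n
      refine le_trans ?_ (term_le hF y n)
      rw [norm_mul, norm_mul, Complex.norm_real, Complex.norm_real]
      gcongr
      rw [Real.norm_of_nonneg (wt_nonneg n), Real.norm_of_nonneg
        (mul_nonneg (wt_nonneg n) (Real.exp_pos _).le)]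
      have : Real.exp (-(δ * Real.log n)) ≤ 1 := by
        apply Real.exp_le_one_iff.2
        have := mul_nonneg hδ.1.le (Real.log_natCast_nonneg n)
        linarith
      exact mul_le_of_le_one_right (wt_nonneg n) this
  have T2 : Tendsto (fun δ : ℝ => ∫ u in Set.Ioi (0:ℝ), (Real.exp (-(δ * u)) : ℂ) * 𝓕 g (u - y))
      (𝓝[>] 0) (𝓝 (∫ u in Set.Ioi (0:ℝ), 𝓕 g (u - y))) := by
    refine tendsto_integral_filter_of_dominated_convergence (fun u => C * W (u - y)) ?_ ?_ ?_ ?_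
    · exact Eventually.of_forall fun δ => Continuous.aestronglyMeasurable (by fun_prop)
    · filter_upwards [hmem] with δ hδ
      rw [ae_restrict_iff' measurableSet_Ioi]
      refine Eventually.of_forall fun u hu => ?_
      rw [norm_mul, Complex.norm_real, Real.norm_of_nonneg (Real.exp_pos _).le]
      have : Real.exp (-(δ * u)) ≤ 1 := by
        apply Real.exp_le_one_iff.2
        have := mul_nonneg hδ.1.le (le_of_lt hu)
        linarith
      exact (mul_le_of_le_one_left (norm_nonneg _) this).trans (hF _)
    · exact ((W_int_shift y).const_mul C).integrableOn
    · refine Eventually.of_forall fun u => ?_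
      have : Continuous (fun δ : ℝ => (Real.exp (-(δ * u)) : ℂ) * 𝓕 g (u - y)) := by fun_prop
      have := (this.tendsto 0).mono_left (nhdsWithin_le_nhds (s := Set.Ioi (0:ℝ)))
      simpa using this
  have T3 : Tendsto (fun δ : ℝ => ∫ t : ℝ, G (1 + δ + 2 * Real.pi * t * Complex.I) * h t)
      (𝓝[>] 0) (𝓝 (∫ t : ℝ, G (1 + 2 * Real.pi * t * Complex.I) * h t)) := by
    refine tendsto_integral_filter_of_dominated_convergence (fun t => M * ‖h t‖) ?_ ?_ ?_ ?_
    · filter_upwards [hmem] with δ hδ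
      exact ((hGline δ hδ.1.le).mul hhc).aestronglyMeasurable
    · filter_upwards [hmem] with δ hδ
      refine Eventually.of_forall fun t => ?_
      rw [norm_mul]
      by_cases ht : t ∈ tsupport g
      · exact mul_le_mul_of_nonneg_right (hM δ ⟨hδ.1.le, hδ.2⟩ t ht) (norm_nonneg _)
      · have : h t = 0 := hh0 t (image_eq_zero_of_notMem_tsupport ht)
        simp [this]
    · exact hInt.norm.const_mul M
    · refine Eventually.of_forall fun t => ?_
      refine Tendsto.mul_const _ ?_
      have h1 : ContinuousOn (fun δ : ℝ => G (1 + δ + 2 * Real.pi * t * Complex.I)) (Set.Ici 0) := by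
        refine hGc.comp (Continuous.continuousOn (by fun_prop)) ?_
        intro δ hδ
        simpa using hδ
      have h2 := (h1 0 (by simp)).tendsto.mono_left (nhdsWithin_mono 0 (Set.Ioi_subset_Ici_self))
      simpa using h2
  have T4 := (T1.sub T2).congr' (by filter_upwards [hmem] with δ hδ using hEq δ hδ)
  exact tendsto_nhds_unique T4 T3

lemma good_fourier {g : ℝ → ℂ} (hgc : Continuous g) (hgs : HasCompactSupport g) {C : ℝ}
    (hF : ∀ u, ‖𝓕 g u‖ ≤ C * W u) : Good (𝓕 g) := by
  obtain ⟨G, hGc, hG⟩ := exists_G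
  have hg : Integrable g := hgc.integrable_of_hasCompactSupport hgs
  have hFc := fourier_cont hg
  have hFi := integrable_K hFc hF
  have A : Tendsto (fun y : ℝ => ∫ u in Set.Ioi (0:ℝ), 𝓕 g (u - y)) atTop (𝓝 (∫ u, 𝓕 g u)) := by
    have e : ∀ y : ℝ, ∫ u in Set.Ioi (0:ℝ), 𝓕 g (u - y) = ∫ u in Set.Ioi (-y), 𝓕 g u := by
      intro y
      rw [← integral_indicator measurableSet_Ioi, ← integral_indicator measurableSet_Ioi,
        ← integral_sub_right_eq_self ((Set.Ioi (-y)).indicator (𝓕 g)) y]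
      congr 1; ext u
      by_cases hu : 0 < u
      · rw [Set.indicator_of_mem (show u ∈ Set.Ioi 0 from hu),
          Set.indicator_of_mem (show u - y ∈ Set.Ioi (-y) by simpa using hu)]
      · rw [Set.indicator_of_notMem (show u ∉ Set.Ioi 0 from hu),
          Set.indicator_of_notMem (show u - y ∉ Set.Ioi (-y) by simpa using hu)]
    simp_rw [e]
    exact (aecover_Ioi tendsto_neg_atTop_atBot).integral_tendsto_of_countably_generated hFi
  have B : Tendsto (fun y : ℝ => ∫ t : ℝ, G (1 + 2 * Real.pi * t * Complex.I) *
        (g t * Complex.exp ((2 * Real.pi * t * y : ℝ) * Complex.I))) atTop (𝓝 0) := by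
    have h1 := Real.zero_at_infty_fourier (fun t : ℝ => G (1 + 2 * Real.pi * t * Complex.I) * g t)
    have h2 : Tendsto (fun y : ℝ => -y) atTop (cocompact ℝ) :=
      tendsto_neg_atTop_atBot.mono_right atBot_le_cocompact
    refine (h1.comp h2).congr fun y => ?_
    rw [Function.comp_apply, Real.fourier_real_eq_integral_exp_smul]
    congr 1; ext t
    rw [smul_eq_mul, mul_comm, mul_assoc]
    congr 3
    push_cast; ring
  have S := B.add A
  rw [zero_add] at S
  refine S.congr fun y => ?_
  rw [← core_identity hgc hgs hF hGc hG y]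
  ring

lemma fourier_norm_le (g : ℝ → ℂ) (u : ℝ) : ‖𝓕 g u‖ ≤ ∫ t, ‖g t‖ := by
  rw [Real.fourier_real_eq_integral_exp_smul]
  refine (norm_integral_le_integral_norm _).trans (le_of_eq ?_)
  congr 1; ext t
  rw [norm_smul, Complex.norm_exp_ofReal_mul_I, one_mul]

lemma fourier_bound {h h1 h2 : ℝ → ℂ} (hd1 : ∀ t, HasDerivAt h (h1 t) t)
    (hd2 : ∀ t, HasDerivAt h1 (h2 t) t) (hi : Integrable h) (hi1 : Integrable h1)
    (hi2 : Integrable h2) (u : ℝ) :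
    ‖𝓕 h u‖ ≤ ((∫ t, ‖h t‖) + ∫ t, ‖h2 t‖) * W u := by
  have e1 : deriv h = h1 := funext fun t => (hd1 t).deriv
  have e2 : deriv h1 = h2 := funext fun t => (hd2 t).deriv
  have f1 := Real.fourier_deriv hi (fun t => (hd1 t).differentiableAt) (e1 ▸ hi1)
  have f2 := Real.fourier_deriv hi1 (fun t => (hd2 t).differentiableAt) (e2 ▸ hi2)
  rw [e1] at f1
  rw [e2, f1] at f2
  have a := fourier_norm_le h u
  have b := fourier_norm_le h2 u
  rw [f2] at b
  simp only [norm_smul, norm_mul, Complex.norm_real, Complex.norm_I, Complex.norm_ofNat,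
    Real.norm_eq_abs, abs_of_pos Real.pi_pos, mul_one] at b
  have hp := Real.pi_gt_three
  have hx : |u| * |u| = u ^ 2 := by rw [abs_mul_abs_self]; ring
  have b' : u ^ 2 * ‖𝓕 h u‖ ≤ ∫ t, ‖h2 t‖ := by
    refine le_trans ?_ b
    have : 2 * Real.pi * |u| * (2 * Real.pi * |u| * ‖𝓕 h u‖) =
      (4 * Real.pi ^ 2) * (u ^ 2 * ‖𝓕 h u‖) := by rw [← hx]; ring
    rw [this]
    have h0 : 0 ≤ u ^ 2 * ‖𝓕 h u‖ := by positivity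
    nlinarith [mul_nonneg h0 (show 0 ≤ 4 * Real.pi ^ 2 - 1 by nlinarith)]
  rw [W, ← div_eq_mul_inv, le_div_iff₀ (by positivity)]
  linarith

/-- Smooth cutoff functions, in the form needed here. -/
lemma exists_cutoff : ∃ b b1 b2 : ℝ → ℂ, ∃ B : ℝ, ContDiff ℝ (⊤ : ℕ∞) b ∧ HasCompactSupport b ∧
    (∀ t, HasDerivAt b (b1 t) t) ∧ (∀ t, HasDerivAt b1 (b2 t) t) ∧ Continuous b2 ∧
    (∀ t, ‖b t‖ ≤ B) ∧ (∀ t, ‖b1 t‖ ≤ B) ∧ (∀ t, ‖b2 t‖ ≤ B) ∧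
    (∀ t, |t| < 1 → b t = 1 ∧ b1 t = 0 ∧ b2 t = 0) ∧ (∀ t, ‖1 - b t‖ ≤ 1) := by
  let f : ContDiffBump (0:ℝ) := ⟨1, 2, one_pos, by norm_num⟩
  let b : ℝ → ℂ := fun t => (f t : ℂ)
  have hb : ContDiff ℝ (⊤ : ℕ∞) b := Complex.ofRealCLM.contDiff.comp f.contDiff
  have hs : HasCompactSupport b := f.hasCompactSupport.comp_left (g := fun x : ℝ => (x:ℂ)) (by simp)
  have hb1 : ContDiff ℝ (⊤ : ℕ∞) (deriv b) := ((contDiff_infty_iff_deriv).1 hb).2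
  have hb2 : ContDiff ℝ (⊤ : ℕ∞) (deriv (deriv b)) := ((contDiff_infty_iff_deriv).1 hb1).2
  have hs1 : HasCompactSupport (deriv b) := hs.deriv
  have hs2 : HasCompactSupport (deriv (deriv b)) := hs1.deriv
  obtain ⟨B0, h0⟩ := hs.exists_bound_of_continuous hb.continuous
  obtain ⟨B1, h1⟩ := hs1.exists_bound_of_continuous hb1.continuous
  obtain ⟨B2, h2⟩ := hs2.exists_bound_of_continuous hb2.continuous
  have hone : ∀ t, |t| < 1 → b =ᶠ[𝓝 t] fun _ => 1 := by
    intro t ht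
    have : Metric.ball (0:ℝ) 1 ∈ 𝓝 t := Metric.isOpen_ball.mem_nhds (by simpa using ht)
    filter_upwards [this] with x hx
    have : f x = 1 := f.one_of_mem_closedBall (Metric.ball_subset_closedBall hx)
    simp [b, this]
  refine ⟨b, deriv b, deriv (deriv b), max B0 (max B1 B2), hb, hs, ?_, ?_, hb2.continuous, ?_, ?_, ?_,
    ?_, ?_⟩
  · exact fun t => (hb.differentiable (by simp) t).hasDerivAt
  · exact fun t => (hb1.differentiable (by simp) t).hasDerivAt
  · exact fun t => (h0 t).trans (le_max_left _ _)
  · exact fun t => (h1 t).trans ((le_max_left _ _).trans (le_max_right _ _))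
  · exact fun t => (h2 t).trans ((le_max_right _ _).trans (le_max_right _ _))
  · intro t ht
    have e := hone t ht
    have e1 := e.deriv
    have e2 := e1.deriv
    refine ⟨e.eq_of_nhds, ?_, ?_⟩
    · simpa using e1.eq_of_nhds
    · simpa using e2.eq_of_nhds
  · intro t
    have : (1 - b t) = ((1 - f t : ℝ) : ℂ) := by simp [b]
    rw [this, Complex.norm_real, Real.norm_eq_abs, abs_le]
    constructor <;> linarith [f.nonneg (x := t), f.le_one (x := t)]

lemma good_smooth {K : ℝ → ℂ} (hK : ContDiff ℝ (⊤ : ℕ∞) K) (hKs : HasCompactSupport K) : Good K := by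
  obtain ⟨b, b1, b2, B, hb, hbs, hd1, hd2, hb2c, hB, hB1, hB2, hone, hle⟩ := exists_cutoff
  let k : SchwartzMap ℝ ℂ := hKs.toSchwartzMap hK
  let g : SchwartzMap ℝ ℂ := 𝓕⁻ k
  have hgK : 𝓕 (g : ℝ → ℂ) = K := by
    rw [← SchwartzMap.fourier_coe, FourierTransform.fourier_fourierInv_eq]
    rfl
  let g1 : SchwartzMap ℝ ℂ := SchwartzMap.derivCLM ℝ ℂ g
  let g2 : SchwartzMap ℝ ℂ := SchwartzMap.derivCLM ℝ ℂ g1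
  have hg1 : ∀ t, HasDerivAt g (g1 t) t := fun t => by
    simpa [g1] using (g.differentiable t).hasDerivAt
  have hg2 : ∀ t, HasDerivAt g1 (g2 t) t := fun t => by
    simpa [g2] using (g1.differentiable t).hasDerivAt
  have hb1c : Continuous b1 := continuous_iff_continuousAt.2 fun t => (hd2 t).continuousAt
  have hbc : Continuous b := hb.continuous
  have hB0 : 0 ≤ B := (norm_nonneg _).trans (hB 0)
  -- derivatives of the dilated cutoff
  have hbR : ∀ R : ℝ, ∀ t, HasDerivAt (fun t : ℝ => b (t / R)) (b1 (t / R) / R) t := by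
    intro R t
    have := (hd1 (t / R)).scomp t ((hasDerivAt_id t).div_const R)
    simpa [Function.comp_def, div_eq_inv_mul] using this
  have hbR1 : ∀ R : ℝ, ∀ t, HasDerivAt (fun t : ℝ => b1 (t / R) / R) (b2 (t / R) / R / R) t := by
    intro R t
    have := ((hd2 (t / R)).scomp t ((hasDerivAt_id t).div_const R)).div_const (R:ℂ)
    simpa [Function.comp_def, div_eq_inv_mul] using this
  let h : ℝ → ℝ → ℂ := fun R t => g t * (1 - b (t / R))
  let h1 : ℝ → ℝ → ℂ := fun R t => g1 t * (1 - b (t / R)) - g t * (b1 (t / R) / R)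
  let h2 : ℝ → ℝ → ℂ := fun R t => g2 t * (1 - b (t / R)) - 2 * g1 t * (b1 (t / R) / R)
    - g t * (b2 (t / R) / R / R)
  have hh1 : ∀ R t, HasDerivAt (h R) (h1 R t) t := by
    intro R t
    have := (hg1 t).mul ((hbR R t).const_sub 1)
    refine this.congr_deriv ?_
    simp only [h1]; ring
  have hh2 : ∀ R t, HasDerivAt (h1 R) (h2 R t) t := by
    intro R t
    have := ((hg2 t).mul ((hbR R t).const_sub 1)).sub ((hg1 t).mul (hbR1 R t))
    refine this.congr_deriv ?_
    simp only [h2]; ring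
  have ig := g.integrable (μ := volume)
  have ig1 := g1.integrable (μ := volume)
  have ig2 := g2.integrable (μ := volume)
  have hRn : ∀ R : ℝ, 1 ≤ R → ∀ z : ℂ, ‖z / R‖ ≤ ‖z‖ := by
    intro R hR z
    rw [norm_div, Complex.norm_real, Real.norm_of_nonneg (by linarith)]
    exact div_le_self (norm_nonneg _) hR
  have bd : ∀ R : ℝ, 1 ≤ R → ∀ t, ‖h R t‖ ≤ ‖g t‖ := by
    intro R hR t
    simp only [h]
    rw [norm_mul]
    exact mul_le_of_le_one_right (norm_nonneg _) (hle _)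
  have bd1 : ∀ R : ℝ, 1 ≤ R → ∀ t, ‖h1 R t‖ ≤ ‖g1 t‖ + ‖g t‖ * B := by
    intro R hR t
    refine (norm_sub_le _ _).trans (add_le_add ?_ ?_)
    · rw [norm_mul]
      exact mul_le_of_le_one_right (norm_nonneg _) (hle _)
    · rw [norm_mul]
      exact mul_le_mul_of_nonneg_left ((hRn R hR _).trans (hB1 _)) (norm_nonneg _)
  have bd2 : ∀ R : ℝ, 1 ≤ R → ∀ t, ‖h2 R t‖ ≤ ‖g2 t‖ + 2 * ‖g1 t‖ * B + ‖g t‖ * B := by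
    intro R hR t
    refine (norm_sub_le _ _).trans (add_le_add ((norm_sub_le _ _).trans (add_le_add ?_ ?_)) ?_)
    · rw [norm_mul]
      exact mul_le_of_le_one_right (norm_nonneg _) (hle _)
    · rw [norm_mul, norm_mul, Complex.norm_ofNat]
      exact mul_le_mul_of_nonneg_left ((hRn R hR _).trans (hB1 _)) (by positivity)
    · rw [norm_mul]
      exact mul_le_mul_of_nonneg_left ((hRn R hR _).trans ((hRn R hR _).trans (hB2 _)))
        (norm_nonneg _)
  have cg : Continuous g := g.continuous
  have cg1 : Continuous g1 := g1.continuous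
  have cg2 : Continuous g2 := g2.continuous
  have ch : ∀ R, Continuous (h R) := fun R => by simp only [h]; fun_prop
  have ch1 : ∀ R, Continuous (h1 R) := fun R => by simp only [h1]; fun_prop
  have ch2 : ∀ R, Continuous (h2 R) := fun R => by simp only [h2]; fun_prop
  have I1 := ig1.norm.add (ig.norm.mul_const B)
  have I2 := (ig2.norm.add ((ig1.norm.const_mul 2).mul_const B)).add (ig.norm.mul_const B)
  have ih : ∀ R, 1 ≤ R → Integrable (h R) := fun R hR =>
    ig.norm.mono' (ch R).aestronglyMeasurable (Eventually.of_forall (bd R hR))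
  have ih1 : ∀ R, 1 ≤ R → Integrable (h1 R) := fun R hR =>
    I1.mono' (ch1 R).aestronglyMeasurable (Eventually.of_forall (bd1 R hR))
  have ih2 : ∀ R, 1 ≤ R → Integrable (h2 R) := fun R hR =>
    I2.mono' (ch2 R).aestronglyMeasurable (Eventually.of_forall (bd2 R hR))
  have hR1 : ∀ᶠ R : ℝ in atTop, 1 ≤ R := eventually_ge_atTop 1
  have ev : ∀ t : ℝ, ∀ᶠ R : ℝ in atTop, |t / R| < 1 := by
    intro t
    filter_upwards [eventually_gt_atTop (|t|), eventually_gt_atTop 0] with R h1 h2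
    rw [abs_div, abs_of_pos h2, div_lt_one h2]
    exact h1
  have L0 : Tendsto (fun R => ∫ t, ‖h R t‖) atTop (𝓝 0) := by
    have := tendsto_integral_filter_of_dominated_convergence (μ := volume) (l := (atTop : Filter ℝ))
      (F := fun R t => ‖h R t‖) (f := fun _ => (0:ℝ)) (fun t => ‖g t‖)
      (Eventually.of_forall fun R => (ch R).norm.aestronglyMeasurable)
      (by filter_upwards [hR1] with R hR
          exact Eventually.of_forall fun t => by simpa using bd R hR t)
      ig.norm
      (Eventually.of_forall fun t => by
        refine tendsto_const_nhds.congr' ?_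
        filter_upwards [ev t] with R hR
        simp [h, (hone _ hR).1])
    simpa using this
  have L2 : Tendsto (fun R => ∫ t, ‖h2 R t‖) atTop (𝓝 0) := by
    have := tendsto_integral_filter_of_dominated_convergence (μ := volume) (l := (atTop : Filter ℝ))
      (F := fun R t => ‖h2 R t‖) (f := fun _ => (0:ℝ))
      (fun t => ‖g2 t‖ + 2 * ‖g1 t‖ * B + ‖g t‖ * B)
      (Eventually.of_forall fun R => (ch2 R).norm.aestronglyMeasurable)
      (by filter_upwards [hR1] with R hR
          exact Eventually.of_forall fun t => by simpa using bd2 R hR t)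
      I2
      (Eventually.of_forall fun t => by
        refine tendsto_const_nhds.congr' ?_
        filter_upwards [ev t] with R hR
        simp [h2, (hone _ hR).1, (hone _ hR).2.1, (hone _ hR).2.2])
    simpa using this
  have L := L0.add L2
  rw [add_zero] at L
  have hKb : ∀ u, ‖K u‖ ≤ ((∫ t, ‖g t‖) + ∫ t, ‖g2 t‖) * W u := by
    intro u
    rw [← hgK]
    exact fourier_bound hg1 hg2 ig ig1 ig2 u
  refine Good.of_approx hK.continuous hKb fun ε hε => ?_
  obtain ⟨R, hRε, hR⟩ := ((L.eventually (gt_mem_nhds hε)).and hR1).exists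
  have hR0 : R ≠ 0 := by linarith
  let gR : ℝ → ℂ := fun t => g t * b (t / R)
  have cgR : Continuous gR := by simp only [gR]; fun_prop
  have sgR : HasCompactSupport gR := by
    have : HasCompactSupport (fun t : ℝ => b (t / R)) := by
      have := hbs.comp_homeomorph (Homeomorph.mulRight₀ R⁻¹ (inv_ne_zero hR0))
      simpa [Function.comp_def, div_eq_mul_inv] using this
    exact this.mul_left
  have igR : Integrable gR := cgR.integrable_of_hasCompactSupport sgR
  have hdiff : ∀ u, ‖K u - 𝓕 gR u‖ ≤ ε * W u := by
    intro u
    have e : K u - 𝓕 gR u = 𝓕 (h R) u := by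
      rw [← hgK]
      simp only [Real.fourier_real_eq_integral_exp_smul]
      rw [← integral_sub]
      · congr 1; ext t
        simp only [smul_eq_mul, gR, h]; ring
      · refine ig.bdd_mul (c := 1) (Continuous.aestronglyMeasurable (by fun_prop))
          (Eventually.of_forall fun t => ?_)
        rw [Complex.norm_exp_ofReal_mul_I]
      · refine igR.bdd_mul (c := 1) (Continuous.aestronglyMeasurable (by fun_prop))
          (Eventually.of_forall fun t => ?_)
        rw [Complex.norm_exp_ofReal_mul_I]
    rw [e]
    refine (fourier_bound (hh1 R) (hh2 R) (ih R hR) (ih1 R hR) (ih2 R hR) u).trans ?_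
    exact mul_le_mul_of_nonneg_right hRε.le (W_pos u).le
  have hFb : ∀ u, ‖𝓕 gR u‖ ≤ (((∫ t, ‖g t‖) + ∫ t, ‖g2 t‖) + ε) * W u := by
    intro u
    have := norm_sub_le (K u) (K u - 𝓕 gR u)
    rw [sub_sub_cancel] at this
    linarith [hKb u, hdiff u]
  exact ⟨𝓕 gR, good_fourier cgR sgR hFb, fourier_cont igR, hdiff⟩

/-- The target kernel. -/
noncomputable def K0 (u : ℝ) : ℝ := Real.exp (3 * u - Real.exp u)

lemma K0_pos (u : ℝ) : 0 < K0 u := Real.exp_pos _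

lemma K0_cont : Continuous K0 := by unfold K0; fun_prop

lemma K0_bound : ∃ C : ℝ, 0 < C ∧ ∀ u, (1 + |u|) * K0 u ≤ C * W u := by
  refine ⟨6 * Real.exp 1 * 24, by positivity, fun u => ?_⟩
  rw [W, ← div_eq_mul_inv, le_div_iff₀ (by positivity)]
  have h1 : (1 + |u|) * (1 + u ^ 2) ≤ 6 * Real.exp (1 + |u|) := by
    have a := Real.pow_div_factorial_le_exp (1 + |u|) (by positivity) 3
    have b : (1 + |u|) * (1 + u ^ 2) ≤ (1 + |u|) ^ 3 := by
      rw [← sq_abs u]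
      nlinarith [abs_nonneg u, sq_nonneg (|u|), mul_nonneg (abs_nonneg u) (sq_nonneg |u|)]
    simp [Nat.factorial] at a
    linarith
  have h2 : Real.exp |u| * K0 u ≤ 24 := by
    rw [K0, ← Real.exp_add]
    rcases le_total 0 u with hu | hu
    · rw [abs_of_nonneg hu]
      have a := Real.pow_div_factorial_le_exp (Real.exp u) (Real.exp_pos u).le 4
      rw [show u + (3 * u - Real.exp u) = (4:ℕ) * u - Real.exp u by push_cast; ring, Real.exp_sub,
        Real.exp_nat_mul, div_le_iff₀ (Real.exp_pos _)]
      simp [Nat.factorial] at a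
      linarith
    · rw [abs_of_nonpos hu]
      have : Real.exp (-u + (3 * u - Real.exp u)) ≤ 1 := by
        apply Real.exp_le_one_iff.2
        linarith [Real.exp_pos u]
      linarith
  calc (1 + |u|) * K0 u * (1 + u ^ 2) = ((1 + |u|) * (1 + u ^ 2)) * K0 u := by ring
    _ ≤ 6 * Real.exp (1 + |u|) * K0 u := mul_le_mul_of_nonneg_right h1 (K0_pos u).le
    _ = 6 * Real.exp 1 * (Real.exp |u| * K0 u) := by rw [Real.exp_add]; ring
    _ ≤ _ := by gcongr

lemma K0_integral : ∫ u, K0 u = 2 := by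
  obtain ⟨C, hC, hb⟩ := K0_bound
  have hi : Integrable K0 := by
    refine (W_int.const_mul C).mono' K0_cont.aestronglyMeasurable (Eventually.of_forall fun u => ?_)
    rw [Real.norm_of_nonneg (K0_pos u).le]
    nlinarith [hb u, K0_pos u, abs_nonneg u, mul_nonneg (abs_nonneg u) (K0_pos u).le]
  let P : ℝ → ℝ := fun v => -((v ^ 2 + 2 * v + 2) * Real.exp (-v))
  have hP : ∀ v, HasDerivAt P (v ^ 2 * Real.exp (-v)) v := by
    intro v
    have h1 : HasDerivAt (fun v : ℝ => v ^ 2 + 2 * v + 2) (2 * v + 2) v := by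
      have := (((hasDerivAt_id v).pow 2).add ((hasDerivAt_id v).const_mul 2)).add_const (2:ℝ)
      simpa using this
    have h2 : HasDerivAt (fun v : ℝ => Real.exp (-v)) (-Real.exp (-v)) v := by
      simpa using (hasDerivAt_neg v).exp
    refine (h1.mul h2).neg.congr_deriv ?_
    ring
  have hd : ∀ u, HasDerivAt (fun u => P (Real.exp u)) (K0 u) u := by
    intro u
    refine ((hP (Real.exp u)).comp u (Real.hasDerivAt_exp u)).congr_deriv ?_
    rw [K0, Real.exp_sub, show 3 * u = (3:ℕ) * u by norm_num, Real.exp_nat_mul, Real.exp_neg]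
    field_simp
  have hbot : Tendsto (fun u => P (Real.exp u)) atBot (𝓝 (-2)) := by
    have hc : Continuous P := by simp only [P]; fun_prop
    have := (hc.tendsto 0).comp Real.tendsto_exp_atBot
    have h0 : P 0 = -2 := by simp [P]
    rw [h0] at this
    exact this
  have htop : Tendsto (fun u => P (Real.exp u)) atTop (𝓝 0) := by
    have h : Tendsto P atTop (𝓝 0) := by
      have a := Real.tendsto_pow_mul_exp_neg_atTop_nhds_zero 2
      have b := (Real.tendsto_pow_mul_exp_neg_atTop_nhds_zero 1).const_mul 2
      have c := (Real.tendsto_pow_mul_exp_neg_atTop_nhds_zero 0).const_mul 2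
      have := ((a.add b).add c).neg
      simp only [mul_zero, add_zero, neg_zero] at this
      refine this.congr fun v => ?_
      simp only [P]; ring
    exact h.comp Real.tendsto_exp_atTop
  have := integral_of_hasDerivAt_of_tendsto hd hi hbot htop
  rw [this]; norm_num

lemma K0_good : Tendsto (fun y : ℝ => ∑' n : ℕ, wt n * K0 (Real.log n - y)) atTop (𝓝 2) := by
  obtain ⟨C, hC, hb⟩ := K0_bound
  obtain ⟨b, b1, b2, B, hbd, hbs, -, -, -, -, -, -, hone, hle⟩ := exists_cutoff
  have hbc := hbd.continuous
  have hcont : Continuous (fun u => (K0 u : ℂ)) := Complex.continuous_ofReal.comp K0_cont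
  have hsm : ContDiff ℝ (⊤ : ℕ∞) (fun u => (K0 u : ℂ)) := by
    refine Complex.ofRealCLM.contDiff.comp (g := fun x : ℝ => (x:ℂ)) (f := K0) ?_
    unfold K0; fun_prop
  have hK : ∀ u, ‖(K0 u : ℂ)‖ ≤ C * W u := by
    intro u
    rw [Complex.norm_real, Real.norm_of_nonneg (K0_pos u).le]
    nlinarith [hb u, K0_pos u, abs_nonneg u, mul_nonneg (abs_nonneg u) (K0_pos u).le]
  have hG : Good (fun u => (K0 u : ℂ)) := by
    refine Good.of_approx hcont hK fun ε hε => ?_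
    let R : ℝ := C / ε
    have hR : 0 < R := by positivity
    refine ⟨fun u => (K0 u : ℂ) * b (u / R), good_smooth ?_ ?_, by fun_prop, ?_⟩
    · exact hsm.mul (hbd.comp (contDiff_id.div_const R))
    · have : HasCompactSupport (fun t : ℝ => b (t / R)) := by
        have := hbs.comp_homeomorph (Homeomorph.mulRight₀ R⁻¹ (inv_ne_zero hR.ne'))
        simpa [Function.comp_def, div_eq_mul_inv] using this
      exact this.mul_left
    · intro u
      rw [show (K0 u : ℂ) - K0 u * b (u / R) = K0 u * (1 - b (u / R)) by ring, norm_mul]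
      by_cases hu : |u / R| < 1
      · rw [(hone _ hu).1]
        simpa using mul_nonneg hε.le (W_pos u).le
      · refine (mul_le_of_le_one_right (norm_nonneg _) (hle _)).trans ?_
        rw [Complex.norm_real, Real.norm_of_nonneg (K0_pos u).le]
        rw [abs_div, abs_of_pos hR, div_lt_one hR, not_lt] at hu
        have h1 : R * K0 u ≤ C * W u := by
          nlinarith [hb u, K0_pos u]
        simp only [R] at h1
        rw [div_mul_eq_mul_div, div_le_iff₀ hε] at h1
        have : C * K0 u ≤ C * (ε * W u) := by linarith
        exact le_of_mul_le_mul_left this hC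
  unfold Good at hG
  rw [integral_complex_ofReal, K0_integral] at hG
  have := (Complex.continuous_re.tendsto _).comp hG
  refine Tendsto.congr (fun y => ?_) (by simpa using this)
  rw [Function.comp_apply, show ∑' n : ℕ, (wt n : ℂ) * (K0 (Real.log n - y) : ℂ) =
    ((∑' n : ℕ, wt n * K0 (Real.log n - y) : ℝ) : ℂ) by push_cast; rfl, Complex.ofReal_re]

lemma W_le_one (u : ℝ) : W u ≤ 1 := by
  unfold W
  apply inv_le_one_of_one_le₀
  nlinarith [sq_nonneg u]

lemma W_tendsto (a : ℝ) : Tendsto (fun y : ℝ => W (a - y)) atTop (𝓝 0) := by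
  unfold W
  apply Tendsto.inv_tendsto_atTop
  apply tendsto_atTop_add_const_left
  have h : Tendsto (fun y : ℝ => y - a) atTop atTop := tendsto_atTop_add_const_right _ _ tendsto_id
  refine ((tendsto_pow_atTop (two_ne_zero)).comp h).congr fun y => ?_
  simp only [Function.comp_apply]; ring

lemma claimA {r : ℕ → ℝ} (hr : Summable r) (h0 : ∀ n, 0 ≤ r n) :
    Tendsto (fun y : ℝ => ∑' n : ℕ, r n * W (Real.log n - y)) atTop (𝓝 0) := by
  have : Tendsto (fun y : ℝ => ∑' n : ℕ, r n * W (Real.log n - y)) atTop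
      (𝓝 (∑' _ : ℕ, (0 : ℝ))) := tendsto_tsum_of_dominated_convergence hr
    (fun n => by simpa using (W_tendsto (Real.log n)).const_mul (r n))
    (Eventually.of_forall fun y n => by
      rw [Real.norm_of_nonneg (mul_nonneg (h0 n) (W_pos _).le)]
      exact mul_le_of_le_one_right (h0 n) (W_le_one _))
  simpa using this

lemma claimB {β : ℕ → ℝ} (h0 : ∀ n, 0 ≤ β n) {B : ℝ} (hB : ∀ n, β n ≤ B)
    (hβ : Tendsto β atTop (𝓝 0)) :
    Tendsto (fun y : ℝ => ∑' n : ℕ, wt n * β n * W (Real.log n - y)) atTop (𝓝 0) := by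
  have hnn : ∀ (y : ℝ) (n : ℕ), 0 ≤ wt n * β n * W (Real.log n - y) := fun y n =>
    mul_nonneg (mul_nonneg (wt_nonneg n) (h0 n)) (W_pos _).le
  rw [Metric.tendsto_nhds]
  intro ε hε
  have hD : 0 < CC + 1 := by linarith [CC_nonneg]
  obtain ⟨N, hN⟩ := eventually_atTop.1 (hβ.eventually (gt_mem_nhds
    (show 0 < ε / 2 / (CC + 1) by positivity)))
  set η := ε / 2 / (CC + 1) with hη
  have hfin : Tendsto (fun y : ℝ => ∑ n ∈ Finset.range N, wt n * β n * W (Real.log n - y)) atTop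
      (𝓝 0) := by
    have := tendsto_finsetSum (Finset.range N) (fun n _ =>
      (W_tendsto (Real.log n)).const_mul (wt n * β n))
    simpa using this
  filter_upwards [hfin.eventually (gt_mem_nhds (show 0 < ε / 2 by positivity))] with y hy
  rw [Real.dist_eq, sub_zero, abs_of_nonneg (tsum_nonneg (hnn y))]
  have hle : ∑' n : ℕ, wt n * β n * W (Real.log n - y) ≤
      (∑ n ∈ Finset.range N, wt n * β n * W (Real.log n - y)) + η * CC := by
    refine Real.tsum_le_of_sum_le (hnn y) fun F => ?_
    have : ∀ n ∈ F, wt n * β n * W (Real.log n - y) ≤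
        (if n ∈ Finset.range N then wt n * β n * W (Real.log n - y) else 0) +
          η * (wt n * W (Real.log n - y)) := by
      intro n _
      have hp := mul_nonneg (wt_nonneg n) (W_pos (Real.log n - y)).le
      have hη0 : 0 < η := by positivity
      split_ifs with h
      · nlinarith
      · have : β n < η := hN n (by simpa using h)
        nlinarith
    refine (Finset.sum_le_sum this).trans ?_
    rw [Finset.sum_add_distrib, ← Finset.mul_sum]
    refine add_le_add ?_ (mul_le_mul_of_nonneg_left (fin_sum_W F y) (by positivity))
    rw [← Finset.sum_filter]
    exact Finset.sum_le_sum_of_subset_of_nonneg (fun n hn => (Finset.mem_filter.1 hn).2)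
      (fun n _ _ => hnn y n)
  have : η * (CC + 1) = ε / 2 := by rw [hη]; field_simp
  have hη0 : 0 < η := by positivity
  nlinarith

/-- The part of the weights that is not supported on odd primes. -/
noncomputable def rr (n : ℕ) : ℝ := if n.Prime ∧ Odd n then 0 else wt n

lemma rr_nonneg (n : ℕ) : 0 ≤ rr n := by
  unfold rr; split_ifs
  · exact le_rfl
  · exact wt_nonneg n

lemma rr_summable : Summable rr := by
  have h := ArithmeticFunction.vonMangoldt.summable_residueClass_non_primes_div (q := 1) 1
  have h1 : ∀ n : ℕ, (n : ZMod 1) = 1 := fun n => Subsingleton.elim _ _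
  have h2 : Summable (fun n : ℕ => if n = 2 then wt 2 else 0) :=
    (hasSum_ite_eq 2 (wt 2)).summable
  refine (h.add h2).congr fun n => ?_
  by_cases hp : n.Prime
  · rcases hp.eq_two_or_odd' with rfl | ho
    · simp [rr, hp]
    · have : n ≠ 2 := by rintro rfl; exact absurd ho (by decide)
      simp [rr, hp, ho, this]
  · have : n ≠ 2 := by rintro rfl; exact hp Nat.prime_two
    simp [rr, hp, this, h1, wt, ArithmeticFunction.vonMangoldt.residueClass]

/-- The summand over odd primes. -/
noncomputable def ss (y : ℝ) (n : ℕ) : ℝ :=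
  if n.Prime ∧ Odd n then (1 - 1 / (n:ℝ)) * (y / n) * K0 (Real.log n - y) else 0

lemma ss_diff {C : ℝ} (hb : ∀ u, (1 + |u|) * K0 u ≤ C * W u) (y : ℝ) (n : ℕ) :
    ‖ss y n - wt n * K0 (Real.log n - y)‖ ≤ C * (rr n * W (Real.log n - y) +
      wt n * (1 / Real.log n) * W (Real.log n - y)) := by
  set u := Real.log n - y with hu
  have hK := K0_pos u
  have hW := W_pos u
  have hKW : K0 u ≤ C * W u := by
    nlinarith [hb u, mul_nonneg (abs_nonneg u) hK.le]
  have hC : 0 ≤ C := by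
    by_contra hneg
    push Not at hneg
    nlinarith [mul_pos_of_neg_of_neg hneg (neg_neg_of_pos hW)]
  have hl : 0 ≤ wt n * (1 / Real.log n) * W u :=
    mul_nonneg (mul_nonneg (wt_nonneg n) (one_div_nonneg.2 (Real.log_natCast_nonneg n))) hW.le
  by_cases h : n.Prime ∧ Odd n
  · have hn0 : (0:ℝ) < n := by exact_mod_cast h.1.pos
    have hlog : 0 < Real.log n := Real.log_pos (by exact_mod_cast h.1.one_lt)
    have hlogn : Real.log n ≤ n := (Real.log_le_self hn0.le)
    have hwt : wt n = Real.log n / n := by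
      rw [wt, ArithmeticFunction.vonMangoldt_apply_prime h.1]
    have hy : y = Real.log n - u := by rw [hu]; ring
    have e : ss y n - wt n * K0 u = -((1 - 1 / (n:ℝ)) * (u / n) + (1 / n) * (Real.log n / n)) * K0 u := by
      rw [ss, if_pos h, ← hu, hwt, hy]
      field_simp
      ring
    have e2 : wt n * (1 / Real.log n) = 1 / n := by
      rw [hwt]; field_simp
    rw [e, rr, if_pos h, zero_mul, zero_add, e2, norm_mul, norm_neg, Real.norm_of_nonneg hK.le]
    have hn1 : (1:ℝ) ≤ n := by exact_mod_cast h.1.one_lt.le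
    have i1 : |1 - 1 / (n:ℝ)| ≤ 1 := by
      have : 1 / (n:ℝ) ≤ 1 := by rw [div_le_one hn0]; exact hn1
      have : 0 ≤ 1 / (n:ℝ) := by positivity
      rw [abs_le]; constructor <;> linarith
    have b1 : ‖(1 - 1 / (n:ℝ)) * (u / n) + (1 / n) * (Real.log n / n)‖ ≤ (1 / n) * (1 + |u|) := by
      refine (norm_add_le _ _).trans ?_
      rw [norm_mul, norm_mul, Real.norm_eq_abs, Real.norm_eq_abs, Real.norm_eq_abs, Real.norm_eq_abs,
        abs_div u, abs_of_pos hn0, abs_of_nonneg (show 0 ≤ 1 / (n:ℝ) by positivity),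
        abs_of_nonneg (show 0 ≤ Real.log n / n by positivity)]
      have c1 : |1 - 1 / (n:ℝ)| * (|u| / n) ≤ |u| / n := mul_le_of_le_one_left (by positivity) i1
      have c2 : 1 / (n:ℝ) * (Real.log n / n) ≤ 1 / n := by
        apply mul_le_of_le_one_right (by positivity)
        rw [div_le_one hn0]; exact hlogn
      have : (1 / (n:ℝ)) * (1 + |u|) = 1 / n + |u| / n := by ring
      linarith
    calc _ ≤ (1 / (n:ℝ)) * (1 + |u|) * K0 u := mul_le_mul_of_nonneg_right b1 hK.le
      _ = (1 / (n:ℝ)) * ((1 + |u|) * K0 u) := by ring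
      _ ≤ (1 / (n:ℝ)) * (C * W u) := mul_le_mul_of_nonneg_left (hb u) (by positivity)
      _ = _ := by ring
  · rw [ss, if_neg h, rr, if_neg h, zero_sub, norm_neg,
      Real.norm_of_nonneg (mul_nonneg (wt_nonneg n) hK.le)]
    have : wt n * K0 u ≤ wt n * (C * W u) := mul_le_mul_of_nonneg_left hKW (wt_nonneg n)
    nlinarith [mul_nonneg hC hl]

lemma ss_tendsto : Tendsto (fun y : ℝ => ∑' n : ℕ, ss y n) atTop (𝓝 2) := by
  obtain ⟨C, hC, hb⟩ := K0_bound
  have hβ0 : ∀ n : ℕ, 0 ≤ 1 / Real.log n := fun n => one_div_nonneg.2 (Real.log_natCast_nonneg n)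
  have hβ : Tendsto (fun n : ℕ => 1 / Real.log n) atTop (𝓝 0) := by
    simp only [one_div]
    exact (Real.tendsto_log_atTop.comp tendsto_natCast_atTop_atTop).inv_tendsto_atTop
  have hβB : ∀ n : ℕ, 1 / Real.log n ≤ 1 / Real.log 2 := by
    intro n
    have h2 : 0 < Real.log 2 := Real.log_pos (by norm_num)
    rcases Nat.lt_or_ge n 2 with h | h
    · interval_cases n <;> simp <;> positivity
    · exact one_div_le_one_div_of_le h2 (Real.log_le_log (by norm_num) (by exact_mod_cast h))
  have A := claimA rr_summable rr_nonneg
  have B := claimB hβ0 hβB hβ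
  have AB := (A.add B).const_mul C
  simp only [add_zero, mul_zero] at AB
  have sA : ∀ y, Summable (fun n : ℕ => rr n * W (Real.log n - y)) := fun y =>
    Summable.of_nonneg_of_le (fun n => mul_nonneg (rr_nonneg n) (W_pos _).le)
      (fun n => mul_le_of_le_one_right (rr_nonneg n) (W_le_one _)) rr_summable
  have sB : ∀ y, Summable (fun n : ℕ => wt n * (1 / Real.log n) * W (Real.log n - y)) := fun y =>
    Summable.of_nonneg_of_le
      (fun n => mul_nonneg (mul_nonneg (wt_nonneg n) (hβ0 n)) (W_pos _).le)
      (fun n => by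
        have := mul_le_mul_of_nonneg_left (hβB n) (mul_nonneg (wt_nonneg n) (W_pos (Real.log n - y)).le)
        linarith) ((summable_W y).mul_right (1 / Real.log 2))
  have sD : ∀ y, Summable (fun n : ℕ => C * (rr n * W (Real.log n - y) +
      wt n * (1 / Real.log n) * W (Real.log n - y))) := fun y => ((sA y).add (sB y)).mul_left C
  have sK : ∀ y, Summable (fun n : ℕ => wt n * K0 (Real.log n - y)) := fun y =>
    Summable.of_nonneg_of_le (fun n => mul_nonneg (wt_nonneg n) (K0_pos _).le)
      (fun n => by
        have h1 : K0 (Real.log n - y) ≤ C * W (Real.log n - y) := by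
          nlinarith [hb (Real.log n - y), mul_nonneg (abs_nonneg (Real.log n - y))
            (K0_pos (Real.log n - y)).le]
        have := mul_le_mul_of_nonneg_left h1 (wt_nonneg n)
        linarith) ((summable_W y).mul_left C)
  have sdiff : ∀ y, Summable (fun n : ℕ => ss y n - wt n * K0 (Real.log n - y)) := fun y =>
    Summable.of_norm_bounded (sD y) (ss_diff hb y)
  have lim0 : Tendsto (fun y : ℝ => ∑' n : ℕ, (ss y n - wt n * K0 (Real.log n - y))) atTop (𝓝 0) := by
    refine squeeze_zero_norm (fun y => ?_) AB
    refine (tsum_of_norm_bounded (sD y).hasSum (ss_diff hb y)).trans (le_of_eq ?_)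
    rw [tsum_mul_left, (sA y).tsum_add (sB y)]
  have := lim0.add K0_good
  rw [zero_add] at this
  refine this.congr fun y => ?_
  rw [← (sdiff y).tsum_add (sK y)]
  congr 1; ext n; ring

lemma fOdd_eq {z : ℝ} (hz0 : 0 < z) (hz1 : z < 1) :
    (-Real.log (-Real.log z)) * fOdd'' z =
      (z ^ 2)⁻¹ * ((-Real.log z) ^ 3)⁻¹ * ∑' n : ℕ, ss (-Real.log (-Real.log z)) n := by
  set y := -Real.log (-Real.log z) with hy
  have hl : 0 < -Real.log z := by linarith [Real.log_neg hz0 hz1]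
  have hey : Real.exp (-y) = -Real.log z := by rw [hy, neg_neg, Real.exp_log hl]
  rw [fOdd'', ← tsum_mul_left, ← tsum_mul_left]
  congr 1; ext n
  unfold ss
  by_cases h : n.Prime ∧ Odd n
  · rw [if_pos h, if_pos h]
    have hn0 : (0:ℝ) < n := by exact_mod_cast h.1.pos
    have e1 : Real.exp (Real.log n - y) = n * (-Real.log z) := by
      rw [sub_eq_add_neg, Real.exp_add, Real.exp_log hn0, hey]
    have e2 : K0 (Real.log n - y) = n ^ 3 * (-Real.log z) ^ 3 * z ^ n := by
      rw [K0, sub_eq_add_neg, Real.exp_add, show 3 * (Real.log n - y) = (3:ℕ) * (Real.log n - y) by norm_num,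
        Real.exp_nat_mul, e1, show -(n * (-Real.log z)) = n * Real.log z by ring, Real.exp_nat_mul,
        Real.exp_log hz0]
      ring
    have e3 : z ^ n = z ^ (n - 2) * z ^ 2 := by
      rw [← pow_add, Nat.sub_add_cancel h.1.two_le]
    rw [e2, e3]
    have hl' := hl.ne'
    have hlz : Real.log z ≠ 0 := (Real.log_neg hz0 hz1).ne
    field_simp
  · rw [if_neg h, if_neg h]; simp

end PNTaux

/-- `f″(z) ~ 2/((1−z)³·log(1/(1−z)))` as `z → 1⁻`. -/
theorem fOdd''_asymptotic :
    Tendsto (fun z : ℝ => fOdd'' z * ((1 - z) ^ 3 * Real.log (1 / (1 - z))))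
      (𝓝[<] 1) (𝓝 2) := by
  have hev : ∀ᶠ z : ℝ in 𝓝[<] 1, z ∈ Set.Ioo (1/2 : ℝ) 1 := Ioo_mem_nhdsLT (by norm_num)
  -- `-log z → 0+`
  have hlog0 : Tendsto (fun z : ℝ => -Real.log z) (𝓝[<] 1) (𝓝[>] 0) := by
    apply tendsto_nhdsWithin_iff.2 ⟨?_, ?_⟩
    · have : Tendsto (fun z : ℝ => -Real.log z) (𝓝 1) (𝓝 (-Real.log 1)) :=
        (Real.continuousAt_log (one_ne_zero)).neg.tendsto
      rw [Real.log_one, neg_zero] at this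
      exact this.mono_left nhdsWithin_le_nhds
    · filter_upwards [hev] with z hz
      have := Real.log_neg (by linarith [hz.1]) hz.2
      simpa using this
  have hy : Tendsto (fun z : ℝ => -Real.log (-Real.log z)) (𝓝[<] 1) atTop :=
    tendsto_neg_atBot_atTop.comp (Real.tendsto_log_nhdsGT_zero.comp hlog0)
  -- ratio
  have hratio : Tendsto (fun z : ℝ => (1 - z) / (-Real.log z)) (𝓝[<] 1) (𝓝 1) := by
    have h1 : HasDerivAt Real.log 1 1 := by simpa using Real.hasDerivAt_log (one_ne_zero)
    have h2 := h1.tendsto_slope.mono_left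
      (nhdsWithin_mono 1 (fun z (hz : z < 1) => ne_of_lt hz) : 𝓝[<] (1:ℝ) ≤ 𝓝[≠] 1)
    have h3 := h2.inv₀ one_ne_zero
    rw [inv_one] at h3
    refine h3.congr fun z => ?_
    rw [slope_def_field, Real.log_one, sub_zero, inv_div, ← neg_div_neg_eq]
    ring
  have hlr : Tendsto (fun z : ℝ => Real.log ((1 - z) / (-Real.log z))) (𝓝[<] 1) (𝓝 0) := by
    have := hratio.log one_ne_zero
    simpa using this
  have hq : Tendsto (fun z : ℝ => Real.log (1 / (1 - z)) / (-Real.log (-Real.log z))) (𝓝[<] 1) (𝓝 1) := by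
    have h1 : Tendsto (fun z : ℝ => 1 - Real.log ((1 - z) / (-Real.log z)) / (-Real.log (-Real.log z)))
        (𝓝[<] 1) (𝓝 1) := by
      simpa using (hlr.div_atTop hy).const_sub 1
    refine h1.congr' ?_
    filter_upwards [hev, hy.eventually_gt_atTop 0] with z hz hpos
    have hl : 0 < -Real.log z := by
      linarith [Real.log_neg (by linarith [hz.1]) hz.2]
    have hz1 : 0 < 1 - z := by linarith [hz.2]
    rw [Real.log_div hz1.ne' hl.ne', one_div, Real.log_inv, eq_div_iff hpos.ne', sub_mul,
      div_mul_cancel₀ _ hpos.ne']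
    ring
  have hz2 : Tendsto (fun z : ℝ => (z ^ 2)⁻¹) (𝓝[<] 1) (𝓝 1) := by
    have : ContinuousAt (fun z : ℝ => (z ^ 2)⁻¹) 1 :=
      ContinuousAt.inv₀ (by fun_prop) (by norm_num)
    have := this.tendsto.mono_left (nhdsWithin_le_nhds (s := Set.Iio (1:ℝ)))
    simpa using this
  have hS := PNTaux.ss_tendsto.comp hy
  have hall := ((hz2.mul (hratio.pow 3)).mul hq).mul hS
  simp only [one_pow, mul_one, one_mul] at hall
  refine hall.congr' ?_
  filter_upwards [hev, hy.eventually_gt_atTop 0] with z hz hpos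
  have hl : 0 < -Real.log z := by
    linarith [Real.log_neg (by linarith [hz.1]) hz.2]
  have key := PNTaux.fOdd_eq (by linarith [hz.1]) hz.2
  have e : fOdd'' z = ((z ^ 2)⁻¹ * ((-Real.log z) ^ 3)⁻¹ *
      ∑' n : ℕ, PNTaux.ss (-Real.log (-Real.log z)) n) / (-Real.log (-Real.log z)) := by
    rw [eq_div_iff hpos.ne', ← key, mul_comm]
  rw [e, Function.comp_apply, div_pow]
  simp only [div_eq_mul_inv]
  ring
end

section
/- Let Q₂(2k) denote the number of Goldbach partitions of the even integer 2k. For every fixed u with 0 < u < 1, the ratio (Σ_{2<k≤un} Q₂(2k)) / (Σ_{2<k≤n} Q₂(2k)) tends to u² as n → ∞. Equivalently, if 2Gₙ is the even number chosen by a uniformly random Goldbach partition of an even integer in (4, 2n], then Gₙ/n converges weakly to the maximum of two independent uniform-(0,1) random variables. -/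
open Filter Topology Asymptotics MeasureTheory

open ArithmeticFunction in
lemma gb_LSeries (s : ℂ) (hs : 1 < s.re) :
    vonMangoldt.LFunctionResidueClassAux (1 : ZMod 1) s + 1 / (s - 1) =
      s * ∫ t in Set.Ioi (1 : ℝ), (Chebyshev.psi t : ℂ) * (t : ℂ) ^ (-(s + 1)) := by
  have h1 := vonMangoldt.eqOn_LFunctionResidueClassAux (q := 1) (a := 1) isUnit_one hs
  have hrc : ∀ n, vonMangoldt.residueClass (1 : ZMod 1) n = vonMangoldt n := by
    intro n
    unfold vonMangoldt.residueClass
    rw [Set.indicator_of_mem]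
    exact Subsingleton.elim _ _
  simp only [hrc] at h1
  rw [h1]
  simp only [Nat.totient_one, Nat.cast_one, inv_one, sub_add_cancel]
  have hsum : ∀ n : ℕ, ∑ k ∈ Finset.Icc 1 n, vonMangoldt k = Chebyshev.psi n := by
    intro n
    rw [Chebyshev.psi_eq_sum_Icc, Nat.floor_natCast,
      ← Finset.add_sum_Ioc_eq_sum_Icc (Nat.zero_le n)]
    simp
    rfl
  rw [LSeries_eq_mul_integral_of_nonneg (fun n => vonMangoldt n) (r := 1) zero_le_one hs ?_
    (fun n => vonMangoldt_nonneg)]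
  · congr 1
    refine integral_congr_ae ?_
    filter_upwards with t
    rw [Chebyshev.psi_eq_psi_coe_floor, ← hsum]
    push_cast
    rfl
  · refine IsBigO.of_bound (Real.log 4 + 4) ?_
    filter_upwards with n
    rw [hsum, Real.norm_eq_abs, abs_of_nonneg (Chebyshev.psi_nonneg _), Real.rpow_one, Real.norm_eq_abs,
      Nat.abs_cast]
    exact Chebyshev.psi_le_const_mul_self (Nat.cast_nonneg n)

noncomputable def gbB (t : ℝ) : ℝ := Chebyshev.psi (Real.exp t) * Real.exp (-t)

lemma gbB_nonneg (t : ℝ) : 0 ≤ gbB t := mul_nonneg (Chebyshev.psi_nonneg _) (Real.exp_pos _).le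

lemma gbB_le (t : ℝ) : gbB t ≤ Real.log 4 + 4 := by
  unfold gbB
  rw [Real.exp_neg, ← div_eq_mul_inv, div_le_iff₀ (Real.exp_pos t)]
  exact Chebyshev.psi_le_const_mul_self (Real.exp_pos t).le

lemma gbB_meas : Measurable gbB :=
  (Chebyshev.psi_mono.measurable.comp Real.measurable_exp).mul (Real.measurable_exp.comp measurable_neg)

lemma gbB_growth {s t : ℝ} (h : s ≤ t) : gbB s * Real.exp (-(t - s)) ≤ gbB t := by
  unfold gbB
  rw [mul_assoc, ← Real.exp_add]
  have : -s + -(t - s) = -t := by ring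
  rw [this]
  gcongr

lemma gbB_neg {t : ℝ} (h : t ≤ 0) : gbB t = 0 := by
  unfold gbB
  rw [Chebyshev.psi_eq_zero_of_le_one (Real.exp_le_one_iff.2 h), zero_mul]

noncomputable def gbG (z : ℂ) : ℂ :=
  (ArithmeticFunction.vonMangoldt.LFunctionResidueClassAux (1 : ZMod 1) (1 + z) - 1) / (1 + z)

lemma gbG_cont : ContinuousOn gbG {z | 0 ≤ z.re} := by
  unfold gbG
  refine ContinuousOn.div (ContinuousOn.sub ?_ continuousOn_const) (by fun_prop) ?_
  · refine (ArithmeticFunction.vonMangoldt.continuousOn_LFunctionResidueClassAux (1 : ZMod 1)).comp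
      (by fun_prop) ?_
    intro z hz
    simpa using hz
  · intro z hz h0
    have := congrArg Complex.re h0
    simp at this
    have hz' : 0 ≤ z.re := hz
    linarith

lemma gb_laplace (z : ℂ) (hz : 0 < z.re) :
    ∫ t in Set.Ioi (0:ℝ), ((gbB t - 1 : ℝ) : ℂ) * Complex.exp (-z * t) = gbG z := by
  have hB : ∫ t in Set.Ioi (0:ℝ), (gbB t : ℂ) * Complex.exp (-z * t) =
      ∫ t in Set.Ioi (1 : ℝ), (Chebyshev.psi t : ℂ) * (t : ℂ) ^ (-((1 + z) + 1)) := by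
    have := integral_image_eq_integral_abs_deriv_smul (s := Set.Ioi (0:ℝ)) (f := Real.exp) (f' := Real.exp)
      measurableSet_Ioi (fun x _ => (Real.hasDerivAt_exp x).hasDerivWithinAt) Real.exp_injective.injOn
      (fun t : ℝ => (Chebyshev.psi t : ℂ) * (t : ℂ) ^ (-((1 + z) + 1)))
    rw [Real.image_exp_Ioi, Real.exp_zero] at this
    rw [this]
    refine integral_congr_ae ?_
    filter_upwards with t
    simp only [abs_of_pos (Real.exp_pos t), Complex.real_smul, gbB]
    rw [Complex.cpow_def_of_ne_zero (by exact_mod_cast (Real.exp_pos t).ne'), ← Complex.ofReal_log (Real.exp_pos t).le,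
      Real.log_exp]
    push_cast
    have : Complex.exp (-t) * Complex.exp (-z * t) =
        Complex.exp t * Complex.exp (t * -(1 + z + 1)) := by
      rw [← Complex.exp_add, ← Complex.exp_add]
      congr 1
      ring
    linear_combination (Chebyshev.psi (Real.exp t) : ℂ) * this
  have hzre : (-z).re < 0 := by simpa using hz
  have hint0 := integrableOn_exp_mul_complex_Ioi hzre 0
  have hintB : IntegrableOn (fun t : ℝ => (gbB t : ℂ) * Complex.exp (-z * t)) (Set.Ioi 0) := by
    refine Integrable.bdd_mul (c := Real.log 4 + 4) hint0 ?_ ?_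
    · exact (Complex.measurable_ofReal.comp gbB_meas).aestronglyMeasurable
    · filter_upwards with t
      simpa [abs_of_nonneg (gbB_nonneg t)] using gbB_le t
  have hs := gb_LSeries (1 + z) (by simpa using hz)
  rw [← hB] at hs
  have e : ∀ t : ℝ, ((gbB t - 1 : ℝ) : ℂ) * Complex.exp (-z * t) =
      (gbB t : ℂ) * Complex.exp (-z * t) - Complex.exp (-z * t) := by
    intro t
    push_cast
    ring
  simp only [e]
  rw [integral_sub hintB hint0, integral_exp_mul_complex_Ioi hzre]
  have hz0 : z ≠ 0 := by
    rintro rfl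
    simp at hz
  have hz1 : 1 + z ≠ 0 := by
    intro h0
    have := congrArg Complex.re h0
    simp at this
    linarith
  unfold gbG
  rw [add_sub_cancel_left] at hs
  rw [eq_div_iff hz1]
  have : (∫ t in Set.Ioi (0:ℝ), (gbB t : ℂ) * Complex.exp (-z * t)) * (1 + z) =
    ArithmeticFunction.vonMangoldt.LFunctionResidueClassAux (1 : ZMod 1) (1 + z) + 1 / z := by
    rw [hs]; ring
  rw [sub_mul, this]
  simp
  field_simp
  ring

/-- Wiener-type lemma. -/
lemma gb_wiener (A : ℝ → ℝ) (hAm : Measurable A) (C : ℝ) (hA : ∀ t, |A t| ≤ C)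
    (G : ℂ → ℂ) (hG : ContinuousOn G {z | 0 ≤ z.re})
    (hL : ∀ z : ℂ, 0 < z.re → ∫ t in Set.Ioi (0:ℝ), (A t : ℂ) * Complex.exp (-z * t) = G z)
    (φ : ℝ → ℂ) (hφ : Integrable φ) (L : ℝ) (hφL : ∀ y, L < |y| → φ y = 0)
    (h : ℝ → ℂ) (hh : ∀ v : ℝ, v ≠ 0 → ∫ y, φ y * Complex.exp (-(Complex.I * y * v)) = h v)
    (hi : Integrable h) :
    Tendsto (fun T : ℝ => ∫ t in Set.Ioi (0:ℝ), (A t : ℂ) * h (t - T)) atTop (𝓝 0) := by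
  have key1 : ∀ T : ℝ, ∀ ε : ℝ, 0 < ε →
      ∫ t in Set.Ioi (0:ℝ), ((A t : ℂ) * Complex.exp (-(ε:ℂ) * t)) * h (t - T) =
      ∫ y, φ y * Complex.exp (Complex.I * y * T) * G (ε + y * Complex.I) := by
    intro T ε hε
    have hint1 : Integrable (fun t : ℝ => (A t : ℂ) * Complex.exp (-(ε:ℂ) * t))
        (volume.restrict (Set.Ioi 0)) := by
      refine Integrable.bdd_mul (c := C) (integrableOn_exp_mul_complex_Ioi (by simpa using hε) 0) ?_ ?_
      · exact (Complex.measurable_ofReal.comp hAm).aestronglyMeasurable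
      · filter_upwards with t
        simpa using hA t
    have hint2 : Integrable (Function.uncurry fun (t : ℝ) (y : ℝ) =>
        ((A t : ℂ) * Complex.exp (-(ε:ℂ) * t)) * (φ y * Complex.exp (-(Complex.I * y * (t - T)))))
        ((volume.restrict (Set.Ioi 0)).prod volume) := by
      have h1 := hint1.mul_prod hφ
      have h2 : Integrable (fun z : ℝ × ℝ => Complex.exp (-(Complex.I * z.2 * (z.1 - T))) *
          (((A z.1 : ℂ) * Complex.exp (-(ε:ℂ) * z.1)) * φ z.2))
          ((volume.restrict (Set.Ioi 0)).prod volume) := by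
        refine Integrable.bdd_mul (c := 1) h1 ?_ ?_
        · apply Continuous.aestronglyMeasurable
          fun_prop
        · filter_upwards with z
          rw [Complex.norm_exp]
          simp
      refine h2.congr ?_
      filter_upwards with z
      simp only [Function.uncurry]
      ring
    calc ∫ t in Set.Ioi (0:ℝ), ((A t : ℂ) * Complex.exp (-(ε:ℂ) * t)) * h (t - T)
        = ∫ t in Set.Ioi (0:ℝ), ∫ y, ((A t : ℂ) * Complex.exp (-(ε:ℂ) * t)) *
            (φ y * Complex.exp (-(Complex.I * y * (t - T)))) := by
          refine integral_congr_ae ?_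
          have : ∀ᵐ t : ℝ ∂(volume.restrict (Set.Ioi (0:ℝ))), t ≠ T :=
            ae_restrict_of_ae (by simp [ae_iff])
          filter_upwards [this] with t ht
          rw [integral_const_mul, ← hh (t - T) (sub_ne_zero.2 ht)]
          push_cast
          rfl
      _ = ∫ y, ∫ t in Set.Ioi (0:ℝ), ((A t : ℂ) * Complex.exp (-(ε:ℂ) * t)) *
            (φ y * Complex.exp (-(Complex.I * y * (t - T)))) := integral_integral_swap hint2
      _ = _ := by
          refine integral_congr_ae ?_
          filter_upwards with y
          rw [← hL (ε + y * Complex.I) (by simpa using hε), ← integral_const_mul]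
          refine integral_congr_ae ?_
          filter_upwards with t
          have : Complex.exp (-(ε:ℂ) * t) * Complex.exp (-(Complex.I * y * (t - T))) =
            Complex.exp (Complex.I * y * T) * Complex.exp (-(ε + y * Complex.I) * t) := by
            rw [← Complex.exp_add, ← Complex.exp_add]
            congr 1
            ring
          linear_combination (A t : ℂ) * φ y * this
  have key2 : ∀ T : ℝ, ∫ t in Set.Ioi (0:ℝ), (A t : ℂ) * h (t - T) =
      ∫ y, φ y * Complex.exp (Complex.I * y * T) * G (y * Complex.I) := by
    intro T
    have hC : 0 ≤ C := (abs_nonneg _).trans (hA 0)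
    have l1 : Tendsto (fun ε : ℝ => ∫ t in Set.Ioi (0:ℝ),
        ((A t : ℂ) * Complex.exp (-(ε:ℂ) * t)) * h (t - T)) (𝓝[>] 0)
        (𝓝 (∫ t in Set.Ioi (0:ℝ), (A t : ℂ) * h (t - T))) := by
      have hiT : Integrable (fun t => h (t - T)) := hi.comp_sub_right T
      refine tendsto_integral_filter_of_dominated_convergence (fun t => C * ‖h (t - T)‖) ?_ ?_ ?_ ?_
      · filter_upwards with ε
        refine AEStronglyMeasurable.mul (AEStronglyMeasurable.mul ?_ ?_) ?_
        · exact (Complex.measurable_ofReal.comp hAm).aestronglyMeasurable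
        · apply Continuous.aestronglyMeasurable
          fun_prop
        · exact hiT.aestronglyMeasurable.restrict
      · filter_upwards [self_mem_nhdsWithin] with ε hε
        filter_upwards [ae_restrict_mem measurableSet_Ioi] with t ht
        rw [norm_mul, norm_mul, Complex.norm_exp]
        gcongr
        have h1 : ‖(A t : ℂ)‖ ≤ C := by simpa using hA t
        have h2 : Real.exp (-(ε:ℂ) * t).re ≤ 1 := by
          rw [Real.exp_le_one_iff]
          have := mul_pos (Set.mem_Ioi.1 hε) (Set.mem_Ioi.1 ht)
          simp
          linarith
        calc _ ≤ C * 1 := by gcongr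
          _ = C := mul_one _
      · exact (hiT.norm.const_mul C).integrableOn
      · filter_upwards with t
        have : Continuous fun ε : ℝ => ((A t : ℂ) * Complex.exp (-(ε:ℂ) * t)) * h (t - T) := by fun_prop
        have := (this.tendsto 0).mono_left (nhdsWithin_le_nhds (s := Set.Ioi 0))
        simpa using this
    have l2 : Tendsto (fun ε : ℝ => ∫ y, φ y * Complex.exp (Complex.I * y * T) * G (ε + y * Complex.I))
        (𝓝[>] 0) (𝓝 (∫ y, φ y * Complex.exp (Complex.I * y * T) * G (y * Complex.I))) := by
      obtain ⟨M, hM⟩ : ∃ M, ∀ ε ∈ Set.Icc (0:ℝ) 1, ∀ y ∈ Set.Icc (-L) L, ‖G (ε + y * Complex.I)‖ ≤ M := by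
        have hK : IsCompact (Set.Icc (0:ℝ) 1 ×ˢ Set.Icc (-L) L) := isCompact_Icc.prod isCompact_Icc
        have hc : ContinuousOn (fun p : ℝ × ℝ => G (p.1 + p.2 * Complex.I))
            (Set.Icc (0:ℝ) 1 ×ˢ Set.Icc (-L) L) := by
          refine hG.comp (by fun_prop) ?_
          intro p hp
          simpa using hp.1.1
        obtain ⟨M, hM⟩ := hK.exists_bound_of_continuousOn hc
        exact ⟨M, fun ε hε y hy => hM (ε, y) ⟨hε, hy⟩⟩
      have hGc : ∀ ε : ℝ, 0 ≤ ε → Continuous fun y : ℝ => G (ε + y * Complex.I) := by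
        intro ε hε
        refine continuousOn_univ.1 (hG.comp (by fun_prop) ?_)
        intro y _
        simpa using hε
      refine tendsto_integral_filter_of_dominated_convergence (fun y => ‖φ y‖ * M) ?_ ?_ ?_ ?_
      · filter_upwards [self_mem_nhdsWithin] with ε hε
        refine AEStronglyMeasurable.mul (AEStronglyMeasurable.mul hφ.aestronglyMeasurable ?_) ?_
        · apply Continuous.aestronglyMeasurable
          fun_prop
        · exact (hGc ε (le_of_lt hε)).aestronglyMeasurable
      · filter_upwards [Ioo_mem_nhdsGT (show (0:ℝ) < 1 by norm_num)] with ε hε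
        filter_upwards with y
        by_cases hy : L < |y|
        · simp [hφL y hy]
        · have h1 := hM ε ⟨hε.1.le, hε.2.le⟩ y (abs_le.1 (not_lt.1 hy))
          rw [norm_mul, norm_mul, Complex.norm_exp]
          simp only [Complex.mul_re, Complex.I_re, Complex.ofReal_re, Complex.I_im, Complex.ofReal_im,
            Complex.mul_im]
          simp
          gcongr
      · exact hφ.norm.mul_const M
      · filter_upwards with y
        refine Tendsto.const_mul _ ?_
        have h0 : ContinuousWithinAt (fun ε : ℝ => G (ε + y * Complex.I)) (Set.Ici 0) 0 := by
          refine ContinuousWithinAt.comp (t := {z : ℂ | 0 ≤ z.re}) (hG _ (by simp)) (by fun_prop) ?_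
          intro ε hε
          simpa using hε
        have := h0.tendsto.mono_left (nhdsWithin_mono 0 (Set.Ioi_subset_Ici_self))
        simpa using this
    refine tendsto_nhds_unique l1 (l2.congr' ?_)
    filter_upwards [self_mem_nhdsWithin] with ε hε
    exact (key1 T ε hε).symm
  have RL := Real.tendsto_integral_exp_smul_cocompact (fun y : ℝ => φ y * G (y * Complex.I))
  have hT : Tendsto (fun T : ℝ => -(T / (2 * Real.pi))) atTop (cocompact ℝ) := by
    have : Tendsto (fun T : ℝ => -(T / (2 * Real.pi))) atTop atBot :=
      tendsto_neg_atTop_atBot.comp (tendsto_id.atTop_div_const (by positivity))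
    exact this.mono_right atBot_le_cocompact
  refine (RL.comp hT).congr ?_
  intro T
  rw [key2]
  refine integral_congr_ae ?_
  filter_upwards with y
  have : (Real.fourierChar (-(y * -(T / (2 * Real.pi)))) : ℂ) = Complex.exp (Complex.I * y * T) := by
    rw [Real.fourierChar_apply]
    congr 1
    push_cast
    have : (Real.pi : ℂ) ≠ 0 := by exact_mod_cast Real.pi_ne_zero
    field_simp
  simp only [Circle.smul_def, smul_eq_mul, this]
  ring

noncomputable def gbK (w : ℝ) : ℝ := Real.sinc (w / 2) ^ 2

lemma gbK_nonneg (w : ℝ) : 0 ≤ gbK w := sq_nonneg _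

lemma gbK_cont : Continuous gbK := by
  unfold gbK
  exact (Real.continuous_sinc.comp (by fun_prop)).pow 2

lemma gbK_int : Integrable gbK := by
  refine (integrable_inv_one_add_sq.const_mul 5).mono' gbK_cont.aestronglyMeasurable ?_
  filter_upwards with w
  rw [Real.norm_eq_abs, abs_of_nonneg (gbK_nonneg w), ← div_eq_mul_inv, le_div_iff₀ (by positivity)]
  have h1 : gbK w ≤ 1 := by
    unfold gbK
    rw [sq_le_one_iff_abs_le_one]
    exact Real.abs_sinc_le_one _
  have h2 : gbK w * w ^ 2 ≤ 4 := by
    rcases eq_or_ne w 0 with rfl | hw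
    · simp
    · unfold gbK
      rw [Real.sinc_of_ne_zero (by simpa using hw)]
      field_simp
      nlinarith [Real.sin_sq_le_one (w / 2)]
  linarith

lemma gbK_integral_pos : 0 < ∫ w, gbK w := by
  refine (integral_pos_iff_support_of_nonneg gbK_nonneg gbK_int).2 ?_
  refine IsOpen.measure_pos _ (gbK_cont.isOpen_support) ⟨0, ?_⟩
  simp [gbK]

noncomputable def gbTri (y : ℝ) : ℝ := max 0 (1 - |y|)

lemma gbTri_half (c : ℂ) (hc : c ≠ 0) :
    ∫ y in (0:ℝ)..1, (1 - (y:ℂ)) * Complex.exp (c * y) = Complex.exp c / c ^ 2 - 1 / c - 1 / c ^ 2 := by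
  have : ∀ y ∈ Set.uIcc (0:ℝ) 1, HasDerivAt (fun y : ℝ => (1 - (y:ℂ)) * Complex.exp (c * y) / c +
      Complex.exp (c * y) / c ^ 2) ((1 - (y:ℂ)) * Complex.exp (c * y)) y := by
    intro y _
    have h0 : HasDerivAt (fun y : ℝ => (y : ℂ)) 1 y := Complex.ofRealCLM.hasDerivAt
    have h1 : HasDerivAt (fun y : ℝ => Complex.exp (c * y)) (Complex.exp (c * y) * (c * 1)) y :=
      (h0.const_mul c).cexp
    have h2 := (((h0.const_sub 1).mul h1).div_const c).add (h1.div_const (c ^ 2))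
    refine h2.congr_deriv ?_
    field_simp
    ring
  rw [intervalIntegral.integral_eq_sub_of_hasDerivAt this]
  · simp
    ring
  · apply Continuous.intervalIntegrable
    fun_prop

lemma gbTri_hat (v : ℝ) (hv : v ≠ 0) :
    ∫ y, (gbTri y : ℂ) * Complex.exp (-(Complex.I * y * v)) = gbK v := by
  have hc : Continuous fun y : ℝ => (gbTri y : ℂ) * Complex.exp (-(Complex.I * y * v)) := by
    unfold gbTri
    fun_prop
  have e1 : ∫ y, (gbTri y : ℂ) * Complex.exp (-(Complex.I * y * v)) =
      ∫ y in (-1:ℝ)..1, (gbTri y : ℂ) * Complex.exp (-(Complex.I * y * v)) := by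
    rw [intervalIntegral.integral_of_le (by norm_num)]
    refine (setIntegral_eq_integral_of_forall_compl_eq_zero ?_).symm
    intro y hy
    have : gbTri y = 0 := by
      unfold gbTri
      apply max_eq_left
      by_contra hcon
      push Not at hcon
      have := abs_lt.1 (show |y| < 1 by linarith)
      exact hy ⟨this.1, this.2.le⟩
    simp [this]
  rw [e1, ← intervalIntegral.integral_add_adjacent_intervals (b := 0) (hc.intervalIntegrable _ _)
    (hc.intervalIntegrable _ _)]
  have e2 : ∫ y in (0:ℝ)..1, (gbTri y : ℂ) * Complex.exp (-(Complex.I * y * v)) =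
      ∫ y in (0:ℝ)..1, (1 - (y:ℂ)) * Complex.exp ((-(Complex.I * v)) * y) := by
    refine intervalIntegral.integral_congr ?_
    intro y hy
    rw [Set.uIcc_of_le (by norm_num)] at hy
    have : gbTri y = 1 - y := by
      unfold gbTri
      rw [abs_of_nonneg hy.1, max_eq_right (by linarith [hy.2])]
    simp only [this]
    push_cast
    congr 2
    ring
  have e3 : ∫ y in (-1:ℝ)..0, (gbTri y : ℂ) * Complex.exp (-(Complex.I * y * v)) =
      ∫ y in (0:ℝ)..1, (1 - (y:ℂ)) * Complex.exp ((Complex.I * v) * y) := by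
    have := intervalIntegral.integral_comp_neg (a := 0) (b := 1)
      (fun y : ℝ => (gbTri y : ℂ) * Complex.exp (-(Complex.I * y * v)))
    rw [neg_zero] at this
    rw [← this]
    refine intervalIntegral.integral_congr ?_
    intro y hy
    rw [Set.uIcc_of_le (by norm_num)] at hy
    have : gbTri (-y) = 1 - y := by
      unfold gbTri
      rw [abs_neg, abs_of_nonneg hy.1, max_eq_right (by linarith [hy.2])]
    simp only [this]
    push_cast
    congr 2
    ring
  have hv' : (v : ℂ) ≠ 0 := by exact_mod_cast hv
  have hcc : Complex.I * (v:ℂ) ≠ 0 := mul_ne_zero Complex.I_ne_zero hv'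
  rw [e2, e3, gbTri_half _ hcc, gbTri_half _ (neg_ne_zero.2 hcc)]
  unfold gbK
  rw [Real.sinc_of_ne_zero (by simpa using hv)]
  push_cast
  have h1 : Complex.exp (Complex.I * v) + Complex.exp (-(Complex.I * v)) = 2 * Complex.cos v := by
    rw [Complex.two_cos, mul_comm]
    simp
  have h2 : Complex.cos v = 1 - 2 * Complex.sin (v / 2) ^ 2 := by
    have h3 := Complex.cos_two_mul (v / 2 : ℂ)
    rw [mul_div_cancel₀ _ (two_ne_zero)] at h3
    rw [h3]
    linear_combination 2 * Complex.sin_sq_add_cos_sq (v / 2 : ℂ)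
  rw [h2] at h1
  have hI := Complex.I_sq
  field_simp
  rw [hI]
  linear_combination h1

lemma gb_tauber (k : ℝ → ℝ) (hk0 : ∀ w, 0 ≤ k w) (hki : Integrable k) (hkpos : 0 < ∫ w, k w)
    (B : ℝ → ℝ) (hBm : Measurable B) (C : ℝ) (hB0 : ∀ t, 0 ≤ B t) (hBC : ∀ t, B t ≤ C)
    (hgrow : ∀ s t, s ≤ t → B s * Real.exp (-(t - s)) ≤ B t)
    (hlim : ∀ r : ℝ, 0 < r → Tendsto (fun T : ℝ => ∫ w, B (T + w / r) * k w) atTop (𝓝 (∫ w, k w))) :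
    Tendsto B atTop (𝓝 1) := by
  set I := ∫ w, k w with hI
  let J : ℝ → ℝ := fun R => ∫ w in (-R)..R, k w
  have hJ : Tendsto J atTop (𝓝 I) :=
    intervalIntegral_tendsto_integral hki tendsto_neg_atTop_atBot tendsto_id
  have hC : 0 ≤ C := (hB0 0).trans (hBC 0)
  have hBint : ∀ (r T : ℝ), Integrable fun w => B (T + w / r) * k w := by
    intro r T
    refine Integrable.bdd_mul (c := C) hki (hBm.comp (by fun_prop)).aestronglyMeasurable ?_
    filter_upwards with w
    rw [Real.norm_eq_abs, abs_of_nonneg (hB0 _)]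
    exact hBC _
  have hexp : Tendsto (fun m : ℝ => Real.exp (2 / m)) atTop (𝓝 1) := by
    have h1 : Tendsto (fun m : ℝ => 2 / m) atTop (𝓝 0) := tendsto_const_nhds.div_atTop tendsto_id
    have := (Real.continuous_exp.tendsto 0).comp h1
    simpa [Function.comp_def] using this
  have hinv : Tendsto (fun m : ℝ => 1 / m) atTop (𝓝 0) := tendsto_const_nhds.div_atTop tendsto_id
  have hup : Tendsto (fun m : ℝ => (I + 1 / m) / J m * Real.exp (2 / m)) atTop (𝓝 1) := by
    have := ((hinv.const_add I).div hJ hkpos.ne').mul hexp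
    simpa [hkpos.ne'] using this
  have hlo : Tendsto (fun m : ℝ => (I - 1 / m - C * (I - J m)) / J m * (Real.exp (2 / m))⁻¹) atTop (𝓝 1) := by
    have := (((hinv.const_sub I).sub ((hJ.const_sub I).const_mul C)).div hJ hkpos.ne').mul
      (hexp.inv₀ one_ne_zero)
    simpa [hkpos.ne'] using this
  rw [Metric.tendsto_nhds]
  intro ε hε
  obtain ⟨m, hm0, hmJ, hmu, hml⟩ : ∃ m : ℝ, 0 < m ∧ 0 < J m ∧
      (I + 1 / m) / J m * Real.exp (2 / m) < 1 + ε ∧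
      1 - ε < (I - 1 / m - C * (I - J m)) / J m * (Real.exp (2 / m))⁻¹ :=
    ((eventually_gt_atTop 0).and ((hJ.eventually_const_lt hkpos).and
      ((hup.eventually_lt_const (by linarith)).and (hlo.eventually_const_lt (by linarith))))).exists
  have hm2 : (0:ℝ) < m ^ 2 := by positivity
  have hl := hlim (m ^ 2) hm2
  have hl1 : Tendsto (fun T : ℝ => ∫ w, B ((T + 1 / m) + w / m ^ 2) * k w) atTop (𝓝 I) :=
    hl.comp (tendsto_atTop_add_const_right _ _ tendsto_id)
  have hl2 : Tendsto (fun T : ℝ => ∫ w, B ((T + -(1 / m)) + w / m ^ 2) * k w) atTop (𝓝 I) :=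
    hl.comp (tendsto_atTop_add_const_right _ _ tendsto_id)
  have hm1 : 0 < 1 / m := by positivity
  have hJset : J m = ∫ w in Set.Ioc (-m) m, k w := intervalIntegral.integral_of_le (by linarith)
  have hwm : ∀ w ∈ Set.Ioc (-m) m, -(1 / m) ≤ w / m ^ 2 ∧ w / m ^ 2 ≤ 1 / m := by
    intro w hw
    constructor
    · rw [le_div_iff₀ hm2, sq]
      have : -(1 / m) * (m * m) = -m := by field_simp
      rw [this]
      exact hw.1.le
    · rw [div_le_iff₀ hm2, sq]
      have : (1 / m) * (m * m) = m := by field_simp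
      rw [this]
      exact hw.2
  filter_upwards [hl1.eventually_lt_const (show I < I + 1 / m by linarith),
    hl2.eventually_const_lt (show I - 1 / m < I by linarith)] with T h1 h2
  have e2 : Real.exp (-(2 / m)) = (Real.exp (2 / m))⁻¹ := Real.exp_neg _
  have hE : 0 < Real.exp (2 / m) := Real.exp_pos _
  -- upper
  have u1 : B T * Real.exp (-(2 / m)) * J m ≤ ∫ w, B ((T + 1 / m) + w / m ^ 2) * k w := by
    calc B T * Real.exp (-(2 / m)) * J m = ∫ w in Set.Ioc (-m) m, (B T * Real.exp (-(2 / m))) * k w := by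
          rw [hJset, integral_const_mul]
      _ ≤ ∫ w in Set.Ioc (-m) m, B ((T + 1 / m) + w / m ^ 2) * k w := by
          refine setIntegral_mono_on (hki.const_mul _).integrableOn (hBint _ _).integrableOn
            measurableSet_Ioc ?_
          intro w hw
          obtain ⟨a, b⟩ := hwm w hw
          refine mul_le_mul_of_nonneg_right ?_ (hk0 w)
          refine le_trans ?_ (hgrow T ((T + 1 / m) + w / m ^ 2) (by linarith))
          refine mul_le_mul_of_nonneg_left ?_ (hB0 T)
          rw [Real.exp_le_exp]
          have : 2 / m = 1 / m + 1 / m := by ring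
          linarith
      _ ≤ _ := setIntegral_le_integral (hBint _ _) (Eventually.of_forall fun w => mul_nonneg (hB0 _) (hk0 w))
  have u2 : ∫ w, B ((T + -(1 / m)) + w / m ^ 2) * k w ≤ B T * Real.exp (2 / m) * J m + C * (I - J m) := by
    rw [← integral_add_compl (s := Set.Ioc (-m) m) measurableSet_Ioc (hBint _ _)]
    have hcompl : I - J m = ∫ w in (Set.Ioc (-m) m)ᶜ, k w := by
      rw [hJset, hI, ← integral_add_compl (s := Set.Ioc (-m) m) measurableSet_Ioc hki]
      ring
    rw [hcompl, hJset, ← integral_const_mul, ← integral_const_mul]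
    refine add_le_add ?_ ?_
    · refine setIntegral_mono_on (hBint _ _).integrableOn (hki.const_mul _).integrableOn
            measurableSet_Ioc ?_
      intro w hw
      obtain ⟨a, b⟩ := hwm w hw
      refine mul_le_mul_of_nonneg_right ?_ (hk0 w)
      have h3 := hgrow ((T + -(1 / m)) + w / m ^ 2) T (by linarith)
      have h4 : B ((T + -(1 / m)) + w / m ^ 2) * Real.exp (-(2 / m)) ≤ B T := by
        refine le_trans ?_ h3
        refine mul_le_mul_of_nonneg_left ?_ (hB0 _)
        rw [Real.exp_le_exp]
        have : 2 / m = 1 / m + 1 / m := by ring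
        linarith
      rwa [e2, ← div_eq_mul_inv, div_le_iff₀ hE] at h4
    · refine setIntegral_mono_on (hBint _ _).integrableOn (hki.const_mul _).integrableOn
            measurableSet_Ioc.compl ?_
      intro w hw
      exact mul_le_mul_of_nonneg_right (hBC _) (hk0 w)
  rw [Real.dist_eq, abs_lt]
  constructor
  · have : (I - 1 / m - C * (I - J m)) / J m * (Real.exp (2 / m))⁻¹ ≤ B T := by
      rw [← div_eq_mul_inv, div_le_iff₀ hE, div_le_iff₀ hmJ]
      linarith
    linarith
  · have : B T ≤ (I + 1 / m) / J m * Real.exp (2 / m) := by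
      rw [← div_le_iff₀ hE, le_div_iff₀ hmJ, div_eq_mul_inv, ← e2]
      linarith
    linarith

lemma gbB_wiener (r : ℝ) (hr : 0 < r) :
    Tendsto (fun T : ℝ => ∫ w, gbB (T + w / r) * gbK w) atTop (𝓝 (∫ w, gbK w)) := by
  have htri : Continuous gbTri := by
    unfold gbTri
    fun_prop
  have hsupp : ∀ y, r < |y| → ((r⁻¹ * gbTri (r⁻¹ * y) : ℝ) : ℂ) = 0 := by
    intro y hy
    have : gbTri (r⁻¹ * y) = 0 := by
      unfold gbTri
      apply max_eq_left
      rw [abs_mul, abs_of_pos (inv_pos.2 hr), inv_mul_eq_div]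
      have : 1 < |y| / r := by rwa [one_lt_div hr]
      linarith
    simp [this]
  have hφc : Continuous (fun y : ℝ => ((r⁻¹ * gbTri (r⁻¹ * y) : ℝ) : ℂ)) := by fun_prop
  have hφ : Integrable (fun y : ℝ => ((r⁻¹ * gbTri (r⁻¹ * y) : ℝ) : ℂ)) := by
    refine hφc.integrable_of_hasCompactSupport ?_
    refine HasCompactSupport.intro (isCompact_Icc (a := -r) (b := r)) ?_
    intro y hy
    refine hsupp y ?_
    by_contra hcon
    exact hy (abs_le.1 (not_lt.1 hcon))
  have hhat : ∀ v : ℝ, v ≠ 0 → ∫ y : ℝ, ((r⁻¹ * gbTri (r⁻¹ * y) : ℝ) : ℂ) *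
      Complex.exp (-(Complex.I * y * v)) = ((gbK (r * v) : ℝ) : ℂ) := by
    intro v hv
    rw [← gbTri_hat (r * v) (mul_ne_zero hr.ne' hv)]
    have := Measure.integral_comp_mul_left
      (fun y : ℝ => (gbTri y : ℂ) * Complex.exp (-(Complex.I * y * (r * v : ℝ)))) r⁻¹
    rw [inv_inv, abs_of_pos hr] at this
    have h2 : ∫ y : ℝ, (gbTri y : ℂ) * Complex.exp (-(Complex.I * y * (r * v : ℝ))) =
      (r⁻¹ : ℂ) * ∫ x : ℝ, (fun y : ℝ => (gbTri y : ℂ) * Complex.exp (-(Complex.I * y * (r * v : ℝ)))) (r⁻¹ * x) := by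
      rw [this, Complex.real_smul, ← mul_assoc, inv_mul_cancel₀ (by exact_mod_cast hr.ne'), one_mul]
    rw [h2, ← integral_const_mul]
    refine integral_congr_ae ?_
    filter_upwards with y
    have hr' : (r : ℂ) ≠ 0 := by exact_mod_cast hr.ne'
    have : Complex.I * ((r⁻¹ * y : ℝ) : ℂ) * ((r * v : ℝ) : ℂ) = Complex.I * y * v := by
      push_cast
      field_simp
    simp only [this]
    push_cast
    ring
  have hKr : Integrable (fun v => gbK (r * v)) := gbK_int.comp_mul_left' hr.ne'
  have hi : Integrable (fun v : ℝ => ((gbK (r * v) : ℝ) : ℂ)) := hKr.ofReal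
  have hbd : ∀ t, |gbB t - 1| ≤ Real.log 4 + 5 := by
    intro t
    have := gbB_nonneg t
    have := gbB_le t
    have := Real.log_nonneg (show (1:ℝ) ≤ 4 by norm_num)
    rw [abs_le]
    constructor <;> linarith
  have W := gb_wiener (fun t => gbB t - 1) (gbB_meas.sub_const 1) _ hbd gbG gbG_cont gb_laplace _ hφ r hsupp
    (fun v => ((gbK (r * v) : ℝ) : ℂ)) hhat hi
  have W2 : Tendsto (fun T : ℝ => ∫ t in Set.Ioi (0:ℝ), (gbB t - 1) * gbK (r * (t - T))) atTop (𝓝 0) := by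
    have := (Complex.continuous_re.tendsto 0).comp W
    rw [Complex.zero_re] at this
    refine this.congr ?_
    intro T
    simp only [Function.comp]
    rw [← Complex.ofReal_re (∫ t in Set.Ioi (0:ℝ), (gbB t - 1) * gbK (r * (t - T))), ← integral_complex_ofReal]
    congr 1
    refine integral_congr_ae ?_
    filter_upwards with t
    push_cast
    rfl
  have hind : Tendsto (fun T : ℝ => ∫ w, (Set.Ioi (-(r * T))).indicator gbK w) atTop (𝓝 (∫ w, gbK w)) := by
    refine tendsto_integral_filter_of_dominated_convergence gbK ?_ ?_ gbK_int ?_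
    · filter_upwards with T
      exact gbK_cont.aestronglyMeasurable.indicator measurableSet_Ioi
    · filter_upwards with T
      filter_upwards with w
      refine (norm_indicator_le_norm_self _ _).trans ?_
      rw [Real.norm_eq_abs, abs_of_nonneg (gbK_nonneg w)]
    · filter_upwards with w
      refine tendsto_const_nhds.congr' ?_
      filter_upwards [eventually_gt_atTop (-w / r)] with T hT
      rw [Set.indicator_of_mem]
      rw [div_lt_iff₀ hr] at hT
      simp only [Set.mem_Ioi]
      linarith
  have hBint : ∀ T : ℝ, Integrable fun w => gbB (T + w / r) * gbK w := by
    intro T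
    refine Integrable.bdd_mul (c := Real.log 4 + 4) gbK_int (gbB_meas.comp (by fun_prop)).aestronglyMeasurable ?_
    filter_upwards with w
    rw [Real.norm_eq_abs, abs_of_nonneg (gbB_nonneg _)]
    exact gbB_le _
  have e : ∀ T : ℝ, r * (∫ t in Set.Ioi (0:ℝ), (gbB t - 1) * gbK (r * (t - T))) +
      ∫ w, (Set.Ioi (-(r * T))).indicator gbK w = ∫ w, gbB (T + w / r) * gbK w := by
    intro T
    rw [← integral_indicator measurableSet_Ioi]
    let H : ℝ → ℝ := fun w => gbB (T + w / r) * gbK w - (Set.Ioi (-(r * T))).indicator gbK w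
    have h1 : ∫ t, (Set.Ioi (0:ℝ)).indicator (fun t => (gbB t - 1) * gbK (r * (t - T))) t =
        ∫ t, H (r * (t - T)) := by
      refine integral_congr_ae ?_
      filter_upwards with t
      simp only [H, mul_div_cancel_left₀ _ hr.ne', add_sub_cancel]
      by_cases ht : 0 < t
      · rw [Set.indicator_of_mem (show t ∈ Set.Ioi 0 from ht), Set.indicator_of_mem]
        · ring
        · simp only [Set.mem_Ioi]
          nlinarith
      · rw [Set.indicator_of_notMem (show t ∉ Set.Ioi 0 from ht), Set.indicator_of_notMem,
          gbB_neg (not_lt.1 ht)]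
        · ring
        · simp only [Set.mem_Ioi]
          nlinarith
    have h2 : ∫ t, H (r * (t - T)) = ∫ t, H (r * t) :=
      integral_sub_right_eq_self (fun t => H (r * t)) T
    rw [h1, h2, Measure.integral_comp_mul_left, abs_of_pos (inv_pos.2 hr), smul_eq_mul, ← mul_assoc,
      mul_inv_cancel₀ hr.ne', one_mul]
    simp only [H]
    rw [integral_sub (hBint T) (gbK_int.indicator measurableSet_Ioi)]
    ring
  have := (W2.const_mul r).add hind
  rw [mul_zero, zero_add] at this
  exact this.congr e

lemma gb_psi_pnt : Tendsto (fun x : ℝ => Chebyshev.psi x / x) atTop (𝓝 1) := by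
  have h := gb_tauber gbK gbK_nonneg gbK_int gbK_integral_pos gbB gbB_meas _ gbB_nonneg gbB_le
    (fun s t => gbB_growth) gbB_wiener
  refine (h.comp Real.tendsto_log_atTop).congr' ?_
  filter_upwards [eventually_gt_atTop 0] with x hx
  simp only [Function.comp, gbB, Real.exp_neg, Real.exp_log hx]
  rfl

lemma gb_theta_pnt : Tendsto (fun x : ℝ => Chebyshev.theta x / x) atTop (𝓝 1) := by
  have h1 : (fun x => Chebyshev.psi x - Chebyshev.theta x) =o[atTop] (fun x : ℝ => x) := by
    have h2 : Real.sqrt =o[atTop] (fun x : ℝ => x) := by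
      rw [isLittleO_iff_tendsto']
      · refine (tendsto_inv_atTop_zero.comp Real.tendsto_sqrt_atTop).congr' ?_
        filter_upwards [eventually_gt_atTop 0] with x hx
        simp only [Function.comp]
        exact Real.sqrt_div_self.symm
      · filter_upwards [eventually_gt_atTop 0] with x hx h
        exact absurd h hx.ne'
    exact Chebyshev.isBigO_psi_sub_theta_sqrt.trans_isLittleO h2
  have h3 := gb_psi_pnt.sub h1.tendsto_div_nhds_zero
  rw [sub_zero] at h3
  refine h3.congr ?_
  intro x
  ring

lemma gb_pi_pnt : Tendsto (fun x : ℝ => (Nat.primeCounting ⌊x⌋₊ : ℝ) * Real.log x / x) atTop (𝓝 1) := by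
  have h1 : (fun x : ℝ => (Nat.primeCounting ⌊x⌋₊ : ℝ) - Chebyshev.theta x / Real.log x) =o[atTop]
      (fun x : ℝ => x / Real.log x) := by
    refine Chebyshev.primeCounting_sub_theta_div_log_isBigO.trans_isLittleO ?_
    rw [isLittleO_iff_tendsto']
    · refine (tendsto_inv_atTop_zero.comp Real.tendsto_log_atTop).congr' ?_
      filter_upwards [eventually_gt_atTop 1] with x hx
      have := Real.log_pos hx
      simp only [Function.comp]
      field_simp
    · filter_upwards [eventually_gt_atTop 1] with x hx h
      have := Real.log_pos hx
      have : 0 < x / Real.log x := by positivity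
      linarith
  have h2 := h1.tendsto_div_nhds_zero.add gb_theta_pnt
  rw [zero_add] at h2
  refine h2.congr' ?_
  filter_upwards [eventually_gt_atTop 1] with x hx
  have := Real.log_pos hx
  field_simp
  ring

lemma gb_log_ratio {α : Type*} {l : Filter α} (f g : α → ℝ) (c : ℝ) (hc : 0 < c)
    (hg : Tendsto g l atTop) (hfg : Tendsto (fun a => f a / g a) l (𝓝 c)) :
    Tendsto (fun a => Real.log (f a) / Real.log (g a)) l (𝓝 1) := by
  have h1 : Tendsto (fun a => Real.log (f a / g a)) l (𝓝 (Real.log c)) :=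
    ((Real.continuousAt_log hc.ne').tendsto).comp hfg
  have h2 : Tendsto (fun a => Real.log (f a / g a) / Real.log (g a)) l (𝓝 0) :=
    h1.div_atTop (Real.tendsto_log_atTop.comp hg)
  have h3 := h2.add_const 1
  rw [zero_add] at h3
  refine h3.congr' ?_
  filter_upwards [hg.eventually_gt_atTop 1, hfg.eventually_const_lt hc] with a ha hb
  have hf : f a ≠ 0 := by
    intro h0
    rw [h0, zero_div] at hb
    exact lt_irrefl _ hb
  have := Real.log_pos ha
  rw [Real.log_div hf (by linarith)]
  field_simp
  ring

/-- The odd primes up to `x`. -/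
noncomputable def gbP (x : ℝ) : Finset ℕ :=
  (Finset.range (⌊x⌋₊ + 1)).filter (fun p => p.Prime ∧ Odd p)

lemma gbP_mem {x : ℝ} {p : ℕ} : p ∈ gbP x ↔ (p : ℝ) ≤ x ∧ p.Prime ∧ Odd p := by
  unfold gbP
  rw [Finset.mem_filter, Finset.mem_range, Nat.lt_succ_iff]
  constructor
  · rintro ⟨h1, h2, h3⟩
    exact ⟨(Nat.le_floor_iff' h2.ne_zero).1 h1, h2, h3⟩
  · rintro ⟨h1, h2, h3⟩
    exact ⟨(Nat.le_floor_iff' h2.ne_zero).2 h1, h2, h3⟩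

lemma gbP_mono {x y : ℝ} (h : x ≤ y) : gbP x ⊆ gbP y := by
  intro p hp
  rw [gbP_mem] at hp ⊢
  exact ⟨hp.1.trans h, hp.2⟩

lemma gbP_zero : gbP 0 = ∅ := by
  ext p
  rw [gbP_mem]
  constructor
  · rintro ⟨h1, h2, h3⟩
    have : 0 < p := h2.pos
    have : (0:ℝ) < p := by exact_mod_cast this
    linarith
  · simp

lemma gbP_card (x : ℝ) : (gbP x).card ≤ Nat.primeCounting ⌊x⌋₊ ∧ Nat.primeCounting ⌊x⌋₊ ≤ (gbP x).card + 1 := by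
  rw [Nat.primeCounting, Nat.primeCounting', Nat.count_eq_card_filter_range]
  constructor
  · refine Finset.card_le_card ?_
    intro p hp
    unfold gbP at hp
    rw [Finset.mem_filter] at hp ⊢
    exact ⟨hp.1, hp.2.1⟩
  · refine le_trans (Finset.card_le_card (t := insert 2 (gbP x)) ?_) (Finset.card_insert_le _ _)
    intro p hp
    unfold gbP
    rw [Finset.mem_filter] at hp
    rw [Finset.mem_insert, Finset.mem_filter]
    rcases hp.2.eq_two_or_odd' with h | h
    · exact Or.inl h
    · exact Or.inr ⟨hp.1, hp.2, h⟩

noncomputable def gbnu (x : ℝ) : ℝ := Real.log x / x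

lemma gbnu_tendsto : Tendsto gbnu atTop (𝓝 0) :=
  Real.isLittleO_log_id_atTop.tendsto_div_nhds_zero

lemma gbP_tendsto (c : ℝ) (hc : 0 ≤ c) :
    Tendsto (fun x : ℝ => ((gbP (c * x)).card : ℝ) * gbnu x) atTop (𝓝 c) := by
  rcases hc.eq_or_lt with rfl | hc
  · simp [gbP_zero]
  have hcx : Tendsto (fun x : ℝ => c * x) atTop atTop := tendsto_id.const_mul_atTop hc
  have h1 := gb_pi_pnt.comp hcx
  have h2 : Tendsto (fun x : ℝ => Real.log (c * x) / Real.log x) atTop (𝓝 1) := by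
    refine gb_log_ratio _ (fun x => x) c hc tendsto_id ?_
    refine tendsto_const_nhds.congr' ?_
    filter_upwards [eventually_gt_atTop 0] with x hx
    field_simp
  have h3 : Tendsto (fun x : ℝ => (Nat.primeCounting ⌊c * x⌋₊ : ℝ) * gbnu x) atTop (𝓝 c) := by
    have := (h1.div h2 one_ne_zero).mul_const c
    rw [div_one, one_mul] at this
    refine this.congr' ?_
    filter_upwards [eventually_gt_atTop 1, hcx.eventually_gt_atTop 1] with x hx hx2
    have := Real.log_pos hx
    have := Real.log_pos hx2
    simp only [Function.comp, gbnu, Pi.div_apply]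
    field_simp
  have h4 := h3.sub gbnu_tendsto
  rw [sub_zero] at h4
  refine tendsto_of_tendsto_of_tendsto_of_le_of_le' h4 h3 ?_ ?_
  · filter_upwards [eventually_gt_atTop 1] with x hx
    have hn : 0 ≤ gbnu x := div_nonneg (Real.log_nonneg hx.le) (by linarith)
    have := (gbP_card (c * x)).2
    have h5 : (Nat.primeCounting ⌊c * x⌋₊ : ℝ) ≤ (gbP (c * x)).card + 1 := by exact_mod_cast this
    nlinarith
  · filter_upwards [eventually_gt_atTop 1] with x hx
    have hn : 0 ≤ gbnu x := div_nonneg (Real.log_nonneg hx.le) (by linarith)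
    have := (gbP_card (c * x)).1
    gcongr

/-- number of ordered pairs of odd primes with sum at most `x` -/
noncomputable def gbW (x : ℝ) : ℝ := ∑ p ∈ gbP x, ((gbP (x - p)).card : ℝ)

lemma gbW_bounds (m : ℕ) (hm : 0 < m) (x : ℝ) (hx : 0 ≤ x) :
    ∑ i ∈ Finset.range m, (((gbP (((i + 1 : ℕ) : ℝ) / m * x)).card : ℝ) - (gbP ((i : ℝ) / m * x)).card) *
      (gbP ((1 - ((i + 1 : ℕ) : ℝ) / m) * x)).card ≤ gbW x ∧
    gbW x ≤ ∑ i ∈ Finset.range m, (((gbP (((i + 1 : ℕ) : ℝ) / m * x)).card : ℝ) - (gbP ((i : ℝ) / m * x)).card) *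
      (gbP ((1 - (i : ℝ) / m) * x)).card := by
  have hm' : (0:ℝ) < m := by exact_mod_cast hm
  let g : ℕ → ℝ := fun i => ∑ p ∈ gbP ((i : ℝ) / m * x), ((gbP (x - p)).card : ℝ)
  have hg : gbW x = ∑ i ∈ Finset.range m, (g (i + 1) - g i) := by
    rw [Finset.sum_range_sub]
    simp only [g, gbW]
    rw [div_self hm'.ne', one_mul]
    simp [gbP_zero]
  have hsub : ∀ i : ℕ, gbP ((i : ℝ) / m * x) ⊆ gbP (((i + 1 : ℕ) : ℝ) / m * x) := by
    intro i
    apply gbP_mono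
    gcongr
    simp
  have hdiff : ∀ i : ℕ, g (i + 1) - g i =
      ∑ p ∈ gbP (((i + 1 : ℕ) : ℝ) / m * x) \ gbP ((i : ℝ) / m * x), ((gbP (x - p)).card : ℝ) := by
    intro i
    rw [sub_eq_iff_eq_add]
    exact (Finset.sum_sdiff (hsub i)).symm
  have hcard : ∀ i : ℕ, (((gbP (((i + 1 : ℕ) : ℝ) / m * x)).card : ℝ) - (gbP ((i : ℝ) / m * x)).card) =
      ((gbP (((i + 1 : ℕ) : ℝ) / m * x) \ gbP ((i : ℝ) / m * x)).card : ℝ) := by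
    intro i
    rw [Finset.card_sdiff_of_subset (hsub i), Nat.cast_sub (Finset.card_le_card (hsub i))]
  rw [hg]
  constructor
  · refine Finset.sum_le_sum fun i _ => ?_
    rw [hdiff, hcard, ← nsmul_eq_mul]
    refine Finset.card_nsmul_le_sum _ _ _ ?_
    intro p hp
    rw [Finset.mem_sdiff, gbP_mem] at hp
    have : gbP ((1 - ((i + 1 : ℕ) : ℝ) / m) * x) ⊆ gbP (x - p) := by
      apply gbP_mono
      linarith [hp.1.1]
    exact_mod_cast Finset.card_le_card this
  · refine Finset.sum_le_sum fun i _ => ?_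
    rw [hdiff, hcard, ← nsmul_eq_mul]
    refine Finset.sum_le_card_nsmul _ _ _ ?_
    intro p hp
    rw [Finset.mem_sdiff, gbP_mem, gbP_mem] at hp
    have hlt : (i : ℝ) / m * x < p := by
      by_contra hcon
      exact hp.2 ⟨not_lt.1 hcon, hp.1.2⟩
    have : gbP (x - p) ⊆ gbP ((1 - (i : ℝ) / m) * x) := by
      apply gbP_mono
      linarith
    exact_mod_cast Finset.card_le_card this

lemma gb_sum1 (m : ℕ) (hm : 0 < m) : ∀ n : ℕ, ∑ i ∈ Finset.range n,
    ((((i + 1 : ℕ) : ℝ) / m) - (i : ℝ) / m) * (1 - ((i + 1 : ℕ) : ℝ) / m) = n / m - n * (n + 1) / (2 * m ^ 2) := by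
  have hm' : (m:ℝ) ≠ 0 := by exact_mod_cast hm.ne'
  intro n
  induction n with
  | zero => simp
  | succ k ih =>
    rw [Finset.sum_range_succ, ih]
    push_cast
    field_simp
    ring

lemma gb_sum2 (m : ℕ) (hm : 0 < m) : ∀ n : ℕ, ∑ i ∈ Finset.range n,
    ((((i + 1 : ℕ) : ℝ) / m) - (i : ℝ) / m) * (1 - (i : ℝ) / m) = n / m - n * (n - 1) / (2 * m ^ 2) := by
  have hm' : (m:ℝ) ≠ 0 := by exact_mod_cast hm.ne'
  intro n
  induction n with
  | zero => simp
  | succ k ih =>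
    rw [Finset.sum_range_succ, ih]
    push_cast
    field_simp
    ring

lemma gbW_tendsto : Tendsto (fun x : ℝ => gbW x * gbnu x ^ 2) atTop (𝓝 (1 / 2)) := by
  rw [Metric.tendsto_nhds]
  intro ε hε
  obtain ⟨m0, hm0⟩ := exists_nat_one_div_lt hε
  set m := m0 + 1 with hmdef
  have hm : 0 < m := Nat.succ_pos _
  have hmR : (0:ℝ) < m := by exact_mod_cast hm
  have hmε : 1 / (m:ℝ) < ε := by
    rw [hmdef]
    push_cast
    exact hm0
  have hi : ∀ i ∈ Finset.range m, (0:ℝ) ≤ 1 - ((i + 1 : ℕ) : ℝ) / m := by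
    intro i hi
    rw [sub_nonneg, div_le_one hmR]
    exact_mod_cast Finset.mem_range.1 hi
  have hi2 : ∀ i ∈ Finset.range m, (0:ℝ) ≤ 1 - (i : ℝ) / m := by
    intro i hi
    rw [sub_nonneg, div_le_one hmR]
    exact_mod_cast (Finset.mem_range.1 hi).le
  have hd : ∀ i : ℕ, Tendsto (fun x : ℝ => ((gbP (((i + 1 : ℕ) : ℝ) / m * x)).card : ℝ) * gbnu x -
      (gbP ((i : ℝ) / m * x)).card * gbnu x) atTop (𝓝 (((i + 1 : ℕ) : ℝ) / m - (i : ℝ) / m)) := fun i =>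
    (gbP_tendsto _ (by positivity)).sub (gbP_tendsto _ (by positivity))
  have hlo := tendsto_finsetSum (Finset.range m) (fun i hi' => (hd i).mul (gbP_tendsto _ (hi i hi')))
  have hup := tendsto_finsetSum (Finset.range m) (fun i hi' => (hd i).mul (gbP_tendsto _ (hi2 i hi')))
  rw [gb_sum1 m hm m] at hlo
  rw [gb_sum2 m hm m] at hup
  have v1 : (m:ℝ) / m - m * (m + 1) / (2 * m ^ 2) = 1 / 2 - 1 / m / 2 := by
    field_simp
    ring
  have v2 : (m:ℝ) / m - m * (m - 1) / (2 * m ^ 2) = 1 / 2 + 1 / m / 2 := by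
    field_simp
    ring
  rw [v1] at hlo
  rw [v2] at hup
  have hmp : 0 < 1 / (m:ℝ) := by positivity
  filter_upwards [hlo.eventually_const_lt (show 1 / 2 - ε < _ by linarith),
    hup.eventually_lt_const (show _ < 1 / 2 + ε by linarith), eventually_ge_atTop 0] with x h1 h2 hx
  obtain ⟨b1, b2⟩ := gbW_bounds m hm x hx
  have b1' := mul_le_mul_of_nonneg_right b1 (sq_nonneg (gbnu x))
  have b2' := mul_le_mul_of_nonneg_right b2 (sq_nonneg (gbnu x))
  rw [Finset.sum_mul] at b1' b2'
  rw [Real.dist_eq, abs_lt]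
  constructor
  · have : 1 / 2 - ε < gbW x * gbnu x ^ 2 := by
      refine h1.trans_le (le_trans (le_of_eq ?_) b1')
      refine Finset.sum_congr rfl fun i _ => ?_
      ring
    linarith
  · have : gbW x * gbnu x ^ 2 < 1 / 2 + ε := by
      refine lt_of_le_of_lt (b2'.trans (le_of_eq ?_)) h2
      refine Finset.sum_congr rfl fun i _ => ?_
      ring
    linarith

/-- ordered pairs -/
noncomputable def gbD (n : ℕ) : Finset (ℕ × ℕ) :=
  (Finset.range (2 * n + 1) ×ˢ Finset.range (2 * n + 1)).filter
    (fun pq => pq.1.Prime ∧ pq.2.Prime ∧ Odd pq.1 ∧ Odd pq.2 ∧ pq.1 + pq.2 ≤ 2 * n)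

lemma gbD_mem {n : ℕ} {pq : ℕ × ℕ} : pq ∈ gbD n ↔
    pq.1.Prime ∧ pq.2.Prime ∧ Odd pq.1 ∧ Odd pq.2 ∧ pq.1 + pq.2 ≤ 2 * n := by
  unfold gbD
  rw [Finset.mem_filter, Finset.mem_product, Finset.mem_range, Finset.mem_range]
  constructor
  · exact fun h => h.2
  · intro h
    have := h.2.2.2.2
    exact ⟨⟨by omega, by omega⟩, h⟩

lemma gbD_card (n : ℕ) : ((gbD n).card : ℝ) = gbW (2 * n) := by
  unfold gbW
  have : gbD n = ((gbP (2 * n)).sigma (fun p => gbP (2 * n - p))).image (fun s => (s.1, s.2)) := by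
    ext ⟨p, q⟩
    rw [gbD_mem, Finset.mem_image]
    constructor
    · rintro ⟨h1, h2, h3, h4, h5⟩
      have h5' : (p:ℝ) + q ≤ 2 * n := by exact_mod_cast h5
      have hq : (0:ℝ) ≤ q := Nat.cast_nonneg q
      refine ⟨⟨p, q⟩, ?_, rfl⟩
      rw [Finset.mem_sigma]
      exact ⟨gbP_mem.2 ⟨by linarith, h1, h3⟩, gbP_mem.2 ⟨by linarith, h2, h4⟩⟩
    · rintro ⟨⟨a, b⟩, h, he⟩
      rw [Finset.mem_sigma] at h
      obtain ⟨h1, h2⟩ := h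
      rw [gbP_mem] at h1 h2
      simp only [Prod.mk.injEq] at he
      obtain ⟨rfl, rfl⟩ := he
      refine ⟨h1.2.1, h2.2.1, h1.2.2, h2.2.2, ?_⟩
      have : (a:ℝ) + b ≤ 2 * n := by linarith [h2.1]
      exact_mod_cast this
  rw [this, Finset.card_image_of_injective, Finset.card_sigma]
  · push_cast
    rfl
  · rintro ⟨a, b⟩ ⟨c, d⟩ h
    simp only [Prod.mk.injEq] at h
    obtain ⟨rfl, rfl⟩ := h
    rfl

lemma gbS_eq (n : ℕ) : ∑ k ∈ Finset.Icc 3 n, Q2 k = ((gbD n).filter (fun pq => pq.1 ≤ pq.2)).card := by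
  rw [Finset.card_eq_sum_card_fiberwise (f := fun pq => (pq.1 + pq.2) / 2) (t := Finset.Icc 3 n)]
  · refine Finset.sum_congr rfl fun k hk => ?_
    unfold Q2
    congr 1
    ext ⟨p, q⟩
    rw [Finset.mem_filter, Finset.mem_filter, Finset.mem_filter, gbD_mem, Finset.mem_product,
      Finset.mem_range, Finset.mem_range]
    rw [Finset.mem_Icc] at hk
    simp only
    constructor
    · rintro ⟨_, h1, h2, h3, h4, h5, h6⟩
      exact ⟨⟨⟨h1, h2, h3, h4, by omega⟩, h5⟩, by omega⟩
    · rintro ⟨⟨⟨h1, h2, h3, h4, h5⟩, h6⟩, h7⟩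
      obtain ⟨a, rfl⟩ := h3
      obtain ⟨b, rfl⟩ := h4
      exact ⟨⟨by omega, by omega⟩, h1, h2, ⟨a, rfl⟩, ⟨b, rfl⟩, h6, by omega⟩
  · rintro ⟨p, q⟩ h
    rw [Finset.mem_coe, Finset.mem_filter, gbD_mem] at h
    obtain ⟨⟨h1, h2, h3, h4, h5⟩, h6⟩ := h
    have a1 := h1.two_le
    have a2 := h2.two_le
    simp only [Finset.coe_Icc, Set.mem_Icc]
    simp only at a1 a2 h5 h3 h4
    obtain ⟨a, rfl⟩ := h3
    obtain ⟨b, rfl⟩ := h4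
    omega

lemma gbS_bounds (n : ℕ) : (gbD n).card ≤ 2 * ∑ k ∈ Finset.Icc 3 n, Q2 k ∧
    2 * ∑ k ∈ Finset.Icc 3 n, Q2 k ≤ (gbD n).card + (2 * n + 1) := by
  rw [gbS_eq]
  have hswap : ((gbD n).filter (fun pq => pq.2 ≤ pq.1)).card = ((gbD n).filter (fun pq => pq.1 ≤ pq.2)).card := by
    refine Finset.card_bij (fun pq _ => (pq.2, pq.1)) ?_ ?_ ?_
    · rintro ⟨p, q⟩ h
      rw [Finset.mem_filter, gbD_mem] at h ⊢
      simp only at h ⊢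
      exact ⟨⟨h.1.2.1, h.1.1, h.1.2.2.2.1, h.1.2.2.1, by omega⟩, h.2⟩
    · rintro ⟨p, q⟩ _ ⟨r, s⟩ _ h
      simp only [Prod.mk.injEq] at h ⊢
      exact ⟨h.2, h.1⟩
    · rintro ⟨p, q⟩ h
      rw [Finset.mem_filter, gbD_mem] at h
      simp only at h
      refine ⟨(q, p), ?_, rfl⟩
      rw [Finset.mem_filter, gbD_mem]
      simp only
      exact ⟨⟨h.1.2.1, h.1.1, h.1.2.2.2.1, h.1.2.2.1, by omega⟩, h.2⟩
  have hui := Finset.card_union_add_card_inter ((gbD n).filter (fun pq => pq.1 ≤ pq.2))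
    ((gbD n).filter (fun pq => pq.2 ≤ pq.1))
  have hun : (gbD n).filter (fun pq => pq.1 ≤ pq.2) ∪ (gbD n).filter (fun pq => pq.2 ≤ pq.1) = gbD n := by
    rw [← Finset.filter_or]
    apply Finset.filter_true_of_mem
    intro x _
    exact le_total _ _
  have hin : ((gbD n).filter (fun pq => pq.1 ≤ pq.2) ∩ (gbD n).filter (fun pq => pq.2 ≤ pq.1)).card ≤ 2 * n + 1 := by
    have : (gbD n).filter (fun pq => pq.1 ≤ pq.2) ∩ (gbD n).filter (fun pq => pq.2 ≤ pq.1) ⊆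
        (Finset.range (2 * n + 1)).image (fun p => (p, p)) := by
      rintro ⟨p, q⟩ h
      rw [Finset.mem_inter, Finset.mem_filter, Finset.mem_filter, gbD_mem] at h
      simp only at h
      rw [Finset.mem_image]
      refine ⟨p, Finset.mem_range.2 (by omega), ?_⟩
      have : p = q := by omega
      rw [this]
    refine (Finset.card_le_card this).trans (Finset.card_image_le.trans ?_)
    simp
  rw [hun] at hui
  omega

lemma gbS_tendsto : Tendsto (fun n : ℕ => (∑ k ∈ Finset.Icc 3 n, (Q2 k : ℝ)) * gbnu (2 * n) ^ 2)
    atTop (𝓝 (1 / 4)) := by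
  have h2n : Tendsto (fun n : ℕ => (2 * n : ℝ)) atTop atTop :=
    tendsto_natCast_atTop_atTop.const_mul_atTop (by norm_num)
  have h1 := gbW_tendsto.comp h2n
  have h2 : Tendsto (fun x : ℝ => (x + 1) * gbnu x ^ 2) atTop (𝓝 0) := by
    have h3 : Tendsto (fun x : ℝ => Real.log x ^ 2 / x) atTop (𝓝 0) := by
      have := Real.tendsto_pow_log_div_mul_add_atTop 1 0 2 one_ne_zero
      simpa using this
    have h4 := h3.add (gbnu_tendsto.pow 2)
    simp only [zero_add, ne_eq, OfNat.ofNat_ne_zero, not_false_eq_true, zero_pow] at h4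
    refine h4.congr' ?_
    filter_upwards [eventually_gt_atTop 0] with x hx
    unfold gbnu
    field_simp
  have h3 := h2.comp h2n
  have lo := h1.div_const 2
  have up := (h1.add h3).div_const 2
  norm_num at lo up
  refine tendsto_of_tendsto_of_tendsto_of_le_of_le (by simpa using lo) (by simpa using up) ?_ ?_
  · intro n
    have hb : ((gbD n).card : ℝ) ≤ 2 * ∑ k ∈ Finset.Icc 3 n, (Q2 k : ℝ) := by
      exact_mod_cast (gbS_bounds n).1
    rw [gbD_card] at hb
    nlinarith [sq_nonneg (gbnu (2 * n))]
  · intro n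
    have hb : 2 * ∑ k ∈ Finset.Icc 3 n, (Q2 k : ℝ) ≤ ((gbD n).card : ℝ) + (2 * n + 1) := by
      exact_mod_cast (gbS_bounds n).2
    rw [gbD_card] at hb
    nlinarith [sq_nonneg (gbnu (2 * n))]

/-- For fixed `0 < u < 1`, `(Σ_{2<k≤un} Q₂(2k)) / (Σ_{2<k≤n} Q₂(2k)) → u²` as `n → ∞`;
equivalently, `Gₙ/n` converges weakly to the maximum of two independent uniform-(0,1)
random variables. -/
theorem goldbach_number_weak_limit (u : ℝ) (hu0 : 0 < u) (hu1 : u < 1) :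
    Tendsto (fun n : ℕ =>
        (∑ k ∈ Finset.Icc 3 ⌊u * (n : ℝ)⌋₊, (Q2 k : ℝ)) /
          (∑ k ∈ Finset.Icc 3 n, (Q2 k : ℝ)))
      atTop (𝓝 (u ^ 2)) := by
  have h2n : Tendsto (fun n : ℕ => (2 * n : ℝ)) atTop atTop :=
    tendsto_natCast_atTop_atTop.const_mul_atTop (by norm_num)
  have hfl : Tendsto (fun n : ℕ => ⌊u * (n : ℝ)⌋₊) atTop atTop :=
    tendsto_nat_floor_atTop.comp (tendsto_natCast_atTop_atTop.const_mul_atTop hu0)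
  have hr : Tendsto (fun n : ℕ => (⌊u * (n : ℝ)⌋₊ : ℝ) / n) atTop (𝓝 u) :=
    (tendsto_nat_floor_mul_div_atTop hu0.le).comp tendsto_natCast_atTop_atTop
  have hlog : Tendsto (fun n : ℕ => Real.log (2 * (⌊u * (n : ℝ)⌋₊ : ℝ)) / Real.log (2 * n)) atTop (𝓝 1) := by
    refine gb_log_ratio _ _ u hu0 h2n (hr.congr ?_)
    intro n
    rw [mul_div_mul_left _ _ two_ne_zero]
  have h1 := gbS_tendsto.comp hfl
  have h2 := (h1.div gbS_tendsto (by norm_num)).mul ((hr.div hlog one_ne_zero).pow 2)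
  have e : (1 / 4 : ℝ) / (1 / 4) * (u / 1) ^ 2 = u ^ 2 := by norm_num
  rw [e] at h2
  refine h2.congr' ?_
  filter_upwards [hfl.eventually_gt_atTop 0, eventually_gt_atTop 0] with n hm hn
  simp only [Function.comp, Pi.div_apply, gbnu]
  have hmR : (1:ℝ) ≤ (⌊u * (n : ℝ)⌋₊ : ℝ) := by exact_mod_cast hm
  have hnR : (1:ℝ) ≤ (n : ℝ) := by exact_mod_cast hn
  have l1 := Real.log_pos (show (1:ℝ) < 2 * (⌊u * (n : ℝ)⌋₊ : ℝ) by linarith)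
  have l2 := Real.log_pos (show (1:ℝ) < 2 * (n : ℝ) by linarith)
  generalize (⌊u * (n : ℝ)⌋₊ : ℝ) = M at *
  generalize (∑ k ∈ Finset.Icc 3 n, (Q2 k : ℝ)) = S at *
  have : M ≠ 0 := by linarith
  generalize Real.log (2 * M) = a at l1 ⊢
  generalize Real.log (2 * (n : ℝ)) = b at l2 ⊢
  by_cases hS : S = 0
  · simp [hS]
  · field_simp
end
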